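/- For every n ≥ 2, the restriction of the Dehornoy ordering <_D to the dual braid monoid B_n^{+*} is a strict well-order on B_n^{+*} (i.e. the relation <_D restricted to B_n^{+*} is trichotomous, transitive and well-founded), and its order type, as an ordinal, is ω^{ω^{n−2}}. -/

import Mathlib

/-- The defining relations of the braid group on `n` strands, inside the free group on
generators indexed by `ℕ`.  Generator `i` corresponds to the Artin generator `σ_i`
(for `1 ≤ i ≤ n-1`); generators with index `0` or `≥ n` are killed. -/
def braidRels (n : ℕ) : Set (FreeGroup ℕ) :=
  {r | (∃ i j : ℕ, 1 ≤ i ∧ i + 2 ≤ j ∧ j ≤ n - 1 ∧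
          r = FreeGroup.of i * FreeGroup.of j * (FreeGroup.of i)⁻¹ * (FreeGroup.of j)⁻¹) ∨
       (∃ i : ℕ, 1 ≤ i ∧ i + 1 ≤ n - 1 ∧
          r = FreeGroup.of i * FreeGroup.of (i+1) * FreeGroup.of i *
              (FreeGroup.of (i+1) * FreeGroup.of i * FreeGroup.of (i+1))⁻¹) ∨
       (∃ i : ℕ, (i = 0 ∨ n ≤ i) ∧ r = FreeGroup.of i)}

/-- The braid group `B_n` on `n` strands. -/
abbrev Braid (n : ℕ) := PresentedGroup (braidRels n)

/-- The Artin generator `σ_i` of `B_n`. -/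
def genσ (n i : ℕ) : Braid n := PresentedGroup.of i

/-- The band generator `a_{i,j} = (σ_{j-1} ⋯ σ_{i+1}) σ_i (σ_{i+1}⁻¹ ⋯ σ_{j-1}⁻¹)`. -/
def band (n i j : ℕ) : Braid n :=
  (((List.range' (i+1) (j-1-i)).reverse.map (genσ n)).prod) * genσ n i *
    (((List.range' (i+1) (j-1-i)).reverse.map (genσ n)).prod)⁻¹

/-- The dual braid monoid `B_n^{+*}`: the submonoid of `B_n` generated by the band
generators `a_{i,j}`, `1 ≤ i < j ≤ n`. -/
def dualMonoid (n : ℕ) : Submonoid (Braid n) :=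
  Submonoid.closure {x | ∃ i j : ℕ, 1 ≤ i ∧ i < j ∧ j ≤ n ∧ x = band n i j}

/-- The submonoid `B_I^{+*}` generated by the band generators `a_{i,j}` with `i, j ∈ I`. -/
def dualMonoidOn (n : ℕ) (I : Set ℕ) : Submonoid (Braid n) :=
  Submonoid.closure {x | ∃ i j : ℕ, i ∈ I ∧ j ∈ I ∧ 1 ≤ i ∧ i < j ∧ j ≤ n ∧ x = band n i j}

/-- Evaluation of a word in the letters `σ_i^{±1}` (a letter is a pair of an index and a
sign, `true` meaning positive). -/
def evalWord (n : ℕ) (w : List (ℕ × Bool)) : Braid n :=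
  (w.map (fun p => if p.2 then genσ n p.1 else (genσ n p.1)⁻¹)).prod

/-- `γ` is `σ_i`-positive: it is represented by a word in the letters `σ_1^{±1}, …,
σ_{n-1}^{±1}` containing at least one `σ_i`, no `σ_i⁻¹`, and no `σ_j^{±1}` with `j < i`. -/
def SigmaPositive (n i : ℕ) (γ : Braid n) : Prop :=
  ∃ w : List (ℕ × Bool),
    (∀ p ∈ w, 1 ≤ p.1 ∧ p.1 ≤ n - 1) ∧
    (i, true) ∈ w ∧ (i, false) ∉ w ∧
    (∀ p ∈ w, i ≤ p.1) ∧
    evalWord n w = γ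

/-- The Dehornoy ordering on `B_n`: `α <_D β` iff `α⁻¹β` is `σ_i`-positive for some `i`. -/
def dehornoyLt (n : ℕ) (α β : Braid n) : Prop :=
  ∃ i : ℕ, 1 ≤ i ∧ i ≤ n - 1 ∧ SigmaPositive n i (α⁻¹ * β)


set_option linter.all false

namespace DB

/-! ### Part 1 : the ordered action -/

/-- Left multiplication by the involution `a` in a free product of copies of `Z/2`. -/
def L (a : ℕ) : List ℕ → List ℕ
  | [] => [a]
  | b :: w => if a = b then w else a :: b :: w

def Red : List ℕ → Prop
  | [] => True
  | a :: w => w.head? ≠ some a ∧ Red w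

theorem Red_L {a : ℕ} {w : List ℕ} (h : Red w) : Red (L a w) := by
  cases w with
  | nil => simp [L, Red]
  | cons b w =>
    simp only [L]
    split_ifs with hab
    · exact h.2
    · refine ⟨?_, h⟩
      simp; exact fun h => hab h.symm

theorem L_L {a : ℕ} {w : List ℕ} (h : Red w) : L a (L a w) = w := by
  cases w with
  | nil => simp [L]
  | cons b w =>
    by_cases hab : a = b
    · subst hab
      simp only [L, if_true]
      cases w with
      | nil => simp [L]
      | cons c w =>
        have : a ≠ c := by
          intro h'; apply h.1; simp [h']
        simp [L, this]
    · simp [L, hab]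

theorem L_cons {a : ℕ} {w : List ℕ} (h : w.head? ≠ some a) : L a w = a :: w := by
  cases w with
  | nil => simp [L]
  | cons b w =>
    have : a ≠ b := by rintro rfl; simp at h
    simp [L, this]

def θ (i a : ℕ) (w : List ℕ) : List ℕ :=
  if a = i then L i (L (i+1) (L i w)) else if a = i + 1 then L i w else L a w

def θ' (i a : ℕ) (w : List ℕ) : List ℕ :=
  if a = i then L (i+1) w else if a = i + 1 then L (i+1) (L i (L (i+1) w)) else L a w

def T (i : ℕ) : List ℕ → List ℕ
  | [] => []
  | a :: w => θ i a (T i w)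

def T' (i : ℕ) : List ℕ → List ℕ
  | [] => []
  | a :: w => θ' i a (T' i w)

theorem Red_θ {i a : ℕ} {w : List ℕ} (h : Red w) : Red (θ i a w) := by
  unfold θ; split_ifs
  · exact Red_L (Red_L (Red_L h))
  · exact Red_L h
  · exact Red_L h

theorem Red_θ' {i a : ℕ} {w : List ℕ} (h : Red w) : Red (θ' i a w) := by
  unfold θ'; split_ifs
  · exact Red_L h
  · exact Red_L (Red_L (Red_L h))
  · exact Red_L h

theorem Red_T {i : ℕ} : ∀ {w : List ℕ}, Red (T i w)
  | [] => trivial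
  | _ :: _ => Red_θ Red_T

theorem Red_T' {i : ℕ} : ∀ {w : List ℕ}, Red (T' i w)
  | [] => trivial
  | _ :: _ => Red_θ' Red_T'

theorem θ_θ {i a : ℕ} {w : List ℕ} (h : Red w) : θ i a (θ i a w) = w := by
  unfold θ; split_ifs
  · rw [L_L (Red_L (Red_L h)), L_L (Red_L h), L_L h]
  · rw [L_L h]
  · rw [L_L h]

theorem θ'_θ' {i a : ℕ} {w : List ℕ} (h : Red w) : θ' i a (θ' i a w) = w := by
  unfold θ'; split_ifs
  · rw [L_L h]
  · rw [L_L (Red_L (Red_L h)), L_L (Red_L h), L_L h]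
  · rw [L_L h]

theorem T_L {i a : ℕ} {w : List ℕ} : T i (L a w) = θ i a (T i w) := by
  cases w with
  | nil => simp [L, T]
  | cons b w =>
    simp only [L]
    split_ifs with hab
    · subst hab; simp only [T]; rw [θ_θ Red_T]
    · rfl

theorem T'_L {i a : ℕ} {w : List ℕ} : T' i (L a w) = θ' i a (T' i w) := by
  cases w with
  | nil => simp [L, T']
  | cons b w =>
    simp only [L]
    split_ifs with hab
    · subst hab; simp only [T']; rw [θ'_θ' Red_T']
    · rfl

theorem T'_T {i : ℕ} : ∀ {w : List ℕ}, Red w → T' i (T i w) = w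
  | [], _ => rfl
  | a :: w, h => by
    have ih := T'_T (i := i) h.2
    have hw := h.2
    have e : L a w = a :: w := L_cons h.1
    rw [← e, T_L]
    unfold θ
    split_ifs with h1 h2
    · simp only [T'_L, ih]; simp [θ', h1, L_L, Red_L, hw]
    · simp only [T'_L, ih]; simp [θ', h2, L_L, Red_L, hw]
    · simp only [T'_L, ih]; simp [θ', h1, h2, L_L, Red_L, hw]

theorem T_T' {i : ℕ} : ∀ {w : List ℕ}, Red w → T i (T' i w) = w
  | [], _ => rfl
  | a :: w, h => by
    have ih := T_T' (i := i) h.2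
    have hw := h.2
    have e : L a w = a :: w := L_cons h.1
    rw [← e, T'_L]
    unfold θ'
    split_ifs with h1 h2
    · simp only [T_L, ih]; simp [θ, h1, L_L, Red_L, hw]
    · simp only [T_L, ih]; simp [θ, h2, L_L, Red_L, hw]
    · simp only [T_L, ih]; simp [θ, h1, h2, L_L, Red_L, hw]

theorem T_comm {i j : ℕ} (hij : i + 2 ≤ j) : ∀ {w : List ℕ}, T i (T j w) = T j (T i w)
  | [] => rfl
  | a :: w => by
    have ih := T_comm (w := w) hij
    simp only [T]
    by_cases h1 : a = i
    · subst h1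
      have x1 : a ≠ j := by omega
      have x2 : a ≠ j + 1 := by omega
      have x3 : a + 1 ≠ j := by omega
      simp [θ, T_L, ih, x1, x2, x3]
    by_cases h2 : a = i + 1
    · subst h2
      have x1 : i ≠ j := by omega
      have x2 : i ≠ j + 1 := by omega
      have x3 : i + 1 ≠ j := by omega
      simp [θ, T_L, ih, x1, x2, x3]
    by_cases h3 : a = j
    · subst h3
      have x1 : a + 1 ≠ i := by omega
      have x2 : a + 1 ≠ i + 1 := by omega
      simp [θ, T_L, ih, h1, h2, x1, x2]
    by_cases h4 : a = j + 1
    · subst h4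
      have x1 : j + 1 ≠ i := by omega
      have x2 : j ≠ i + 1 := by omega
      have x3 : j ≠ i := by omega
      simp [θ, T_L, ih, h2, x1, x2, x3]
    simp [θ, T_L, ih, h1, h2, h3, h4]

theorem T_braid {i : ℕ} : ∀ {w : List ℕ},
    T i (T (i+1) (T i w)) = T (i+1) (T i (T (i+1) w))
  | [] => rfl
  | a :: w => by
    have ih := T_braid (i := i) (w := w)
    have R : Red (T (i+1) (T i (T (i+1) w))) := Red_T
    have n1 : ∀ x : ℕ, x ≠ x + 1 + 1 := fun x => by omega
    have n2 : ∀ x : ℕ, x + 1 + 1 ≠ x := fun x => by omega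
    simp only [T]
    by_cases h1 : a = i
    · subst h1
      simp [θ, T_L, ih, L_L, Red_L, R, n1, n2]
      rw [L_L, L_L]
      all_goals (repeat first | exact R | apply Red_L)
    by_cases h2 : a = i + 1
    · subst h2
      simp [θ, T_L, ih, L_L, Red_L, R, n1, n2]
    by_cases h3 : a = i + 1 + 1
    · subst h3
      simp [θ, T_L, ih, L_L, Red_L, R, n1, n2]
    simp [θ, T_L, ih, h1, h2, h3]

abbrev Om := {w : List ℕ // Red w}

def permT (i : ℕ) : Equiv.Perm Om where
  toFun w := ⟨T i w.1, Red_T⟩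
  invFun w := ⟨T' i w.1, Red_T'⟩
  left_inv w := Subtype.ext (T'_T w.2)
  right_inv w := Subtype.ext (T_T' w.2)

theorem genσ_zero (n i : ℕ) (h : i = 0 ∨ n ≤ i) : genσ n i = 1 :=
  PresentedGroup.one_of_mem (rels := braidRels n) (Or.inr (Or.inr ⟨i, h, rfl⟩))

theorem genσ_comm (n i j : ℕ) (hij : i + 2 ≤ j) : genσ n i * genσ n j = genσ n j * genσ n i := by
  by_cases hi : i = 0
  · rw [genσ_zero n i (Or.inl hi)]; simp
  by_cases hj : n ≤ j
  · rw [genσ_zero n j (Or.inr hj)]; simp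
  have := PresentedGroup.one_of_mem (rels := braidRels n)
    (x := FreeGroup.of i * FreeGroup.of j * (FreeGroup.of i)⁻¹ * (FreeGroup.of j)⁻¹)
    (Or.inl ⟨i, j, by omega, hij, by omega, rfl⟩)
  simp only [map_mul, map_inv] at this
  have h2 : genσ n i * genσ n j * (genσ n i)⁻¹ * (genσ n j)⁻¹ = 1 := this
  rw [mul_inv_eq_one, mul_inv_eq_iff_eq_mul] at h2
  exact h2

theorem genσ_braid (n i : ℕ) (h1 : 1 ≤ i) (h : i + 1 < n) :
    genσ n i * genσ n (i+1) * genσ n i = genσ n (i+1) * genσ n i * genσ n (i+1) := by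
  have := PresentedGroup.one_of_mem (rels := braidRels n)
    (x := FreeGroup.of i * FreeGroup.of (i+1) * FreeGroup.of i *
              (FreeGroup.of (i+1) * FreeGroup.of i * FreeGroup.of (i+1))⁻¹)
    (Or.inr (Or.inl ⟨i, by omega, by omega, rfl⟩))
  simp only [map_mul, map_inv] at this
  have h2 : genσ n i * genσ n (i+1) * genσ n i *
    (genσ n (i+1) * genσ n i * genσ n (i+1))⁻¹ = 1 := this
  rw [mul_inv_eq_one] at h2
  exact h2

/-- universal property in convenient form -/
theorem exists_hom {G : Type*} [Group G] (n : ℕ) (f : ℕ → G)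
    (hc : ∀ i j, 1 ≤ i → i + 2 ≤ j → j < n → f i * f j = f j * f i)
    (hb : ∀ i, 1 ≤ i → i + 1 < n → f i * f (i+1) * f i = f (i+1) * f i * f (i+1)) :
    ∃ φ : Braid n →* G, ∀ i, 1 ≤ i → i < n → φ (genσ n i) = f i := by
  let g : ℕ → G := fun i => if 1 ≤ i ∧ i < n then f i else 1
  have hg : ∀ r ∈ braidRels n, FreeGroup.lift g r = 1 := by
    rintro r (⟨i, j, h1, h2, h3, rfl⟩ | ⟨i, h1, h2, rfl⟩ | ⟨i, h, rfl⟩)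
    · have e1 : g i = f i := if_pos ⟨by omega, by omega⟩
      have e2 : g j = f j := if_pos ⟨by omega, by omega⟩
      simp only [map_mul, map_inv, FreeGroup.lift_apply_of, e1, e2]
      rw [hc i j h1 h2 (by omega)]; group
    · have e1 : g i = f i := if_pos ⟨by omega, by omega⟩
      have e2 : g (i+1) = f (i+1) := if_pos ⟨by omega, by omega⟩
      simp only [map_mul, map_inv, FreeGroup.lift_apply_of, e1, e2]
      rw [hb i h1 (by omega)]; group
    · have : g i = 1 := if_neg (by omega)
      simp [this]
  refine ⟨PresentedGroup.toGroup hg, fun i h1 h2 => ?_⟩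
  have : PresentedGroup.toGroup hg (genσ n i) = g i := PresentedGroup.toGroup.of hg
  rw [this]; exact if_pos ⟨h1, h2⟩

theorem exists_rho (n : ℕ) :
    ∃ φ : Braid n →* Equiv.Perm Om, ∀ i, 1 ≤ i → i < n → φ (genσ n i) = permT i := by
  apply exists_hom
  · intro i j h1 h2 h3
    ext w : 2
    exact T_comm h2
  · intro i h1 h2
    ext w : 2
    exact T_braid

noncomputable def rho (n : ℕ) : Braid n →* Equiv.Perm Om := (exists_rho n).choose

theorem rho_gen (n i : ℕ) (h1 : 1 ≤ i) (h2 : i < n) (w : Om) :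
    (rho n (genσ n i) w).1 = T i w.1 := by
  rw [rho, (exists_rho n).choose_spec i h1 h2]; rfl

/-! the order -/

def cyc (e a b : ℕ) : Prop := (e < a ∧ a < b) ∨ (a < b ∧ b < e) ∨ (b < e ∧ e < a)

def lt : ℕ → List ℕ → List ℕ → Prop
  | _, [], [] => False
  | e, [], b :: _ => cyc e 0 b
  | e, a :: _, [] => cyc e a 0
  | e, a :: u, b :: v => if a = b then lt a u v else cyc e a b

end DB

set_option linter.all false

namespace DB

theorem lt_irrefl : ∀ (e : ℕ) (u : List ℕ), ¬ lt e u u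
  | _, [] => by simp [lt]
  | e, a :: u => by simpa [lt] using lt_irrefl a u

theorem cyc_trans {e a b c : ℕ} (h1 : cyc e a b) (h2 : cyc e b c) : cyc e a c := by
  unfold cyc at *; omega

theorem cyc_ne {e a b : ℕ} (h1 : cyc e a b) : a ≠ b := by
  unfold cyc at *; omega

theorem lt_trans : ∀ {u v w : List ℕ} {e : ℕ}, lt e u v → lt e v w → lt e u w
  | [], [], _, _, h1, _ => by simp [lt] at h1
  | _, [], [], _, _, h1 => by simp [lt] at h1
  | [], b :: v, [], e, h1, h2 => by
    simp only [lt] at *; exact absurd rfl (cyc_ne (cyc_trans h1 h2))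
  | [], b :: v, c :: w, e, h1, h2 => by
    simp only [lt] at *
    split_ifs at h2 with h
    · subst h; exact h1
    · exact cyc_trans h1 h2
  | a :: u, [], c :: w, e, h1, h2 => by
    simp only [lt] at *
    have := cyc_trans h1 h2
    rw [if_neg (cyc_ne this)]; exact this
  | a :: u, b :: v, [], e, h1, h2 => by
    simp only [lt] at *
    split_ifs at h1 with h
    · subst h; exact h2
    · exact cyc_trans h1 h2
  | a :: u, b :: v, c :: w, e, h1, h2 => by
    simp only [lt] at *
    split_ifs at h1 with h
    · subst h
      split_ifs at h2 ⊢ with h'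
      · exact lt_trans h1 h2
      · exact h2
    · split_ifs at h2 with h'
      · subst h'; rw [if_neg h]; exact h1
      · have := cyc_trans h1 h2
        rw [if_neg (cyc_ne this)]; exact this

/-! blocks -/

def cl (p : ℕ) (s : Bool) : ℕ := if s then p + 1 else p

def alt (p : ℕ) : Bool → ℕ → List ℕ
  | _, 0 => []
  | s, k+1 => cl p s :: alt p (!s) k

def Good (p : ℕ) (w : List ℕ) : Prop := ∀ a, w.head? = some a → a ≠ p ∧ a ≠ p + 1

theorem cl_ne (p : ℕ) (s : Bool) : cl p s ≠ cl p (!s) := by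
  cases s <;> simp [cl]

theorem head_alt_ne {p : ℕ} {s : Bool} {k : ℕ} {w : List ℕ} (hw : Good p w) :
    (alt p s k ++ w).head? ≠ some (cl p (!s)) := by
  cases k with
  | zero =>
    simp only [alt, List.nil_append]
    intro h
    have := hw _ h
    cases s <;> simp [cl] at this
  | succ k =>
    simp [alt]; exact cl_ne p s

theorem L_alt {p : ℕ} {s : Bool} {k : ℕ} {w : List ℕ} (hw : Good p w) :
    L (cl p (!s)) (alt p s k ++ w) = alt p (!s) (k+1) ++ w := by
  rw [L_cons (head_alt_ne hw)]; simp [alt]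

theorem L_alt_p {p : ℕ} {k : ℕ} {w : List ℕ} (hw : Good p w) :
    L p (alt p true k ++ w) = alt p false (k+1) ++ w := L_alt (s := true) hw

theorem L_alt_q {p : ℕ} {k : ℕ} {w : List ℕ} (hw : Good p w) :
    L (p+1) (alt p false k ++ w) = alt p true (k+1) ++ w := L_alt (s := false) hw

theorem T_q {p : ℕ} {w : List ℕ} : T p ((p+1) :: w) = L p (T p w) := by simp [T, θ]
theorem T_p {p : ℕ} {w : List ℕ} : T p (p :: w) = L p (L (p+1) (L p (T p w))) := by simp [T, θ]

theorem T_even {p : ℕ} {w : List ℕ} (hw : Good p (T p w)) (s : Bool) : ∀ m : ℕ,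
    T p (alt p s (2*m) ++ w) = alt p s (2*m) ++ T p w
  | 0 => by simp [alt]
  | m+1 => by
    have ih := T_even hw s m
    have R : Red (T p (alt p s (2*m) ++ w)) := Red_T
    have e : 2 * (m+1) = 2*m+1+1 := by ring
    rw [e]
    cases s
    · simp only [alt, cl, Bool.not_false, Bool.not_true, List.cons_append, if_true, Bool.false_eq_true, if_false]
      rw [T_p, T_q, L_L R, ih, L_alt_q hw, L_alt_p hw]
      simp [alt, cl]
    · simp only [alt, cl, Bool.not_false, Bool.not_true, List.cons_append, if_true, Bool.false_eq_true, if_false]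
      rw [T_q, T_p, L_L (Red_L (Red_L R)), ih, L_alt_p hw, L_alt_q hw]
      simp [alt, cl]

theorem T_oddp {p : ℕ} {w : List ℕ} (hw : Good p (T p w)) (m : ℕ) :
    T p (alt p false (2*m+1) ++ w) = alt p false (2*m+3) ++ T p w := by
  simp only [alt, cl, Bool.not_false, Bool.not_true, List.cons_append, if_true, Bool.false_eq_true, if_false]
  rw [T_p, T_even hw, L_alt_p hw, L_alt_q hw, L_alt_p hw]; simp [alt, cl]

theorem T_oddq1 {p : ℕ} {w : List ℕ} (hw : Good p (T p w)) :
    T p (alt p true 1 ++ w) = alt p false 1 ++ T p w := by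
  simp only [alt, cl, Bool.not_false, Bool.not_true, List.cons_append, if_true, Bool.false_eq_true, if_false]
  have := L_alt_p (k := 0) hw
  simp only [alt, List.nil_append] at this
  rw [List.nil_append, T_q, this]; simp [cl]

theorem T_oddq {p : ℕ} {w : List ℕ} (hw : Good p (T p w)) (m : ℕ) :
    T p (alt p true (2*m+3) ++ w) = alt p true (2*m+1) ++ T p w := by
  have := T_even hw false (m+1)
  have e : 2 * (m+1) = 2*m+2 := by ring
  rw [e] at this
  rw [alt]
  simp only [alt, cl, Bool.not_false, Bool.not_true, List.cons_append, if_true, Bool.false_eq_true, if_false] at *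
  rw [T_q, this]; simp [L]

def TB (s : Bool) (k : ℕ) (s2 : Bool) (k2 : ℕ) : Prop :=
  (k % 2 = 0 ∧ s2 = s ∧ k2 = k) ∨ (k % 2 = 1 ∧ s = false ∧ s2 = false ∧ k2 = k + 2) ∨
  (s = true ∧ k = 1 ∧ s2 = false ∧ k2 = 1) ∨ (s = true ∧ k % 2 = 1 ∧ s2 = true ∧ k = k2 + 2)

theorem T_blk {p : ℕ} {w : List ℕ} (hw : Good p (T p w)) (s : Bool) (k : ℕ) :
    ∃ s2 k2, T p (alt p s k ++ w) = alt p s2 k2 ++ T p w ∧ TB s k s2 k2 := by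
  rcases Nat.even_or_odd' k with ⟨m, rfl | rfl⟩
  · exact ⟨s, 2*m, T_even hw s m, Or.inl ⟨by omega, rfl, rfl⟩⟩
  · cases s
    · exact ⟨_, _, T_oddp hw m, Or.inr (Or.inl ⟨by omega, rfl, rfl, rfl⟩)⟩
    · cases m with
      | zero => exact ⟨_, _, T_oddq1 hw, Or.inr (Or.inr (Or.inl ⟨rfl, rfl, rfl, rfl⟩))⟩
      | succ m => exact ⟨_, _, T_oddq hw m, Or.inr (Or.inr (Or.inr ⟨rfl, by omega, rfl, by omega⟩))⟩

theorem decomp (p : ℕ) : ∀ (w : List ℕ), Red w →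
    ∃ s k u, w = alt p s k ++ u ∧ Good p u ∧ Red u
  | [], _ => ⟨true, 0, [], rfl, by simp [Good], trivial⟩
  | a :: w, h => by
    obtain ⟨s, k, u, rfl, hu, hr⟩ := decomp p w h.2
    by_cases ha : a ≠ p ∧ a ≠ p + 1
    · refine ⟨true, 0, _, rfl, ?_, h⟩
      intro b hb; simp at hb; subst hb; exact ha
    · have : ∃ t, a = cl p t := by
        by_cases h1 : a = p
        · exact ⟨false, by simp [cl, h1]⟩
        · exact ⟨true, by simp [cl]; tauto⟩
      obtain ⟨t, rfl⟩ := this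
      cases k with
      | zero => exact ⟨t, 1, u, by simp [alt], hu, hr⟩
      | succ k =>
        have hst : s = !t := by
          have := h.1
          simp [alt] at this
          cases s <;> cases t <;> simp_all
        subst hst
        exact ⟨t, k+2, u, by simp [alt], hu, hr⟩

theorem T_good_aux (p : ℕ) : ∀ (N : ℕ) (w : List ℕ), w.length ≤ N → Red w → Good p w →
    Good p (T p w) ∧ ∀ a w', w = a :: w' → T p w = a :: T p w'
  | _, [], _, _, _ => ⟨by simp [T, Good], by simp⟩
  | 0, a :: w', h, _, _ => by simp at h
  | N+1, a :: w', h, hr, hg => by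
    have ha := hg a rfl
    have key : T p (a :: w') = a :: T p w' := by
      have : T p (a :: w') = L a (T p w') := by simp [T, θ, ha]
      rw [this]
      apply L_cons
      obtain ⟨s, k, u, rfl, hu, hru⟩ := decomp p w' hr.2
      have hl : u.length ≤ N := by simp at h; omega
      have ih := T_good_aux p N u hl hru hu
      cases k with
      | zero =>
        simp only [alt, List.nil_append] at *
        cases u with
        | nil => simp [T]
        | cons b u =>
          rw [ih.2 b u rfl]
          exact hr.1
      | succ k =>
        obtain ⟨s2, k2, e, htb⟩ := T_blk ih.1 s (k+1)
        rw [e]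
        cases k2 with
        | zero => unfold TB at htb; omega
        | succ k2 =>
          simp [alt]
          intro h'
          cases s2 <;> simp [cl] at h' <;> omega
    refine ⟨?_, ?_⟩
    · rw [key]; intro b hb; simp at hb; subst hb; exact ha
    · intro b w'' e
      cases e; exact key

theorem T_good {p : ℕ} {w : List ℕ} (hr : Red w) (hg : Good p w) : Good p (T p w) :=
  (T_good_aux p _ w le_rfl hr hg).1

theorem T_good_cons {p a : ℕ} {w : List ℕ} (hr : Red (a :: w)) (hg : a ≠ p ∧ a ≠ p + 1) :
    T p (a :: w) = a :: T p w :=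
  (T_good_aux p _ (a :: w) le_rfl hr (by intro b hb; simp at hb; subst hb; exact hg)).2 a w rfl

def LQ (s : Bool) (k : ℕ) : Prop := (k % 2 = 0 ∧ s = false) ∨ (k % 2 = 1 ∧ s = true)

def hd : List ℕ → ℕ
  | [] => 0
  | a :: _ => a

theorem hd_cons (a : ℕ) (w : List ℕ) : hd (a :: w) = a := rfl

theorem hd_good {p : ℕ} (hp : 1 ≤ p) {w : List ℕ} (hg : Good p w) : hd w ≠ p ∧ hd w ≠ p + 1 := by
  cases w with
  | nil => simp [hd]; omega
  | cons a w => exact hg a rfl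

theorem lt_of_hd {e : ℕ} {u v : List ℕ} (h : hd u ≠ hd v) : lt e u v ↔ cyc e (hd u) (hd v) := by
  cases u <;> cases v <;> simp [lt, hd] at * 
  intro h'; exact absurd h' h

theorem lt_good {p d d' : ℕ} (hp : 1 ≤ p) {u v : List ℕ} (hu : Good p u) (hv : Good p v)
    (hd' : ∀ a b, a ≠ p → a ≠ p + 1 → b ≠ p → b ≠ p + 1 → cyc d a b → cyc d' a b)
    (h : lt d u v) : lt d' u v := by
  have a1 := hd_good hp hu
  have a2 := hd_good hp hv
  cases u <;> cases v <;> simp only [lt, hd] at * 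
  · exact hd' _ _ a1.1 a1.2 a2.1 a2.2 h
  · exact hd' _ _ a1.1 a1.2 a2.1 a2.2 h
  · split_ifs at h ⊢
    · exact h
    · exact hd' _ _ a1.1 a1.2 a2.1 a2.2 h

theorem lt_good_iff {p : ℕ} (hp : 1 ≤ p) {u v : List ℕ} (hu : Good p u) (hv : Good p v) (s : Bool) :
    lt (cl p s) u v ↔ lt p u v := by
  constructor
  · apply lt_good hp hu hv
    intro a b h1 h2 h3 h4 h
    cases s <;> simp [cl] at h <;> unfold cyc at * <;> omega
  · apply lt_good hp hu hv
    intro a b h1 h2 h3 h4 h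
    cases s <;> simp [cl] <;> unfold cyc at * <;> omega

theorem lt_alt {p : ℕ} (hp : 1 ≤ p) {u v : List ℕ} (hu : Good p u) (hv : Good p v) :
    ∀ (k k' : ℕ) (s : Bool), lt (cl p (!s)) (alt p s k ++ u) (alt p s k' ++ v) ↔
      (k < k' ∧ LQ s k) ∨ (k' < k ∧ ¬ LQ s k') ∨ (k = k' ∧ lt p u v)
  | 0, 0, s => by simp [alt, lt_good_iff hp hu hv]
  | 0, k'+1, s => by
    have a1 := hd_good hp hu
    have : hd (alt p s 0 ++ u) ≠ hd (alt p s (k'+1) ++ v) := by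
      cases s <;> simp [alt, hd_cons, cl] <;> omega
    rw [lt_of_hd this]
    cases s <;> simp [alt, hd_cons, cl, LQ, cyc] <;> omega
  | k+1, 0, s => by
    have a1 := hd_good hp hv
    have : hd (alt p s (k+1) ++ u) ≠ hd (alt p s 0 ++ v) := by
      cases s <;> simp [alt, hd_cons, cl] <;> omega
    rw [lt_of_hd this]
    cases s <;> simp [alt, hd_cons, cl, LQ, cyc] <;> omega
  | k+1, k'+1, s => by
    have := lt_alt hp hu hv k k' (!s)
    simp only [alt, List.cons_append, lt, if_true]
    rw [Bool.not_not] at this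
    rw [this]
    have e : ∀ k, LQ (!s) k ↔ LQ s (k+1) := by
      intro k
      cases s <;> simp [LQ] <;> omega
    simp [e]

theorem BLT {p e : ℕ} (hp : 1 ≤ p) (h1 : e ≠ p) (h2 : e ≠ p + 1) {u v : List ℕ}
    (hu : Good p u) (hv : Good p v) {k k' : ℕ} {s s' : Bool} (hk : 1 ≤ k) (hk' : 1 ≤ k') :
    lt e (alt p s k ++ u) (alt p s' k' ++ v) ↔ (s = false ∧ s' = true) ∨ (s = s' ∧
      ((k < k' ∧ LQ s k) ∨ (k' < k ∧ ¬ LQ s k') ∨ (k = k' ∧ lt p u v))) := by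
  by_cases hs : s = s'
  · subst hs
    rw [← lt_alt hp hu hv]
    obtain ⟨k, rfl⟩ := Nat.exists_eq_add_of_le' hk
    obtain ⟨k', rfl⟩ := Nat.exists_eq_add_of_le' hk'
    have : ¬ (s = false ∧ s = true) := by cases s <;> simp
    simp only [alt, List.cons_append, lt, if_true]
    simp [this]
  · obtain ⟨k, rfl⟩ := Nat.exists_eq_add_of_le' hk
    obtain ⟨k', rfl⟩ := Nat.exists_eq_add_of_le' hk'
    cases s <;> cases s' <;> simp [alt, lt, cl, cyc] at hs ⊢ <;> omega

theorem T_mono_aux {p : ℕ} (hp : 1 ≤ p) : ∀ (N : ℕ) (w w' : List ℕ) (e : ℕ), w.length ≤ N →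
    Red w → Red w' → e ≠ p → e ≠ p + 1 → (lt e w w' ↔ lt e (T p w) (T p w')) := by
  intro N
  induction N with
  | zero =>
    intro w w' e hl hr hr' h1 h2
    have : w = [] := by simpa using hl
    subst this
    obtain ⟨s, k, u, rfl, hu, hru⟩ := decomp p w' hr'
    cases k with
    | zero =>
      simp only [alt, List.nil_append] at *
      cases u with
      | nil => simp [lt, T]
      | cons b u =>
        rw [T_good_cons hr' (hu b rfl)]
        simp [lt, T]
    | succ k =>
      obtain ⟨s2, k2, e2, htb⟩ := T_blk (T_good hru hu) s (k+1)
      rw [e2]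
      cases k2 with
      | zero => unfold TB at htb; omega
      | succ k2 =>
        simp only [T, alt, List.cons_append, lt]
        cases s <;> cases s2 <;> simp [cl, cyc] <;> omega
  | succ N ih =>
    intro w w' e hl hr hr' h1 h2
    obtain ⟨s, k, u, rfl, hu, hru⟩ := decomp p w hr
    obtain ⟨s', k', u', rfl, hu', hru'⟩ := decomp p w' hr'
    have gu := T_good hru hu
    have gu' := T_good hru' hu'
    have tail : ∀ d, (lt d u u' ↔ lt d (T p u) (T p u')) := by
      intro d
      cases u with
      | nil =>
        cases u' with
        | nil => simp [lt, T]
        | cons b u' =>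
          rw [T_good_cons hru' (hu' b rfl)]
          simp [lt, T]
      | cons a u =>
        rw [T_good_cons hru (hu a rfl)]
        cases u' with
        | nil => simp [lt, T]
        | cons b u' =>
          rw [T_good_cons hru' (hu' b rfl)]
          simp only [lt]
          split_ifs with hab
          · refine ih u u' a ?_ hru.2 (hru'.2) (hu a rfl).1 (hu a rfl).2
            simp at hl; omega
          · rfl
    have hdT : ∀ {u : List ℕ}, Red u → Good p u → hd (T p u) = hd u := by
      intro u hru hu
      cases u with
      | nil => simp [T]
      | cons a u => rw [T_good_cons hru (hu a rfl)]; rfl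
    obtain ⟨s2, k2, e2, htb⟩ := T_blk (T_good hru hu) s k
    obtain ⟨s2', k2', e2', htb'⟩ := T_blk (T_good hru' hu') s' k'
    have a1 := hd_good hp hu
    have a2 := hd_good hp hu'
    have a3 := hdT hru hu
    have a4 := hdT hru' hu'
    by_cases hk : k = 0
    · subst hk
      have : k2 = 0 := by unfold TB at htb; omega
      subst this
      by_cases hk' : k' = 0
      · subst hk'
        exact tail e
      · have : k2' ≠ 0 := by unfold TB at htb'; omega
        obtain ⟨k', rfl⟩ := Nat.exists_eq_succ_of_ne_zero hk'
        obtain ⟨k2', rfl⟩ := Nat.exists_eq_succ_of_ne_zero this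
        rw [e2, e2', lt_of_hd, lt_of_hd]
        · cases s' <;> cases s2' <;> simp [alt, hd_cons, cl, cyc, a3] <;> omega
        · cases s2' <;> simp [alt, hd_cons, cl, a3] <;> omega
        · cases s' <;> simp [alt, hd_cons, cl] <;> omega
    · have hk2 : k2 ≠ 0 := by unfold TB at htb; omega
      by_cases hk' : k' = 0
      · subst hk'
        have : k2' = 0 := by unfold TB at htb'; omega
        subst this
        obtain ⟨k, rfl⟩ := Nat.exists_eq_succ_of_ne_zero hk
        obtain ⟨k2, rfl⟩ := Nat.exists_eq_succ_of_ne_zero hk2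
        rw [e2, e2', lt_of_hd, lt_of_hd]
        · cases s <;> cases s2 <;> simp [alt, hd_cons, cl, cyc, a4] <;> omega
        · cases s2 <;> simp [alt, hd_cons, cl, a4] <;> omega
        · cases s <;> simp [alt, hd_cons, cl] <;> omega
      · have hk2' : k2' ≠ 0 := by unfold TB at htb'; omega
        rw [BLT hp h1 h2 hu hu' (by omega) (by omega),
          e2, e2', BLT hp h1 h2 gu gu' (by omega) (by omega)]
        rw [← tail p]
        clear e2 e2' tail ih hr hr' hl hdT
        generalize lt p u u' = P at *
        unfold TB at htb htb'
        unfold LQ at *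
        cases s <;> cases s' <;> cases s2 <;> cases s2' <;> simp at htb htb' ⊢ <;>
          (try by_cases hP : P) <;> simp [hP] <;> omega

theorem T_mono {p : ℕ} (hp : 1 ≤ p) {w w' : List ℕ} (hr : Red w) (hr' : Red w')
    : lt 0 w w' ↔ lt 0 (T p w) (T p w') :=
  T_mono_aux hp _ w w' 0 le_rfl hr hr' (by omega) (by omega)

theorem T_le_aux {p : ℕ} (hp : 1 ≤ p) : ∀ (N : ℕ) (w : List ℕ) (e : ℕ), w.length ≤ N →
    Red w → e ≠ p → e ≠ p + 1 → T p w = w ∨ lt e (T p w) w := by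
  intro N
  induction N with
  | zero =>
    intro w e hl hr h1 h2
    have : w = [] := by simpa using hl
    subst this
    exact Or.inl rfl
  | succ N ih =>
    intro w e hl hr h1 h2
    obtain ⟨s, k, u, rfl, hu, hru⟩ := decomp p w hr
    have gu := T_good hru hu
    have tail : ∀ d, T p u = u ∨ lt d (T p u) u := by
      intro d
      cases u with
      | nil => exact Or.inl rfl
      | cons a u =>
        rw [T_good_cons hru (hu a rfl)]
        simp only [lt, if_true]
        have := ih u a (by simp at hl; omega) hru.2 (hu a rfl).1 (hu a rfl).2
        simpa using this
    obtain ⟨s2, k2, e2, htb⟩ := T_blk (T_good hru hu) s k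
    by_cases hk : k = 0
    · subst hk
      exact tail e
    · have hk2 : k2 ≠ 0 := by unfold TB at htb; omega
      rw [e2, BLT hp h1 h2 gu hu (by omega) (by omega)]
      rcases htb with ⟨h, rfl, rfl⟩ | ⟨h, rfl, rfl, rfl⟩ | ⟨rfl, rfl, rfl, rfl⟩ | ⟨rfl, h, rfl, rfl⟩
      · rcases tail p with h' | h'
        · left; rw [h']
        · right; right; exact ⟨rfl, Or.inr (Or.inr ⟨rfl, h'⟩)⟩
      · right; right; refine ⟨rfl, Or.inr (Or.inl ⟨by omega, ?_⟩)⟩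
        unfold LQ; simp; omega
      · right; left; simp
      · right; right; refine ⟨rfl, Or.inl ⟨by omega, ?_⟩⟩
        unfold LQ; simp; omega

theorem T_le {p : ℕ} (hp : 1 ≤ p) {w : List ℕ} (hr : Red w) : T p w = w ∨ lt 0 (T p w) w :=
  T_le_aux hp _ w 0 le_rfl hr (by omega) (by omega)

end DB

set_option linter.all false

namespace DB

/-! ### Part 2 : the positive braid monoid -/

def Adj {k : ℕ} (i j : Fin k) : Prop := i.1 + 1 = j.1 ∨ j.1 + 1 = i.1
def Far {k : ℕ} (i j : Fin k) : Prop := i.1 + 2 ≤ j.1 ∨ j.1 + 2 ≤ i.1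

theorem Adj.symm {k : ℕ} {i j : Fin k} (h : Adj i j) : Adj j i := Or.symm h
theorem Far.symm {k : ℕ} {i j : Fin k} (h : Far i j) : Far j i := Or.symm h

theorem tri {k : ℕ} (i j : Fin k) : i = j ∨ Far i j ∨ Adj i j := by
  rw [Fin.ext_iff]; unfold Far Adj; omega

inductive BR (k : ℕ) : FreeMonoid (Fin k) → FreeMonoid (Fin k) → Prop
  | far (i j) (h : Far i j) : BR k (FreeMonoid.of i * FreeMonoid.of j) (FreeMonoid.of j * FreeMonoid.of i)
  | adj (i j) (h : Adj i j) : BR k (FreeMonoid.of i * (FreeMonoid.of j * FreeMonoid.of i))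
      (FreeMonoid.of j * (FreeMonoid.of i * FreeMonoid.of j))

abbrev BM (k : ℕ) := PresentedMonoid (BR k)

def gs {k : ℕ} (i : Fin k) : BM k := PresentedMonoid.of (BR k) i

def pmk {k : ℕ} (w : FreeMonoid (Fin k)) : BM k := PresentedMonoid.mk (BR k) w

theorem pmk_mul {k : ℕ} (u v : FreeMonoid (Fin k)) : pmk (u * v) = pmk u * pmk v :=
  map_mul (PresentedMonoid.mk (BR k)) u v
theorem pmk_of {k : ℕ} (i : Fin k) : pmk (FreeMonoid.of i) = gs i := rfl
theorem pmk_one {k : ℕ} : pmk (1 : FreeMonoid (Fin k)) = 1 := rfl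

theorem pmk_eq {k : ℕ} {u v : FreeMonoid (Fin k)} : pmk u = pmk v ↔ ConGen.Rel (BR k) u v := by
  exact Con.eq (conGen (BR k))

theorem gs_far0 {k : ℕ} {i j : Fin k} (h : Far i j) : gs i * gs j = gs j * gs i := by
  have : pmk (FreeMonoid.of i * FreeMonoid.of j) = pmk (FreeMonoid.of j * FreeMonoid.of i) :=
    pmk_eq.2 (ConGen.Rel.of _ _ (BR.far i j h))
  simpa [pmk_mul, pmk_of] using this

theorem gs_adj0 {k : ℕ} {i j : Fin k} (h : Adj i j) :
    gs i * (gs j * gs i) = gs j * (gs i * gs j) := by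
  have : pmk (FreeMonoid.of i * (FreeMonoid.of j * FreeMonoid.of i)) =
      pmk (FreeMonoid.of j * (FreeMonoid.of i * FreeMonoid.of j)) :=
    pmk_eq.2 (ConGen.Rel.of _ _ (BR.adj i j h))
  simpa [pmk_mul, pmk_of] using this

theorem gs_far {k : ℕ} {i j : Fin k} (h : Far i j) (x : BM k) :
    gs i * (gs j * x) = gs j * (gs i * x) := by
  rw [← mul_assoc, gs_far0 h, mul_assoc]

theorem gs_adj {k : ℕ} {i j : Fin k} (h : Adj i j) (x : BM k) :
    gs i * (gs j * (gs i * x)) = gs j * (gs i * (gs j * x)) := by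
  have := congrArg (· * x) (gs_adj0 h)
  simpa [mul_assoc] using this

def lenHom (k : ℕ) : BM k →* Multiplicative ℕ :=
  PresentedMonoid.lift (fun _ => Multiplicative.ofAdd 1) (by
    intro a b h
    cases h <;> simp <;> rfl)

def len {k : ℕ} (x : BM k) : ℕ := (lenHom k x).toAdd

@[simp] theorem len_mul {k : ℕ} (x y : BM k) : len (x * y) = len x + len y := by
  simp [len]
@[simp] theorem len_one {k : ℕ} : len (1 : BM k) = 0 := by
  simp [len]
@[simp] theorem len_gs {k : ℕ} (i : Fin k) : len (gs i) = 1 := by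
  simp [len, lenHom, gs]

def Q {k : ℕ} (i : Fin k) (a : BM k) (j : Fin k) (b : BM k) : Prop :=
  (i = j → a = b) ∧ (Far i j → ∃ z, a = gs j * z ∧ b = gs i * z) ∧
  (Adj i j → ∃ z, a = gs j * (gs i * z) ∧ b = gs i * (gs j * z))

theorem Q.symm {k : ℕ} {i j : Fin k} {a b : BM k} (h : Q i a j b) : Q j b i a := by
  refine ⟨fun e => (h.1 e.symm).symm, fun f => ?_, fun f => ?_⟩
  · obtain ⟨z, h1, h2⟩ := h.2.1 f.symm; exact ⟨z, h2, h1⟩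
  · obtain ⟨z, h1, h2⟩ := h.2.2 f.symm; exact ⟨z, h2, h1⟩

theorem Q.mul {k : ℕ} {i j : Fin k} {a b : BM k} (h : Q i a j b) (x : BM k) :
    Q i (a * x) j (b * x) := by
  refine ⟨fun e => by rw [h.1 e], fun f => ?_, fun f => ?_⟩
  · obtain ⟨z, h1, h2⟩ := h.2.1 f; exact ⟨z * x, by simp [h1, mul_assoc], by simp [h2, mul_assoc]⟩
  · obtain ⟨z, h1, h2⟩ := h.2.2 f; exact ⟨z * x, by simp [h1, mul_assoc], by simp [h2, mul_assoc]⟩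

theorem Q.refl {k : ℕ} (i : Fin k) (a : BM k) : Q i a i a := by
  refine ⟨fun _ => rfl, fun f => ?_, fun f => ?_⟩
  · unfold Far at f; omega
  · unfold Adj at f; omega

theorem Q.eq {k : ℕ} {i j : Fin k} {a b : BM k} (h : Q i a j b) : gs i * a = gs j * b := by
  rcases tri i j with h1 | h1 | h1
  · rw [h.1 h1, h1]
  · obtain ⟨z, rfl, rfl⟩ := h.2.1 h1; exact gs_far h1 z
  · obtain ⟨z, rfl, rfl⟩ := h.2.2 h1; exact gs_adj h1 z

section comp
/-- case 3 -/
theorem comp3 {k N : ℕ} (IH : ∀ (i : Fin k) (x : BM k) (j : Fin k) (y : BM k), len x < N →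
  gs i * x = gs j * y → Q i x j y) {i m j : Fin k} {a b c : BM k} (hN : len a ≤ N) (h1 : Q i a m c) (h2 : Q m c j b)
    (im : Adj i m) (mj : Far m j) (ij : i ≠ j) : Q i a j b := by
  obtain ⟨z, ha, hc⟩ := h1.2.2 im
  obtain ⟨z', hc', hb⟩ := h2.2.1 mj
  have la := congrArg len ha
  have e1 : gs i * (gs m * z) = gs j * z' := by rw [← hc, hc']
  simp at la
  have q1 := IH i (gs m * z) j z' (by simp; omega) e1
  refine ⟨fun e => absurd e ij, fun f => ?_, fun f => ?_⟩
  · obtain ⟨w, hw1, hw2⟩ := q1.2.1 f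
    obtain ⟨v, hv1, hv2⟩ := (IH m z j w (by omega) hw1).2.1 mj
    refine ⟨gs m * (gs i * v), ?_, ?_⟩
    · rw [ha, hv1, gs_far f, gs_far mj]
    · rw [hb, hw2, hv2, gs_adj im]
  · obtain ⟨w, hw1, hw2⟩ := q1.2.2 f
    obtain ⟨v, hv1, hv2⟩ := (IH m z j _ (by omega) hw1).2.1 mj
    have l2 := congrArg len hw1
    simp at l2
    obtain ⟨u, hu1, hu2⟩ := (IH i w m v (by omega) hv2).2.2 im
    refine ⟨gs m * (gs i * (gs j * u)), ?_, ?_⟩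
    · rw [ha, hv1, hu2, gs_adj im, gs_far mj.symm, gs_adj f, gs_far mj.symm]
    · rw [hb, hw2, hu1, gs_far mj.symm, gs_adj im.symm, gs_far mj.symm, gs_adj f]

theorem comp {k N : ℕ} (IH : ∀ (i : Fin k) (x : BM k) (j : Fin k) (y : BM k), len x < N →
  gs i * x = gs j * y → Q i x j y) {i m j : Fin k} {a b c : BM k} (hN : len a ≤ N) (h1 : Q i a m c) (h2 : Q m c j b) :
    Q i a j b := by
  have l1 := congrArg len h1.eq
  have l2 := congrArg len h2.eq
  simp at l1 l2
  rcases tri i m with im | im | im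
  · obtain rfl := im; rw [h1.1 rfl]; exact h2
  · rcases tri m j with mj | mj | mj
    · obtain rfl := mj; rw [← h2.1 rfl]; exact h1
    · -- far far
      obtain ⟨z, ha, hc⟩ := h1.2.1 im
      obtain ⟨z', hc', hb⟩ := h2.2.1 mj
      have e1 : gs i * z = gs j * z' := by rw [← hc, hc']
      have la := congrArg len ha
      simp at la
      have q1 := IH i z j z' (by omega) e1
      refine ⟨fun e => ?_, fun f => ?_, fun f => ?_⟩
      · rw [ha, hb, q1.1 e]
      · obtain ⟨w, hw1, hw2⟩ := q1.2.1 f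
        exact ⟨gs m * w, by rw [ha, hw1, gs_far mj], by rw [hb, hw2, gs_far im]⟩
      · obtain ⟨w, hw1, hw2⟩ := q1.2.2 f
        exact ⟨gs m * w, by rw [ha, hw1, gs_far mj, gs_far im], by rw [hb, hw2, gs_far im.symm, gs_far mj]⟩
    · have ij : i ≠ j := by
        rintro rfl; unfold Far at im; unfold Adj at mj; omega
      exact (comp3 IH (by omega) h2.symm h1.symm mj.symm im.symm ij.symm).symm
  · rcases tri m j with mj | mj | mj
    · obtain rfl := mj; rw [← h2.1 rfl]; exact h1
    · have ij : i ≠ j := by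
        rintro rfl; unfold Far at mj; unfold Adj at im; omega
      exact comp3 IH hN h1 h2 im mj ij
    · obtain ⟨z, ha, hc⟩ := h1.2.2 im
      obtain ⟨z', hc', hb⟩ := h2.2.2 mj
      have e1 : gs i * (gs m * z) = gs j * (gs m * z') := by rw [← hc, hc']
      have la := congrArg len ha
      simp at la
      have lb := congrArg len hb
      simp at lb
      have q1 := IH i _ j _ (by simp; omega) e1
      refine ⟨fun e => ?_, fun f => ?_, fun f => ?_⟩
      · subst e
        have := (IH m z m z' (by omega) (q1.1 rfl)).1 rfl
        rw [ha, hb, this]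
      · obtain ⟨w, hw1, hw2⟩ := q1.2.1 f
        obtain ⟨v, hv1, hv2⟩ := (IH m z j w (by omega) hw1).2.2 mj
        obtain ⟨u, hu1, hu2⟩ := (IH m z' i w (by omega) hw2).2.2 im.symm
        have l3 := congrArg len hv1
        simp at l3
        have e2 : gs m * (gs j * v) = gs m * (gs i * u) := by rw [← hv2, hu2]
        have e3 := (IH m _ m _ (by simp; omega) e2).1 rfl
        obtain ⟨t, ht1, ht2⟩ := (IH j v i u (by omega) e3).2.1 f.symm
        refine ⟨gs m * (gs j * (gs i * (gs m * t))), ?_, ?_⟩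
        · rw [ha, hv1, ht1, gs_far f, gs_adj im, gs_adj mj]
        · rw [hb, hu1, ht2, gs_far f.symm, gs_adj mj.symm, gs_adj im.symm, gs_far f]
      · unfold Adj at im mj f; omega

end comp

theorem len_pmk_eq {k : ℕ} {u v : FreeMonoid (Fin k)} (h : ConGen.Rel (BR k) u v) :
    u.length = v.length := by
  have e : ∀ u : FreeMonoid (Fin k), len (pmk u) = u.length := by
    intro u
    induction u using FreeMonoid.recOn with
    | one => simp [pmk_one]
    | of_mul x xs ih => simp [pmk_mul, pmk_of, ih]
  rw [← e, ← e, pmk_eq.2 h]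

theorem len_pmk {k : ℕ} (u : FreeMonoid (Fin k)) : len (pmk u) = u.length := by
    induction u using FreeMonoid.recOn with
    | one => simp [pmk_one]
    | of_mul x xs ih => simp [pmk_mul, pmk_of, ih]

theorem fm_cases {k : ℕ} (u : FreeMonoid (Fin k)) : u = 1 ∨ ∃ i v, u = FreeMonoid.of i * v := by
  cases u using FreeMonoid.casesOn with
  | one => exact Or.inl rfl
  | of_mul x xs => exact Or.inr ⟨x, xs, rfl⟩

theorem fm_inj {k : ℕ} {i j : Fin k} {u v : FreeMonoid (Fin k)}
    (h : FreeMonoid.of i * u = FreeMonoid.of j * v) : i = j ∧ u = v := by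
  have : (i :: u.toList) = (j :: v.toList) := h
  exact ⟨(List.cons.inj this).1, (List.cons.inj this).2⟩

theorem garside_words {k N : ℕ} (IH : ∀ (i : Fin k) (x : BM k) (j : Fin k) (y : BM k), len x < N →
    gs i * x = gs j * y → Q i x j y) {u v : FreeMonoid (Fin k)} (h : ConGen.Rel (BR k) u v) :
    u.length ≤ N + 1 → ∀ i a j b, u = FreeMonoid.of i * a → v = FreeMonoid.of j * b →
      Q i (pmk a) j (pmk b) := by
  induction h with
  | of u v h =>
    intro hl i a j b h1 h2
    cases h with
    | far i' j' f =>
      obtain ⟨rfl, rfl⟩ := fm_inj h1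
      obtain ⟨rfl, rfl⟩ := fm_inj h2
      refine ⟨fun e => ?_, fun _ => ⟨1, by simp [pmk_of], by simp [pmk_of]⟩, fun f' => ?_⟩
      · rw [e]
      · unfold Far at f; unfold Adj at f'; omega
    | adj i' j' f =>
      obtain ⟨rfl, rfl⟩ := fm_inj h1
      obtain ⟨rfl, rfl⟩ := fm_inj h2
      refine ⟨fun e => ?_, fun f' => ?_, fun _ => ⟨1, by simp [pmk_of, pmk_mul], by simp [pmk_of, pmk_mul]⟩⟩
      · rw [e]
      · unfold Far at f'; unfold Adj at f; omega
  | refl u =>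
    intro hl i a j b h1 h2
    rw [h1] at h2
    obtain ⟨rfl, rfl⟩ := fm_inj h2
    exact Q.refl _ _
  | symm h ih =>
    intro hl i a j b h1 h2
    exact (ih (by rw [len_pmk_eq h]; exact hl) j b i a h2 h1).symm
  | trans h h' ih ih' =>
    rename_i x y z
    intro hl i a j b h1 h2
    have ly := len_pmk_eq h
    rcases fm_cases y with rfl | ⟨m, c, rfl⟩
    · rw [h1] at ly; simp at ly
    · have q1 := ih hl i a m c h1 rfl
      have q2 := ih' (by omega) m c j b rfl h2
      refine comp IH ?_ q1 q2
      rw [h1] at hl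
      simp at hl
      rw [len_pmk]; omega
  | mul h h' ih ih' =>
    rename_i w x y z
    intro hl i a j b h1 h2
    have l1 := len_pmk_eq h
    have l2 := len_pmk_eq h'
    simp at hl
    rcases fm_cases w with rfl | ⟨i', w, rfl⟩
    · have : x = 1 := by
        rcases fm_cases x with rfl | ⟨i', x, rfl⟩
        · rfl
        · simp at l1; omega
      subst this
      rw [one_mul] at h1 h2
      exact ih' (by omega) i a j b h1 h2
    · rcases fm_cases x with rfl | ⟨j', x, rfl⟩
      · simp at l1
      · rw [mul_assoc] at h1 h2
        obtain ⟨rfl, rfl⟩ := fm_inj h1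
        obtain ⟨rfl, rfl⟩ := fm_inj h2
        rw [pmk_mul, pmk_mul, ← pmk_eq.2 h']
        exact (ih (by omega) i' w j' x rfl rfl).mul _

theorem pmk_surj {k : ℕ} (x : BM k) : ∃ u, pmk u = x := PresentedMonoid.surjective_mk x

theorem garside {k : ℕ} : ∀ (N : ℕ) (i : Fin k) (x : BM k) (j : Fin k) (y : BM k), len x < N →
    gs i * x = gs j * y → Q i x j y := by
  intro N
  induction N with
  | zero => intro i x j y h; omega
  | succ N ih =>
    intro i x j y h e
    obtain ⟨a, rfl⟩ := pmk_surj x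
    obtain ⟨b, rfl⟩ := pmk_surj y
    rw [len_pmk] at h
    rw [← pmk_of, ← pmk_of, ← pmk_mul, ← pmk_mul, pmk_eq] at e
    exact garside_words ih e (by simp; omega) i a j b rfl rfl

theorem gars {k : ℕ} {i : Fin k} {x : BM k} {j : Fin k} {y : BM k}
    (h : gs i * x = gs j * y) : Q i x j y := garside _ i x j y (Nat.lt_succ_self _) h

/-! reversal -/

def revHom (k : ℕ) : BM k →* (BM k)ᵐᵒᵖ :=
  PresentedMonoid.lift (fun i => MulOpposite.op (gs i)) (by
    intro a b h
    cases h with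
    | far i j f => simp [← MulOpposite.op_mul, gs_far0 f]
    | adj i j f => simp [← MulOpposite.op_mul, mul_assoc, gs_adj0 f])

def rev {k : ℕ} (x : BM k) : BM k := (revHom k x).unop

@[simp] theorem rev_mul {k : ℕ} (x y : BM k) : rev (x * y) = rev y * rev x := by simp [rev]
@[simp] theorem rev_gs {k : ℕ} (i : Fin k) : rev (gs i) = gs i := by simp [rev, revHom, gs]
@[simp] theorem rev_one {k : ℕ} : rev (1 : BM k) = 1 := by simp [rev]

theorem BM_ind {k : ℕ} {P : BM k → Prop} (h1 : P 1) (hm : ∀ i x, P x → P (gs i * x)) (x : BM k) :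
    P x := by
  obtain ⟨u, rfl⟩ := pmk_surj x
  induction u using FreeMonoid.recOn with
  | one => exact h1
  | of_mul i u ih => rw [pmk_mul, pmk_of]; exact hm i _ ih

@[simp] theorem rev_rev {k : ℕ} (x : BM k) : rev (rev x) = x := by
  induction x using BM_ind with
  | h1 => simp
  | hm i x ih => simp [ih]

theorem BM_left_cancel {k : ℕ} (u : BM k) : ∀ {x y : BM k}, u * x = u * y → x = y := by
  induction u using BM_ind with
  | h1 => intro x y h; simpa using h
  | hm i u ih =>
    intro x y h
    rw [mul_assoc, mul_assoc] at h
    exact ih ((gars h).1 rfl)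

theorem BM_right_cancel {k : ℕ} (u : BM k) {x y : BM k} (h : x * u = y * u) : x = y := by
  have := congrArg rev h
  simp only [rev_mul] at this
  have := BM_left_cancel _ this
  have := congrArg rev this
  simpa using this

theorem gars_right {k : ℕ} {i : Fin k} {x : BM k} {j : Fin k} {y : BM k}
    (h : x * gs i = y * gs j) : (i = j → x = y) ∧
    (Far i j → ∃ z, x = z * gs j ∧ y = z * gs i) ∧
    (Adj i j → ∃ z, x = z * gs i * gs j ∧ y = z * gs j * gs i) := by
  have := congrArg rev h
  simp only [rev_mul, rev_gs] at this
  have q := gars this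
  have re : ∀ {a b : BM k}, rev a = b → a = rev b := by
    intro a b h; rw [← h, rev_rev]
  refine ⟨fun e => ?_, fun f => ?_, fun f => ?_⟩
  · simpa using re (q.1 e)
  · obtain ⟨z, h1, h2⟩ := q.2.1 f
    exact ⟨rev z, by simpa using re h1, by simpa using re h2⟩
  · obtain ⟨z, h1, h2⟩ := q.2.2 f
    exact ⟨rev z, by simpa using re h1, by simpa using re h2⟩

theorem finite_div {k : ℕ} (d : BM k) : {u : BM k | ∃ u', u * u' = d}.Finite := by
  apply Set.Finite.subset (s := (fun l : List (Fin k) => pmk (FreeMonoid.ofList l)) '' {l | l.length ≤ len d})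
  · apply Set.Finite.image
    exact List.finite_length_le (Fin k) (len d)
  · rintro u ⟨u', h⟩
    obtain ⟨w, rfl⟩ := pmk_surj u
    refine ⟨w.toList, ?_, by simp⟩
    have := congrArg len h
    simp [len_pmk] at this
    simp only [Set.mem_setOf_eq]
    have e : w.toList.length = w.length := rfl
    omega

end DB

set_option linter.all false

namespace DB

section central
variable {k : ℕ}

def gn (k : ℕ) (i : ℕ) : BM k := if h : i < k then gs ⟨i, h⟩ else 1

theorem gn_of (i : Fin k) : gn k i.1 = gs i := by simp [gn]

theorem gn_comm {i j : ℕ} (h : i + 2 ≤ j) : gn k i * gn k j = gn k j * gn k i := by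
  unfold gn
  split_ifs
  · exact gs_far0 (Or.inl h)
  all_goals simp

theorem gn_braid {i : ℕ} (h : i + 1 < k) :
    gn k i * (gn k (i+1) * gn k i) = gn k (i+1) * (gn k i * gn k (i+1)) := by
  unfold gn
  rw [dif_pos h, dif_pos (by omega : i < k)]
  exact gs_adj0 (Or.inl rfl)

def cp (k : ℕ) : ℕ → BM k
  | 0 => 1
  | j+1 => cp k j * gn k j

def sh (k : ℕ) : ℕ → BM k
  | 0 => 1
  | j+1 => sh k j * gn k (j+1)

theorem cp_sh : ∀ j, cp k (j+1) = gn k 0 * sh k j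
  | 0 => by simp [cp, sh]
  | j+1 => by rw [cp, cp_sh j, sh, mul_assoc]

theorem cp_comm {m : ℕ} : ∀ {j : ℕ}, j + 1 ≤ m → gn k m * cp k j = cp k j * gn k m
  | 0, _ => by simp [cp]
  | j+1, h => by
    rw [cp, ← mul_assoc, cp_comm (by omega), mul_assoc, mul_assoc, gn_comm (k := k) (i := j) (j := m) (by omega)]

theorem cp_gn {i : ℕ} : ∀ {j : ℕ}, i + 1 < j → j ≤ k → cp k j * gn k i = gn k (i+1) * cp k j
  | 0, h, _ => by omega
  | j+1, h, hk => by
    by_cases hj : j = i + 1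
    · subst hj
      have := gn_braid (k := k) (i := i) (by omega)
      rw [cp, cp, mul_assoc, mul_assoc, this, ← mul_assoc, ← cp_comm (by omega), mul_assoc,
        mul_assoc]
    · rw [cp, mul_assoc, ← gn_comm (by omega), ← mul_assoc, cp_gn (by omega) (by omega), mul_assoc]

theorem c_cp : ∀ {j : ℕ}, j + 1 ≤ k → cp k k * cp k j = sh k j * cp k k
  | 0, _ => by simp [cp, sh]
  | j+1, h => by
    rw [cp, ← mul_assoc, c_cp (by omega), mul_assoc, cp_gn (by omega) le_rfl, sh, mul_assoc]

theorem c_sq {j : ℕ} (h : k = j + 1) : cp k k ^ 2 * gn k j = gn k 0 * cp k k ^ 2 := by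
  have e : cp k k = cp k j * gn k j := by
    have : ∀ m, m = j + 1 → cp k m = cp k j * gn k j := by rintro m rfl; rfl
    exact this k h
  have e2 : cp k k = gn k 0 * sh k j := by
    have := cp_sh (k := k) j
    rw [← h] at this; exact this
  have := c_cp (k := k) (j := j) (by omega)
  calc cp k k ^ 2 * gn k j = gn k 0 * (sh k j * cp k k) * gn k j := by
        rw [pow_two]; nth_rw 1 [e2]; simp only [mul_assoc]
    _ = gn k 0 * (cp k k * (cp k j * gn k j)) := by rw [← this]; simp only [mul_assoc]
    _ = gn k 0 * cp k k ^ 2 := by rw [← e, pow_two]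

theorem c_pow {i : ℕ} : ∀ {m : ℕ}, i + m < k → cp k k ^ m * gn k i = gn k (i+m) * cp k k ^ m
  | 0, _ => by simp
  | m+1, h => by
    rw [pow_succ', mul_assoc, c_pow (by omega), ← mul_assoc, cp_gn (by omega) le_rfl, mul_assoc]
    rfl

def zz (k : ℕ) : BM k := cp k k ^ (k+1)

theorem zz_comm (i : Fin k) : zz k * gs i = gs i * zz k := by
  obtain ⟨i, hi⟩ := i
  have e0 : gs ⟨i, hi⟩ = gn k i := by simp [gn, hi]
  rw [e0]
  obtain ⟨m, hm⟩ : ∃ m, k = i + m + 1 := ⟨k - i - 1, by omega⟩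
  have e : zz k = cp k k ^ i * (cp k k ^ 2 * cp k k ^ m) := by
    unfold zz; rw [← pow_add, ← pow_add]; congr 1; omega
  have a1 := c_pow (k := k) (i := i) (m := m) (by omega)
  have a2 := c_sq (k := k) (j := i + m) hm
  have a3 := c_pow (k := k) (i := 0) (m := i) (by omega)
  rw [zero_add] at a3
  rw [e]
  calc cp k k ^ i * (cp k k ^ 2 * cp k k ^ m) * gn k i
      = cp k k ^ i * (cp k k ^ 2 * (cp k k ^ m * gn k i)) := by simp only [mul_assoc]
    _ = cp k k ^ i * (cp k k ^ 2 * gn k (i+m) * cp k k ^ m) := by rw [a1]; simp only [mul_assoc]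
    _ = cp k k ^ i * gn k 0 * (cp k k ^ 2 * cp k k ^ m) := by rw [a2]; simp only [mul_assoc]
    _ = _ := by rw [a3]; simp only [mul_assoc]

theorem zz_div (i : Fin k) : ∃ y, gs i * y = zz k := by
  obtain ⟨i, hi⟩ := i
  have e0 : gs ⟨i, hi⟩ = gn k i := by simp [gn, hi]
  rw [e0]
  obtain ⟨m, hm⟩ : ∃ m, k = i + m + 1 := ⟨k - i - 1, by omega⟩
  have e : zz k = cp k k ^ i * (cp k k * cp k k ^ (m+1)) := by
    unfold zz; rw [← pow_succ', ← pow_add]; congr 1; omega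
  have e2 : cp k k = gn k 0 * sh k (i+m) := by
    have := cp_sh (k := k) (i+m)
    rw [← hm] at this; exact this
  have a3 := c_pow (k := k) (i := 0) (m := i) (by omega)
  rw [zero_add] at a3
  refine ⟨cp k k ^ i * (sh k (i+m) * cp k k ^ (m+1)), ?_⟩
  rw [← mul_assoc, ← a3, e]
  have : cp k k * cp k k ^ (m+1) = gn k 0 * sh k (i+m) * cp k k ^ (m+1) :=
    congrArg (· * cp k k ^ (m+1)) e2
  rw [this]; simp only [mul_assoc]

theorem zz_pow_comm (N : ℕ) (x : BM k) : zz k ^ N * x = x * zz k ^ N := by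
  have h1 : ∀ x : BM k, zz k * x = x * zz k := by
    intro x
    induction x using BM_ind with
    | h1 => simp
    | hm i x ih => rw [← mul_assoc, zz_comm, mul_assoc, ih, mul_assoc]
  exact Commute.pow_left (show Commute (zz k) x from h1 x) N

theorem div_zz (b : BM k) : ∃ N b', b * b' = zz k ^ N := by
  induction b using BM_ind with
  | h1 => exact ⟨0, 1, by simp⟩
  | hm i x ih =>
    obtain ⟨N, x', h⟩ := ih
    obtain ⟨y, hy⟩ := zz_div i
    refine ⟨N+1, x' * y, ?_⟩
    calc gs i * x * (x' * y) = gs i * ((x * x') * y) := by simp only [mul_assoc]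
      _ = gs i * (y * zz k ^ N) := by rw [h, zz_pow_comm]
      _ = zz k ^ (N+1) := by rw [← mul_assoc, hy, pow_succ']

end central

/-- evaluation in the braid group -/
noncomputable def ev (n : ℕ) : BM (n-1) →* Braid n :=
  PresentedMonoid.lift (fun i => genσ n (i.1+1)) (by
    intro a b h
    cases h with
    | far i j f =>
      have := i.2
      have := j.2
      simp only [map_mul, FreeMonoid.lift_eval_of]
      rcases f with f | f
      · exact genσ_comm n _ _ (by omega)
      · exact (genσ_comm n _ _ (by omega)).symm
    | adj i j f =>
      have := i.2
      have := j.2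
      simp only [map_mul, FreeMonoid.lift_eval_of]
      rcases f with f | f
      · have := genσ_braid n (i.1+1) (by omega) (by omega)
        rw [← f, ← mul_assoc, this, mul_assoc]
      · have := genσ_braid n (j.1+1) (by omega) (by omega)
        rw [← f, ← mul_assoc, ← this, mul_assoc])

@[simp] theorem ev_gs (n : ℕ) (i : Fin (n-1)) : ev n (gs i) = genσ n (i.1+1) := by
  simp [ev, gs]

theorem braid_ind {n : ℕ} {P : Braid n → Prop} (h1 : P 1)
    (hs : ∀ i, 1 ≤ i → i < n → P (genσ n i)) (hi : ∀ i, 1 ≤ i → i < n → P (genσ n i)⁻¹)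
    (hm : ∀ x y, P x → P y → P (x * y)) (β : Braid n) : P β := by
  induction β using PresentedGroup.induction_on with
  | _ w =>
    induction w using FreeGroup.induction_on with
    | C1 => exact h1
    | of i =>
      by_cases h : 1 ≤ i ∧ i < n
      · exact hs i h.1 h.2
      · have : genσ n i = 1 := genσ_zero n i (by omega)
        show P (genσ n i)
        rw [this]; exact h1
    | inv_of i _ =>
      by_cases h : 1 ≤ i ∧ i < n
      · exact hi i h.1 h.2
      · have : genσ n i = 1 := genσ_zero n i (by omega)
        show P (genσ n i)⁻¹
        rw [this, inv_one]; exact h1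
    | mul x y hx hy => rw [map_mul]; exact hm _ _ hx hy

theorem ev_zz_comm {n : ℕ} (N : ℕ) (β : Braid n) : Commute (ev n (zz (n-1)) ^ N) β := by
  apply Commute.pow_left
  have key : ∀ i, 1 ≤ i → i < n → Commute (ev n (zz (n-1))) (genσ n i) := by
    intro i h1 h2
    have := congrArg (ev n) (zz_comm (k := n-1) ⟨i-1, by omega⟩)
    simp only [map_mul, ev_gs, Nat.sub_add_cancel h1] at this
    exact this
  induction β using braid_ind with
  | h1 => exact Commute.one_right _
  | hs i h1 h2 => exact key i h1 h2
  | hi i h1 h2 => exact (key i h1 h2).inv_right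
  | hm x y hx hy => exact hx.mul_right hy

theorem frac {n : ℕ} (β : Braid n) : ∃ N b, ev n (zz (n-1)) ^ N * β = ev n b := by
  induction β using braid_ind with
  | h1 => exact ⟨0, 1, by simp⟩
  | hs i h1 h2 =>
    refine ⟨0, gs ⟨i-1, by omega⟩, ?_⟩
    simp [Nat.sub_add_cancel h1]
  | hi i h1 h2 =>
    obtain ⟨y, hy⟩ := zz_div (k := n-1) ⟨i-1, by omega⟩
    refine ⟨1, y, ?_⟩
    rw [(ev_zz_comm 1 _).eq, pow_one, ← hy, map_mul, ev_gs]
    simp [Nat.sub_add_cancel h1]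
  | hm x y hx hy =>
    obtain ⟨N, b, h⟩ := hx
    obtain ⟨N', b', h'⟩ := hy
    refine ⟨N + N', b * b', ?_⟩
    rw [map_mul, ← h, ← h', pow_add]
    have := (ev_zz_comm N' x).eq
    simp only [mul_assoc]
    rw [← mul_assoc _ x, this, mul_assoc]

theorem frac' {n : ℕ} (β : Braid n) : ∃ u v d : BM (n-1), (∃ x, u * x = d) ∧ (∃ y, v * y = d) ∧
    (ev n u)⁻¹ * ev n v = β := by
  obtain ⟨N, b, h⟩ := frac β
  obtain ⟨N', b', h'⟩ := div_zz b
  refine ⟨zz (n-1) ^ N, b, zz (n-1) ^ (N' + N), ⟨zz (n-1) ^ N', ?_⟩, ⟨b' * zz (n-1) ^ N, ?_⟩, ?_⟩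
  · rw [← pow_add, add_comm]
  · rw [← mul_assoc, h', pow_add]
  · rw [← h, map_pow]; group

end DB

set_option linter.all false

namespace DB

/-! ### Property A -/

def olt (x y : Om) : Prop := lt 0 x.1 y.1

theorem olt_irrefl (x : Om) : ¬ olt x x := lt_irrefl 0 _
theorem olt_trans {x y z : Om} (h : olt x y) (h' : olt y z) : olt x z := lt_trans h h'

theorem rho_mono {n : ℕ} (β : Braid n) : ∀ x y : Om, olt x y ↔ olt (rho n β x) (rho n β y) := by
  induction β using braid_ind with
  | h1 => intro x y; simp
  | hs i h1 h2 =>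
    intro x y
    unfold olt
    rw [rho_gen n i h1 h2, rho_gen n i h1 h2]
    exact T_mono h1 x.2 y.2
  | hi i h1 h2 =>
    intro x y
    obtain ⟨x, rfl⟩ := (rho n (genσ n i)).surjective x
    obtain ⟨y, rfl⟩ := (rho n (genσ n i)).surjective y
    have : ∀ z, rho n (genσ n i)⁻¹ (rho n (genσ n i) z) = z := by
      intro z; rw [map_inv]; simp
    rw [this, this]
    unfold olt
    rw [rho_gen n i h1 h2, rho_gen n i h1 h2]
    exact (T_mono h1 x.2 y.2).symm
  | hm x y hx hy =>
    intro a b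
    rw [map_mul, Equiv.Perm.mul_apply, Equiv.Perm.mul_apply, ← hx, ← hy]

def ole (x y : Om) : Prop := x = y ∨ olt x y

theorem ole_trans {x y z : Om} (h : ole x y) (h' : ole y z) : ole x z := by
  rcases h with rfl | h
  · exact h'
  · rcases h' with rfl | h'
    · exact Or.inr h
    · exact Or.inr (olt_trans h h')

theorem olt_of_ole {x y z : Om} (h : ole x y) (h' : olt y z) : olt x z := by
  rcases h with rfl | h
  · exact h'
  · exact olt_trans h h'

theorem olt_of_olt_ole {x y z : Om} (h : olt x y) (h' : ole y z) : olt x z := by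
  rcases h' with rfl | h'
  · exact h
  · exact olt_trans h h'

theorem rho_mono_le {n : ℕ} (β : Braid n) {x y : Om} (h : ole x y) :
    ole (rho n β x) (rho n β y) := by
  rcases h with rfl | h
  · exact Or.inl rfl
  · exact Or.inr ((rho_mono β _ _).1 h)

/-- base points -/
def bp (i : ℕ) : Om := ⟨[i], by simp [Red]⟩

theorem rho_fix {n i j : ℕ} (h1 : 1 ≤ j) (h2 : j < n) (h : i < j) : rho n (genσ n j) (bp i) = bp i := by
  apply Subtype.ext
  rw [rho_gen n j h1 h2]
  have a1 : i ≠ j := by omega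
  have a2 : i ≠ j + 1 := by omega
  simp [bp, T, θ, L, a1, a2]

theorem rho_fix_inv {n i j : ℕ} (h1 : 1 ≤ j) (h2 : j < n) (h : i < j) :
    rho n (genσ n j)⁻¹ (bp i) = bp i := by
  rw [map_inv, Equiv.Perm.inv_eq_iff_eq, rho_fix h1 h2 h]

theorem rho_dec {n i : ℕ} (h1 : 1 ≤ i) (h2 : i < n) : olt (rho n (genσ n i) (bp i)) (bp i) := by
  unfold olt
  rw [rho_gen n i h1 h2]
  simp [bp, T, θ, L, lt, cyc]; omega

/-- words for the nonnegative cone of level i -/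
def WP (n i : ℕ) (γ : Braid n) : Prop :=
  ∃ w : List (ℕ × Bool), (∀ p ∈ w, 1 ≤ p.1 ∧ p.1 ≤ n - 1) ∧ (i, false) ∉ w ∧
    (∀ p ∈ w, i ≤ p.1) ∧ evalWord n w = γ

theorem evalWord_append (n : ℕ) (u v : List (ℕ × Bool)) :
    evalWord n (u ++ v) = evalWord n u * evalWord n v := by
  simp [evalWord]

theorem evalWord_cons (n : ℕ) (p : ℕ × Bool) (v : List (ℕ × Bool)) :
    evalWord n (p :: v) = (if p.2 then genσ n p.1 else (genσ n p.1)⁻¹) * evalWord n v := by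
  simp [evalWord]

theorem WP_one (n i : ℕ) : WP n i 1 := ⟨[], by simp, by simp, by simp, by simp [evalWord]⟩

theorem WP_mul {n i : ℕ} {x y : Braid n} (hx : WP n i x) (hy : WP n i y) : WP n i (x * y) := by
  obtain ⟨u, a1, a2, a3, rfl⟩ := hx
  obtain ⟨v, b1, b2, b3, rfl⟩ := hy
  refine ⟨u ++ v, ?_, ?_, ?_, evalWord_append n u v⟩
  · intro p hp; rcases List.mem_append.1 hp with h | h
    · exact a1 p h
    · exact b1 p h
  · simp [a2, b2]
  · intro p hp; rcases List.mem_append.1 hp with h | h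
    · exact a3 p h
    · exact b3 p h

theorem SP_mul_WP {n i : ℕ} {x y : Braid n} (hx : SigmaPositive n i x) (hy : WP n i y) :
    SigmaPositive n i (x * y) := by
  obtain ⟨u, a1, a0, a2, a3, rfl⟩ := hx
  obtain ⟨v, b1, b2, b3, rfl⟩ := hy
  refine ⟨u ++ v, ?_, ?_, ?_, ?_, evalWord_append n u v⟩
  · intro p hp; rcases List.mem_append.1 hp with h | h
    · exact a1 p h
    · exact b1 p h
  · simp [a0]
  · simp [a2, b2]
  · intro p hp; rcases List.mem_append.1 hp with h | h
    · exact a3 p h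
    · exact b3 p h

theorem WP_mul_SP {n i : ℕ} {x y : Braid n} (hx : WP n i x) (hy : SigmaPositive n i y) :
    SigmaPositive n i (x * y) := by
  obtain ⟨u, a1, a2, a3, rfl⟩ := hx
  obtain ⟨v, b1, b0, b2, b3, rfl⟩ := hy
  refine ⟨u ++ v, ?_, ?_, ?_, ?_, evalWord_append n u v⟩
  · intro p hp; rcases List.mem_append.1 hp with h | h
    · exact a1 p h
    · exact b1 p h
  · simp [b0]
  · simp [a2, b2]
  · intro p hp; rcases List.mem_append.1 hp with h | h
    · exact a3 p h
    · exact b3 p h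

theorem SP_WP {n i : ℕ} {x : Braid n} (hx : SigmaPositive n i x) : WP n i x := by
  obtain ⟨u, a1, a0, a2, a3, rfl⟩ := hx
  exact ⟨u, a1, a2, a3, rfl⟩

theorem SP_WP_lt {n i j : ℕ} (hij : i < j) {x : Braid n} (hx : SigmaPositive n j x) : WP n i x := by
  obtain ⟨u, a1, a0, a2, a3, rfl⟩ := hx
  refine ⟨u, a1, fun h => ?_, fun p hp => (hij.le.trans (a3 p hp)), rfl⟩
  have := a3 _ h
  simp at this; omega

theorem SP_gen {n i : ℕ} (h1 : 1 ≤ i) (h2 : i < n) : SigmaPositive n i (genσ n i) :=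
  ⟨[(i, true)], by simp; omega, by simp, by simp, by simp, by simp [evalWord]⟩

theorem WP_gen {n i j : ℕ} (h1 : 1 ≤ j) (h2 : j < n) (h : i ≤ j) : WP n i (genσ n j) :=
  ⟨[(j, true)], by simp; omega, by simp, by simp; omega, by simp [evalWord]⟩

theorem WP_gen_inv {n i j : ℕ} (h1 : 1 ≤ j) (h2 : j < n) (h : i < j) : WP n i (genσ n j)⁻¹ :=
  ⟨[(j, false)], by simp; omega, by simp; omega, by simp; omega, by simp [evalWord]⟩

theorem word_fix {n i : ℕ} {x : Braid n} (hx : WP n (i+1) x) : rho n x (bp i) = bp i := by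
  obtain ⟨w, a1, a2, a3, rfl⟩ := hx
  clear a2
  induction w with
  | nil => simp [evalWord]
  | cons p w ih =>
    rw [evalWord_cons, map_mul, Equiv.Perm.mul_apply,
      ih (fun p hp => a1 p (List.mem_cons_of_mem _ hp)) (fun p hp => a3 p (List.mem_cons_of_mem _ hp))]
    have b1 := a1 p (List.mem_cons_self)
    have b3 := a3 p (List.mem_cons_self)
    split_ifs
    · exact rho_fix (by omega) (by omega) (by omega)
    · exact rho_fix_inv (by omega) (by omega) (by omega)

theorem word_le {n i : ℕ} : ∀ w : List (ℕ × Bool), (∀ p ∈ w, 1 ≤ p.1 ∧ p.1 ≤ n - 1) →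
    (i, false) ∉ w → (∀ p ∈ w, i ≤ p.1) → ole (rho n (evalWord n w) (bp i)) (bp i) ∧
    ((i, true) ∈ w → olt (rho n (evalWord n w) (bp i)) (bp i)) := by
  intro w
  induction w with
  | nil => intros; exact ⟨Or.inl (by simp [evalWord]), by simp⟩
  | cons p w ih =>
    intro a1 a2 a3
    have b1 := a1 p (List.mem_cons_self)
    have b3 := a3 p (List.mem_cons_self)
    obtain ⟨h1, h2⟩ := ih (fun p hp => a1 p (List.mem_cons_of_mem _ hp))
      (fun h => a2 (List.mem_cons_of_mem _ h)) (fun p hp => a3 p (List.mem_cons_of_mem _ hp))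
    rw [evalWord_cons, map_mul, Equiv.Perm.mul_apply]
    obtain ⟨j, b⟩ := p
    simp only at *
    by_cases hj : j = i
    · subst hj
      cases b
      · simp at a2
      · simp only [if_true]
        have := olt_of_ole (rho_mono_le (genσ n j) h1) (rho_dec (by omega) (by omega))
        exact ⟨Or.inr this, fun _ => this⟩
    · have e : rho n (if b then genσ n j else (genσ n j)⁻¹) (bp i) = bp i := by
        split_ifs
        · exact rho_fix (by omega) (by omega) (by omega)
        · exact rho_fix_inv (by omega) (by omega) (by omega)
      constructor
      · have := rho_mono_le (if b then genσ n j else (genσ n j)⁻¹) h1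
        rw [e] at this; exact this
      · intro hm
        have hm' : (i, true) ∈ w := by
          rcases List.mem_cons.1 hm with h | h
          · cases h; exact absurd rfl hj
          · exact h
        have := (rho_mono (if b then genσ n j else (genσ n j)⁻¹) _ _).1 (h2 hm')
        rw [e] at this; exact this

theorem SP_olt {n i : ℕ} {x : Braid n} (hx : SigmaPositive n i x) : olt (rho n x (bp i)) (bp i) := by
  obtain ⟨u, a1, a0, a2, a3, rfl⟩ := hx
  exact (word_le u a1 a2 a3).2 a0

theorem WP_ole {n i : ℕ} {x : Braid n} (hx : WP n i x) : ole (rho n x (bp i)) (bp i) := by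
  obtain ⟨u, a1, a2, a3, rfl⟩ := hx
  exact (word_le u a1 a2 a3).1

theorem SP_ne_one {n i : ℕ} {x : Braid n} (hx : SigmaPositive n i x) : x ≠ 1 := by
  rintro rfl
  have := SP_olt hx
  simp at this
  exact olt_irrefl _ this

/-! ### graphs -/

open Relation

section graph
variable {V : Type} 

def St (E : ℕ → V → V → Prop) (k : ℕ) (u v : V) : Prop :=
  E k u v ∨ ∃ j, k < j ∧ (E j u v ∨ E j v u)

def CS (E : ℕ → V → V → Prop) (k : ℕ) (u v : V) : Prop := ∃ j, k ≤ j ∧ (E j u v ∨ E j v u)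

abbrev PP (E : ℕ → V → V → Prop) (k : ℕ) := ReflTransGen (St E k)
abbrev CC (E : ℕ → V → V → Prop) (k : ℕ) := ReflTransGen (CS E k)

structure Gr (E : ℕ → V → V → Prop) : Prop where
  fn : ∀ {i u v w}, E i u v → E i u w → v = w
  upc : ∀ {i j u v w}, i + 2 ≤ j → E i u v → E j u w → ∃ t, E j v t ∧ E i w t
  upb : ∀ {i u v w}, E i u v → E (i+1) u w → ∃ v1 w1 t, E (i+1) v v1 ∧ E i v1 t ∧ E i w w1 ∧ E (i+1) w1 t
  mix : ∀ {i j u v w}, i + 2 ≤ j → E j u v → E i v w → ∃ v', E i u v' ∧ E j v' w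
  acyc : ∀ {k u v}, E k u v → PP E k v u → False

variable {E : ℕ → V → V → Prop}

theorem push (g : Gr E) {k : ℕ} {u w : V} (h : PP E (k+1) u w) : ∀ v, E k u v →
    ∃ w', E k w w' ∧ PP E k v w' := by
  induction h using ReflTransGen.head_induction_on with
  | refl => intro v h; exact ⟨v, h, ReflTransGen.refl⟩
  | head h1 h2 ih =>
    intro v hv
    rcases h1 with h1 | ⟨j, hj, h1 | h1⟩
    · obtain ⟨v1, w1, t, e1, e2, e3, e4⟩ := g.upb hv h1
      obtain ⟨w', hw, hp⟩ := ih w1 e3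
      refine ⟨w', hw, ?_⟩
      refine ReflTransGen.head (Or.inr ⟨k+1, by omega, Or.inl e1⟩) ?_
      refine ReflTransGen.head (Or.inl e2) ?_
      exact ReflTransGen.head (Or.inr ⟨k+1, by omega, Or.inr e4⟩) hp
    · obtain ⟨t, e1, e2⟩ := g.upc (by omega) hv h1
      obtain ⟨w', hw, hp⟩ := ih t e2
      exact ⟨w', hw, ReflTransGen.head (Or.inr ⟨j, by omega, Or.inl e1⟩) hp⟩
    · obtain ⟨t, e1, e2⟩ := g.mix (by omega) h1 hv
      obtain ⟨w', hw, hp⟩ := ih t e1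
      exact ⟨w', hw, ReflTransGen.head (Or.inr ⟨j, by omega, Or.inr e2⟩) hp⟩

theorem CS_symm {k : ℕ} {u v : V} (h : CS E k u v) : CS E k v u := by
  obtain ⟨j, hj, h⟩ := h; exact ⟨j, hj, h.symm⟩

theorem CC_symm {k : ℕ} {u v : V} (h : CC E k u v) : CC E k v u := by
  induction h with
  | refl => exact ReflTransGen.refl
  | tail h1 h2 ih => exact ReflTransGen.head (CS_symm h2) ih

theorem CC_PP {k : ℕ} {u v : V} (h : CC E (k+1) u v) : PP E k u v := by
  refine ReflTransGen.lift id ?_ _ _ h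
  rintro a b ⟨j, hj, h⟩
  exact Or.inr ⟨j, by omega, h⟩

theorem PP_split {k : ℕ} {m v : V} (h : PP E k m v) :
    CC E (k+1) m v ∨ ∃ m1 v1, CC E (k+1) m m1 ∧ E k m1 v1 ∧ PP E k v1 v := by
  induction h using ReflTransGen.head_induction_on with
  | refl => exact Or.inl ReflTransGen.refl
  | head h1 h2 ih =>
    rename_i a b
    rcases h1 with h1 | ⟨j, hj, h1⟩
    · exact Or.inr ⟨_, _, ReflTransGen.refl, h1, h2⟩
    · have : CS E (k+1) a b := ⟨j, by omega, h1⟩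
      rcases ih with h | ⟨m1, v1, a1, a2, a3⟩
      · exact Or.inl (ReflTransGen.head this h)
      · exact Or.inr ⟨m1, v1, ReflTransGen.head this a1, a2, a3⟩

theorem bottom [Finite V] (g : Gr E) {k : ℕ}
    (cl : ∀ u v, CC E (k+1) u v → PP E (k+1) u v ∨ PP E (k+1) v u) :
    ∀ m v w, PP E k m v → PP E k m w → PP E k v w ∨ PP E k w v := by
  let R : V → V → Prop := fun v m => ∃ a b, PP E k m a ∧ E k a b ∧ PP E k b v
  have wf : WellFounded R := by
    haveI : IsTrans V R := ⟨by
      rintro x y z ⟨a, b, h1, h2, h3⟩ ⟨a', b', h1', h2', h3'⟩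
      exact ⟨a', b', h1', h2', h3'.trans (h1.trans (ReflTransGen.head (Or.inl h2) h3))⟩⟩
    haveI : Std.Irrefl R := ⟨by
      rintro x ⟨a, b, h1, h2, h3⟩
      exact g.acyc h2 (h3.trans h1)⟩
    exact Finite.wellFounded_of_trans_of_irrefl R
  intro m
  induction m using wf.induction with
  | _ m ih =>
    intro v w hv hw
    rcases PP_split hv with h | ⟨m1, v1, a1, a2, a3⟩
    · left; exact (CC_PP (CC_symm h)).trans hw
    rcases PP_split hw with h | ⟨m2, v2, b1, b2, b3⟩
    · right; exact (CC_PP (CC_symm h)).trans hv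
    rcases cl m1 m2 ((CC_symm a1).trans b1) with h | h
    · obtain ⟨w', c1, c2⟩ := push g h v1 a2
      rw [g.fn c1 b2] at c2
      exact ih v1 ⟨m1, v1, CC_PP a1, a2, ReflTransGen.refl⟩ v w a3 (c2.trans b3)
    · obtain ⟨w', c1, c2⟩ := push g h v2 b2
      rw [g.fn c1 a2] at c2
      exact ih v2 ⟨m2, v2, CC_PP b1, b2, ReflTransGen.refl⟩ v w (c2.trans a3) b3

theorem St_swap {k : ℕ} {u v : V} : St (fun i a b => E i b a) k u v ↔ St E k v u := by
  unfold St
  constructor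
  · rintro (h | ⟨j, h, h'⟩)
    · exact Or.inl h
    · exact Or.inr ⟨j, h, h'⟩
  · rintro (h | ⟨j, h, h'⟩)
    · exact Or.inl h
    · exact Or.inr ⟨j, h, h'⟩

theorem PP_swap {k : ℕ} {u v : V} : PP (fun i a b => E i b a) k u v ↔ PP E k v u := by
  have : St (fun i a b => E i b a) k = Function.swap (St E k) := by
    ext a b; exact St_swap
  unfold PP
  rw [this, reflTransGen_swap]

theorem CC_swap {k : ℕ} {u v : V} : CC (fun i a b => E i b a) k u v ↔ CC E k u v := by
  have : CS (fun i a b => E i b a) k = CS E k := by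
    ext a b; unfold CS; simp only [or_comm]
  unfold CC
  rw [this]

theorem claim [Finite V] (g : Gr E) (g' : Gr (fun i a b => E i b a)) (K : ℕ)
    (hK : ∀ i u v, E i u v → i < K) : ∀ m k, K ≤ m + k → 
    ∀ u v, CC E k u v → PP E k u v ∨ PP E k v u := by
  intro m
  induction m with
  | zero =>
    intro k hk u v h
    left
    refine ReflTransGen.lift id ?_ _ _ h
    rintro a b ⟨j, hj, h | h⟩ <;> have := hK _ _ _ h <;> omega
  | succ m ih =>
    intro k hk u v h
    have ih' := ih (k+1) (by omega)
    have bot := bottom g ih'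
    have top := bottom g' (k := k) (by
      intro u v h
      exact (ih' u v (CC_swap.1 h)).symm.imp PP_swap.2 PP_swap.2)
    simp only [PP_swap] at top
    induction h with
    | refl => exact Or.inl ReflTransGen.refl
    | tail h1 h2 ih2 =>
      rename_i b c
      have comp : PP E k b c ∨ PP E k c b := by
        obtain ⟨j, hj, h2⟩ := h2
        by_cases e : j = k
        · subst e
          rcases h2 with h2 | h2
          · exact Or.inl (ReflTransGen.single (Or.inl h2))
          · exact Or.inr (ReflTransGen.single (Or.inl h2))
        · exact Or.inl (ReflTransGen.single (Or.inr ⟨j, by omega, h2⟩))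
      rcases ih2 with a | a <;> rcases comp with b | b
      · exact Or.inl (a.trans b)
      · exact (top _ _ _ a b).symm
      · exact bot _ _ _ a b
      · exact Or.inr (b.trans a)

end graph

/-! ### Property C -/

section propC
variable {n : ℕ}

def DV (d : BM (n-1)) := {u : BM (n-1) // ∃ x, u * x = d}

def DE (d : BM (n-1)) (i : ℕ) (u v : DV d) : Prop := ∃ h : i < n - 1, v.1 = u.1 * gs ⟨i, h⟩

instance (d : BM (n-1)) : Finite (DV d) := (finite_div d).to_subtype

theorem DE_eval {d : BM (n-1)} {i : ℕ} {u v : DV d} (h : DE d i u v) :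
    i + 1 < n ∧ (ev n u.1)⁻¹ * ev n v.1 = genσ n (i+1) := by
  obtain ⟨h, e⟩ := h
  refine ⟨by omega, ?_⟩
  rw [e, map_mul, ev_gs]; simp

theorem St_eval {d : BM (n-1)} {k : ℕ} {u v : DV d} (h : St (DE d) k u v) :
    WP n (k+1) ((ev n u.1)⁻¹ * ev n v.1) := by
  rcases h with h | ⟨j, hj, h | h⟩
  · obtain ⟨h1, h2⟩ := DE_eval h
    rw [h2]; exact WP_gen (by omega) (by omega) (by omega)
  · obtain ⟨h1, h2⟩ := DE_eval h
    rw [h2]; exact WP_gen (by omega) (by omega) (by omega)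
  · obtain ⟨h1, h2⟩ := DE_eval h
    have : (ev n u.1)⁻¹ * ev n v.1 = (genσ n (j+1))⁻¹ := by rw [← h2]; group
    rw [this]; exact WP_gen_inv (by omega) (by omega) (by omega)

theorem PP_eval {d : BM (n-1)} {k : ℕ} {u v : DV d} (h : PP (DE d) k u v) :
    WP n (k+1) ((ev n u.1)⁻¹ * ev n v.1) := by
  induction h with
  | refl => simpa using WP_one n (k+1)
  | tail h1 h2 ih =>
    have := WP_mul ih (St_eval h2)
    have e : ∀ a b c : Braid n, a⁻¹ * b * (b⁻¹ * c) = a⁻¹ * c := by intros; group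
    rwa [e] at this

theorem DE_acyc {d : BM (n-1)} {k : ℕ} {u v : DV d} (h : DE d k u v) (h' : PP (DE d) k v u) :
    False := by
  obtain ⟨h1, h2⟩ := DE_eval h
  have a := PP_eval h'
  have b := SP_gen (n := n) (i := k+1) (by omega) h1
  rw [← h2] at b
  apply SP_ne_one (SP_mul_WP b a)
  group

theorem dv_pre {d : BM (n-1)} (u : DV d) {a b : BM (n-1)} (h : u.1 = a * b) : ∃ x, a * x = d := by
  obtain ⟨x, hx⟩ := u.2
  exact ⟨b * x, by rw [← mul_assoc, ← h, hx]⟩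

theorem DE_gr (d : BM (n-1)) : Gr (DE d) where
  fn := by
    rintro i u v w ⟨h, e⟩ ⟨h', e'⟩
    exact Subtype.ext (by rw [e, e'])
  upc := by
    rintro i j u v w hij ⟨h, e⟩ ⟨h', e'⟩
    obtain ⟨x, hx⟩ := v.2
    obtain ⟨y, hy⟩ := w.2
    have : u.1 * (gs ⟨i, h⟩ * x) = u.1 * (gs ⟨j, h'⟩ * y) := by
      rw [← mul_assoc, ← mul_assoc, ← e, ← e', hx, hy]
    obtain ⟨z, z1, z2⟩ := (gars (BM_left_cancel _ this)).2.1 (Or.inl hij)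
    refine ⟨⟨v.1 * gs ⟨j, h'⟩, z, ?_⟩, ⟨h', rfl⟩, ⟨h, ?_⟩⟩
    · rw [mul_assoc, ← z1, hx]
    · show v.1 * gs ⟨j, h'⟩ = _
      rw [e, e', mul_assoc, mul_assoc, gs_far0 (Or.inl hij)]
  upb := by
    rintro i u v w ⟨h, e⟩ ⟨h', e'⟩
    obtain ⟨x, hx⟩ := v.2
    obtain ⟨y, hy⟩ := w.2
    have : u.1 * (gs ⟨i, h⟩ * x) = u.1 * (gs ⟨i+1, h'⟩ * y) := by
      rw [← mul_assoc, ← mul_assoc, ← e, ← e', hx, hy]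
    obtain ⟨z, z1, z2⟩ := (gars (BM_left_cancel _ this)).2.2 (Or.inl rfl)
    refine ⟨⟨v.1 * gs ⟨i+1, h'⟩, gs ⟨i, h⟩ * z, ?_⟩, ⟨w.1 * gs ⟨i, h⟩, gs ⟨i+1, h'⟩ * z, ?_⟩,
      ⟨v.1 * gs ⟨i+1, h'⟩ * gs ⟨i, h⟩, z, ?_⟩, ⟨h', rfl⟩, ⟨h, rfl⟩, ⟨h, rfl⟩, ⟨h', ?_⟩⟩
    · rw [mul_assoc, ← z1, hx]
    · rw [mul_assoc, ← z2, hy]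
    · rw [mul_assoc, mul_assoc, ← z1, hx]
    · show v.1 * gs ⟨i+1, h'⟩ * gs ⟨i, h⟩ = w.1 * gs ⟨i, h⟩ * gs ⟨i+1, h'⟩
      rw [e, e']
      simp only [mul_assoc]
      rw [gs_adj0 (Or.inl rfl)]
  mix := by
    rintro i j u v w hij ⟨h, e⟩ ⟨h', e'⟩
    have c : w.1 = u.1 * gs ⟨i, h'⟩ * gs ⟨j, h⟩ := by
      rw [e', e, mul_assoc, mul_assoc, gs_far0 (Or.inr hij)]
    exact ⟨⟨u.1 * gs ⟨i, h'⟩, dv_pre w c⟩, ⟨h', rfl⟩, ⟨h, c⟩⟩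
  acyc := DE_acyc

theorem DE_gr' (d : BM (n-1)) : Gr (fun i a b => DE d i b a) where
  fn := by
    rintro i u v w ⟨h, e⟩ ⟨h', e'⟩
    exact Subtype.ext (BM_right_cancel _ (e.symm.trans e'))
  upc := by
    rintro i j u v w hij ⟨h, e⟩ ⟨h', e'⟩
    obtain ⟨z, z1, z2⟩ := (gars_right (e.symm.trans e')).2.1 (Or.inl hij)
    exact ⟨⟨z, dv_pre v z1⟩, ⟨h', z1⟩, ⟨h, z2⟩⟩
  upb := by
    rintro i u v w ⟨h, e⟩ ⟨h', e'⟩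
    obtain ⟨z, z1, z2⟩ := (gars_right (e.symm.trans e')).2.2 (Or.inl rfl)
    have y1 : v.1 = z * (gs ⟨i, h⟩ * gs ⟨i+1, h'⟩) := by rw [z1, mul_assoc]
    exact ⟨⟨z * gs ⟨i, h⟩, dv_pre v z1⟩, ⟨z * gs ⟨i+1, h'⟩, dv_pre w z2⟩, ⟨z, dv_pre v y1⟩,
      ⟨h', z1⟩, ⟨h, rfl⟩, ⟨h, z2⟩, ⟨h', rfl⟩⟩
  mix := by
    rintro i j u v w hij ⟨h, e⟩ ⟨h', e'⟩
    have c : u.1 = w.1 * gs ⟨j, h⟩ * gs ⟨i, h'⟩ := by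
      rw [e, e', mul_assoc, mul_assoc, gs_far0 (Or.inl hij)]
    exact ⟨⟨w.1 * gs ⟨j, h⟩, dv_pre u c⟩, ⟨h', c⟩, ⟨h, rfl⟩⟩
  acyc := by
    intro k u v h h'
    rw [PP_swap] at h'
    exact DE_acyc h h'

theorem dv_conn {d : BM (n-1)} : ∀ (x : BM (n-1)) (u v : DV d), v.1 = u.1 * x → CC (DE d) 0 u v := by
  intro x
  induction x using BM_ind with
  | h1 => intro u v h; rw [Subtype.ext (h.trans (mul_one _))]
  | hm i x ih =>
    intro u v h
    have h2 : v.1 = (u.1 * gs i) * x := by rw [h, mul_assoc]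
    refine ReflTransGen.head ?_ (ih ⟨u.1 * gs i, dv_pre v h2⟩ v h2)
    exact ⟨i.1, by omega, Or.inl ⟨i.2, rfl⟩⟩

theorem PP_cases {d : BM (n-1)} {k : ℕ} {u v : DV d} (h : PP (DE d) k u v) :
    (k + 1 < n ∧ SigmaPositive n (k+1) ((ev n u.1)⁻¹ * ev n v.1)) ∨ CC (DE d) (k+1) u v := by
  rcases PP_split h with h | ⟨m1, v1, a1, a2, a3⟩
  · exact Or.inr h
  · left
    obtain ⟨h1, h2⟩ := DE_eval a2
    have b := SP_gen (n := n) (i := k+1) (by omega) h1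
    rw [← h2] at b
    have := SP_mul_WP (WP_mul_SP (PP_eval (CC_PP a1)) b) (PP_eval a3)
    refine ⟨h1, ?_⟩
    have e : ∀ a b c d : Braid n, a⁻¹ * b * (b⁻¹ * c) * (c⁻¹ * d) = a⁻¹ * d := by intros; group
    rwa [e] at this

theorem conn_tri {d : BM (n-1)} : ∀ (m k : ℕ), n ≤ m + k → ∀ (u v : DV d), CC (DE d) k u v → 
    u = v ∨ (∃ i, 1 ≤ i ∧ i ≤ n - 1 ∧ SigmaPositive n i ((ev n u.1)⁻¹ * ev n v.1)) ∨
    (∃ i, 1 ≤ i ∧ i ≤ n - 1 ∧ SigmaPositive n i ((ev n v.1)⁻¹ * ev n u.1)) := by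
  intro m
  induction m with
  | zero =>
    intro k hk u v h
    left
    induction h with
    | refl => rfl
    | tail h1 h2 ih =>
      obtain ⟨j, hj, h | h⟩ := h2
      · have := (DE_eval h).1; omega
      · have := (DE_eval h).1; omega
  | succ m ih =>
    intro k hk u v h
    rcases claim (DE_gr d) (DE_gr' d) n (fun i u v h => by have := (DE_eval h).1; omega) n k
      (by omega) u v h with h | h
    · rcases PP_cases h with ⟨h1, h2⟩ | h
      · exact Or.inr (Or.inl ⟨k+1, by omega, by omega, h2⟩)
      · exact ih (k+1) (by omega) u v h
    · rcases PP_cases h with ⟨h1, h2⟩ | h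
      · exact Or.inr (Or.inr ⟨k+1, by omega, by omega, h2⟩)
      · exact ih (k+1) (by omega) u v (CC_symm h)

theorem tricho (β : Braid n) : β = 1 ∨ (∃ i, 1 ≤ i ∧ i ≤ n - 1 ∧ SigmaPositive n i β) ∨
    (∃ i, 1 ≤ i ∧ i ≤ n - 1 ∧ SigmaPositive n i β⁻¹) := by
  obtain ⟨u, v, d, hu, hv, rfl⟩ := frac' β
  have h1 : (∃ x, 1 * x = d) := ⟨d, one_mul d⟩
  have cu := dv_conn (d := d) u ⟨1, h1⟩ ⟨u, hu⟩ (by simp)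
  have cv := dv_conn (d := d) v ⟨1, h1⟩ ⟨v, hv⟩ (by simp)
  rcases conn_tri (d := d) n 0 (by omega) ⟨u, hu⟩ ⟨v, hv⟩ ((CC_symm cu).trans cv) with h | h | h
  · left
    have : u = v := congrArg Subtype.val h
    rw [this]; simp
  · exact Or.inr (Or.inl h)
  · refine Or.inr (Or.inr ?_)
    rw [mul_inv_rev, inv_inv]; exact h

end propC

end DB

set_option linter.all false

namespace DB

variable {n : ℕ}

def dpos (n : ℕ) (x : Braid n) : Prop := ∃ i, 1 ≤ i ∧ i ≤ n - 1 ∧ SigmaPositive n i x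

theorem dlt_iff {a b : Braid n} : dehornoyLt n a b ↔ dpos n (a⁻¹ * b) := Iff.rfl

theorem dpos_mul {x y : Braid n} (hx : dpos n x) (hy : dpos n y) : dpos n (x * y) := by
  obtain ⟨i, h1, h2, h3⟩ := hx
  obtain ⟨j, g1, g2, g3⟩ := hy
  rcases lt_trichotomy i j with h | h | h
  · exact ⟨i, h1, h2, SP_mul_WP h3 (SP_WP_lt h g3)⟩
  · subst h; exact ⟨i, h1, h2, SP_mul_WP h3 (SP_WP g3)⟩
  · exact ⟨j, g1, g2, WP_mul_SP (SP_WP_lt h h3) g3⟩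

theorem dpos_ne {x : Braid n} (hx : dpos n x) : x ≠ 1 := by
  obtain ⟨i, h1, h2, h3⟩ := hx
  exact SP_ne_one h3

theorem dlt_trans {a b c : Braid n} (h : dehornoyLt n a b) (h' : dehornoyLt n b c) :
    dehornoyLt n a c := by
  rw [dlt_iff] at *
  have := dpos_mul h h'
  have e : a⁻¹ * b * (b⁻¹ * c) = a⁻¹ * c := by group
  rwa [e] at this

theorem dlt_irrefl (a : Braid n) : ¬ dehornoyLt n a a := by
  intro h
  exact dpos_ne (dlt_iff.1 h) (by simp)

theorem dlt_tri (a b : Braid n) : dehornoyLt n a b ∨ a = b ∨ dehornoyLt n b a := by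
  rcases tricho (a⁻¹ * b) with h | h | h
  · right; left; exact inv_mul_eq_one.1 h
  · left; exact h
  · right; right
    rw [mul_inv_rev, inv_inv] at h; exact h

/-- if `x` moves the point at level one weakly down ... -/
theorem dpos_of_le {x : Braid n} (h : ∀ w : Om, ole (rho n x w) w) : x = 1 ∨ dpos n x := by
  rcases tricho x with h1 | h1 | ⟨i, h1, h2, h3⟩
  · exact Or.inl h1
  · exact Or.inr h1
  · exfalso
    have a := SP_olt h3
    have b := h (rho n x⁻¹ (bp i))
    have e : rho n x (rho n x⁻¹ (bp i)) = bp i := by rw [map_inv]; simp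
    rw [e] at b
    exact olt_irrefl _ (olt_of_ole b a)

/-- normal submonoid generated by conjugates of generators -/
def NN (n : ℕ) : Submonoid (Braid n) :=
  Submonoid.closure {x | ∃ i, ∃ y : Braid n, 1 ≤ i ∧ i < n ∧ x = y * genσ n i * y⁻¹}

theorem NN_le {x : Braid n} (hx : x ∈ NN n) : ∀ w : Om, ole (rho n x w) w := by
  unfold NN at hx
  induction hx using Submonoid.closure_induction with
  | one => intro w; left; simp
  | mul x y hx hy h1 h2 =>
    intro w
    rw [map_mul, Equiv.Perm.mul_apply]
    exact ole_trans (h1 _) (h2 _)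
  | mem x hx =>
    obtain ⟨i, y, h1, h2, rfl⟩ := hx
    intro w
    rw [map_mul, map_mul, Equiv.Perm.mul_apply, Equiv.Perm.mul_apply]
    have : ole (rho n (genσ n i) (rho n y⁻¹ w)) (rho n y⁻¹ w) := by
      rcases T_le h1 (rho n y⁻¹ w).2 with h | h
      · left; apply Subtype.ext; rw [rho_gen n i h1 h2]; exact h
      · right; unfold olt; rw [rho_gen n i h1 h2]; exact h
    have t := rho_mono_le y this
    have e : rho n y (rho n y⁻¹ w) = w := by rw [map_inv]; simp
    rwa [e] at t

theorem NN_pos {x : Braid n} (hx : x ∈ NN n) : x = 1 ∨ dpos n x := dpos_of_le (NN_le hx)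

theorem NN_gen {i : ℕ} (h1 : 1 ≤ i) (h2 : i < n) : genσ n i ∈ NN n :=
  Submonoid.subset_closure ⟨i, 1, h1, h2, by simp⟩

theorem NN_conj {x : Braid n} (hx : x ∈ NN n) (y : Braid n) : y * x * y⁻¹ ∈ NN n := by
  unfold NN at hx
  induction hx using Submonoid.closure_induction with
  | one => simpa using (NN n).one_mem
  | mul a b ha hb h1 h2 =>
    have := (NN n).mul_mem h1 h2
    have e : y * a * y⁻¹ * (y * b * y⁻¹) = y * (a * b) * y⁻¹ := by group
    rwa [e] at this
  | mem a ha =>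
    obtain ⟨i, z, h1, h2, rfl⟩ := ha
    exact Submonoid.subset_closure ⟨i, y * z, h1, h2, by group⟩

def sub (x y : Braid n) : Prop := x⁻¹ * y ∈ NN n

theorem sub_refl (x : Braid n) : sub x x := by
  unfold sub; simpa using (NN n).one_mem

theorem sub_trans {x y z : Braid n} (h : sub x y) (h' : sub y z) : sub x z := by
  unfold sub at *
  have := (NN n).mul_mem h h'
  have e : x⁻¹ * y * (y⁻¹ * z) = x⁻¹ * z := by group
  rwa [e] at this

theorem sub_mul {x y z w : Braid n} (h : sub x y) (h' : sub z w) : sub (x * z) (y * w) := by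
  unfold sub at *
  have := (NN n).mul_mem (NN_conj h z⁻¹) h'
  have e : z⁻¹ * (x⁻¹ * y) * z⁻¹⁻¹ * (z⁻¹ * w) = (x * z)⁻¹ * (y * w) := by group
  rwa [e] at this

theorem one_sub {x : Braid n} (h : x ∈ NN n) : sub 1 x := by
  unfold sub; simpa using h

theorem sub_le {x y : Braid n} (h : sub x y) : x = y ∨ dehornoyLt n x y := by
  rcases NN_pos h with h | h
  · exact Or.inl (inv_mul_eq_one.1 h)
  · exact Or.inr h

theorem band_NN {i j : ℕ} (h1 : 1 ≤ i) (h2 : i < j) (h3 : j ≤ n) : band n i j ∈ NN n :=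
  Submonoid.subset_closure ⟨i, _, h1, by omega, rfl⟩

theorem dual_NN : dualMonoid n ≤ NN n := by
  unfold dualMonoid
  rw [Submonoid.closure_le]
  rintro x ⟨i, j, h1, h2, h3, rfl⟩
  exact band_NN h1 h2 h3

/-! ### band relations -/

theorem band_self (i : ℕ) : band n i (i+1) = genσ n i := by
  simp [band]

theorem band_succ {i j : ℕ} (h : i < j) : band n i (j+1) = genσ n j * band n i j * (genσ n j)⁻¹ := by
  obtain ⟨m, rfl⟩ : ∃ m, j = i + 1 + m := ⟨j - (i+1), by omega⟩
  unfold band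
  have e1 : i + 1 + m + 1 - 1 - i = m + 1 := by omega
  have e2 : i + 1 + m - 1 - i = m := by omega
  rw [e1, e2, List.range'_concat]
  simp [mul_assoc]

theorem band_gen_comm {i j l : ℕ} (h : i < j) (hl : j < l) : genσ n l * band n i j = band n i j * genσ n l := by
  induction j, h using Nat.le_induction with
  | base =>
    show _ * band n i (i+1) = band n i (i+1) * _
    rw [band_self]
    exact (genσ_comm n i l (by omega)).symm
  | succ j hj ih =>
    rw [band_succ hj]
    have a : Commute (genσ n l) (genσ n j) := (genσ_comm n j l (by omega)).symm
    have b : Commute (genσ n l) (band n i j) := ih (by omega)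
    exact ((a.mul_right b).mul_right a.inv_right)

/-- a_{jk} a_{ij} = a_{ik} a_{jk} -/
theorem band_rel1 {i j k : ℕ} (h : i < j) (h' : j < k) :
    band n j k * band n i j = band n i k * band n j k := by
  induction k, h' using Nat.le_induction with
  | base =>
    show band n j (j+1) * _ = band n i (j+1) * band n j (j+1)
    rw [band_self, band_succ h]; group
  | succ k hk ih =>
    have hk' : j < k := hk
    rw [band_succ hk', band_succ (h.trans hk')]
    have c := band_gen_comm (n := n) h hk'
    calc genσ n k * band n j k * (genσ n k)⁻¹ * band n i j
        = genσ n k * band n j k * (genσ n k)⁻¹ * (band n i j * genσ n k) * (genσ n k)⁻¹ := by group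
      _ = genσ n k * (band n j k * band n i j) * (genσ n k)⁻¹ := by rw [← c]; group
      _ = _ := by rw [ih]; group

theorem gen_braid' {i j : ℕ} (hi : 1 ≤ i) (h : i < j) (hj : j < n) :
    band n i j * genσ n j * band n i j = genσ n j * band n i j * genσ n j := by
  induction j, h using Nat.le_induction with
  | base =>
    show band n i (i+1) * genσ n (i+1) * band n i (i+1) = genσ n (i+1) * band n i (i+1) * genσ n (i+1)
    rw [band_self]
    exact genσ_braid n i hi hj
  | succ j hj' ih =>
    have hj'' : i < j := hj'
    have ih := ih (by omega)
    have c := band_gen_comm (n := n) hj'' (show j < j + 1 by omega)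
    have b := genσ_braid n j (by omega) hj
    rw [band_succ hj'']
    have e : genσ n j * band n i j * (genσ n j)⁻¹ = (band n i j)⁻¹ * genσ n j * band n i j := by
      rw [mul_inv_eq_iff_eq_mul, ← mul_right_inj (band n i j)]
      simp only [← mul_assoc, mul_inv_cancel, one_mul]
      exact ih
    rw [e]
    set a := band n i j
    set s := genσ n j
    set t := genσ n (j+1)
    have c' : t = a * t * a⁻¹ := by rw [← c]; group
    have c'' : a⁻¹ * t * a = t := by rw [mul_assoc, c]; group
    calc a⁻¹ * s * a * t * (a⁻¹ * s * a) = a⁻¹ * s * (a * t * a⁻¹) * s * a := by group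
      _ = a⁻¹ * (s * t * s) * a := by rw [← c']; group
      _ = (a⁻¹ * t * a) * (a⁻¹ * s * a) * (a⁻¹ * t * a) := by rw [b]; group
      _ = _ := by rw [c'']

theorem band_rel2 {i j k : ℕ} (hi : 1 ≤ i) (h : i < j) (h' : j < k) (hk : k ≤ n) :
    band n i j * band n i k = band n j k * band n i j := by
  induction k, h' using Nat.le_induction with
  | base =>
    show band n i j * band n i (j+1) = band n j (j+1) * _
    rw [band_self, band_succ h]
    have := gen_braid' hi h (by omega : j < n)
    simp only [← mul_assoc]
    rw [this]; group
  | succ k hk' ih =>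
    have hk'' : j < k := hk'
    rw [band_succ hk'', band_succ (h.trans hk'')]
    have c := band_gen_comm (n := n) h hk''
    have ih := ih (by omega)
    calc band n i j * (genσ n k * band n i k * (genσ n k)⁻¹)
        = (band n i j * genσ n k) * band n i k * (genσ n k)⁻¹ := by group
      _ = genσ n k * (band n i j * band n i k) * (genσ n k)⁻¹ := by rw [← c]; group
      _ = genσ n k * band n j k * (genσ n k)⁻¹ * (genσ n k * band n i j) * (genσ n k)⁻¹ := by
          rw [ih]; group
      _ = _ := by rw [c]; group

/-- symmetric bands -/
def sb (n i j : ℕ) : Braid n := band n (min i j) (max i j)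

theorem sb_comm (i j : ℕ) : sb n i j = sb n j i := by unfold sb; rw [min_comm, max_comm]

theorem sb_lt {i j : ℕ} (h : i < j) : sb n i j = band n i j := by
  unfold sb; rw [min_eq_left h.le, max_eq_right h.le]

theorem sb_gt {i j : ℕ} (h : j < i) : sb n i j = band n j i := by
  rw [sb_comm, sb_lt h]

theorem sb_NN {i j : ℕ} (hi : 1 ≤ i) (hi' : i ≤ n) (hj : 1 ≤ j) (hj' : j ≤ n) (h : i ≠ j) :
    sb n i j ∈ NN n := by
  rcases lt_or_gt_of_ne h with h | h
  · rw [sb_lt h]; exact band_NN hi h hj'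
  · rw [sb_gt h]; exact band_NN hj h hi'

theorem sub_of_eq3 {x y z : Braid n} (hx : x ∈ NN n) (hy : y ∈ NN n) (h : x * y = z * x) :
    sub z (x * y * x) ∧ sub y (x * y * x) := by
  constructor
  · rw [h]
    have := sub_mul (sub_mul (sub_refl z) (one_sub hx)) (one_sub hx)
    simpa using this
  · have := sub_mul (sub_mul (one_sub hx) (sub_refl y)) (one_sub hx)
    simpa using this

/-- triangle: two edges produce third -/
theorem sb_tri {i j k : ℕ} (hi : 1 ≤ i) (hi' : i ≤ n) (hj : 1 ≤ j) (hj' : j ≤ n)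
    (hk : 1 ≤ k) (hk' : k ≤ n) (h1 : i ≠ j) (h2 : j ≠ k) (h3 : i ≠ k) :
    sub (sb n i k) (sb n i j * sb n j k * sb n i j) := by
  have A : ∀ a b : Braid n, a ∈ NN n → b ∈ NN n → ∀ c, a * b = c * a → sub c (a * b * a) :=
    fun a b ha hb c h => (sub_of_eq3 ha hb h).1
  have B : ∀ a b : Braid n, a ∈ NN n → b ∈ NN n → ∀ c, a * b = b * c → sub c (a * b * a) := by
    intro a b ha hb c h
    rw [h]
    have := sub_mul (sub_mul (one_sub hb) (sub_refl c)) (one_sub ha)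
    simpa using this
  have C : ∀ a b : Braid n, a ∈ NN n → b ∈ NN n → ∀ c, b * a = c * b → sub c (a * b * a) := by
    intro a b ha hb c h
    rw [mul_assoc, h]
    have := sub_mul (one_sub ha) (sub_mul (sub_refl c) (one_sub hb)) 
    simpa using this
  have D : ∀ a b : Braid n, a ∈ NN n → b ∈ NN n → ∀ c, b * a = a * c → sub c (a * b * a) := by
    intro a b ha hb c h
    rw [mul_assoc, h]
    have := sub_mul (one_sub ha) (sub_mul (one_sub ha) (sub_refl c))
    simpa using this
  have na := sb_NN hi hi' hj hj' h1
  have nb := sb_NN hj hj' hk hk' h2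
  rcases lt_or_gt_of_ne h1 with a1 | a1 <;> rcases lt_or_gt_of_ne h2 with a2 | a2 <;>
    rcases lt_or_gt_of_ne h3 with a3 | a3 <;> (try omega)
  · -- i<j<k
    apply C _ _ na nb
    rw [sb_lt a1, sb_lt a2, sb_lt a3]; exact band_rel1 a1 a2
  · apply B _ _ na nb
    rw [sb_lt a1, sb_gt a2, sb_lt a3]
    exact (band_rel1 a3 a2).symm
  · apply D _ _ na nb
    rw [sb_lt a1, sb_gt a2, sb_gt a3]
    exact (band_rel1 a3 a1).symm
  · apply A _ _ na nb
    rw [sb_gt a1, sb_lt a2, sb_lt a3]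
    exact band_rel2 hj a1 a3 hk'
  · apply C _ _ na nb
    rw [sb_gt a1, sb_lt a2, sb_gt a3]
    exact band_rel2 hj a2 a3 hi'
  · apply A _ _ na nb
    rw [sb_gt a1, sb_gt a2, sb_gt a3]
    exact band_rel1 a2 a1

end DB

set_option linter.all false

namespace DB

open Ordinal Order

/-- natural sum of ordinals -/
noncomputable def nadd (a b : Ordinal.{0}) : Ordinal.{0} :=
  max (⨆ x : Set.Iio a, succ (nadd x.1 b)) (⨆ x : Set.Iio b, succ (nadd a x.1))
termination_by (a, b)
decreasing_by
  · exact Prod.Lex.left _ _ x.2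
  · exact Prod.Lex.right _ x.2

theorem nadd_le_iff {a b c : Ordinal.{0}} :
    nadd a b ≤ c ↔ (∀ a' < a, nadd a' b < c) ∧ (∀ b' < b, nadd a b' < c) := by
  rw [nadd, max_le_iff, Ordinal.iSup_le_iff, Ordinal.iSup_le_iff]
  simp [succ_le_iff]

theorem nadd_lt_left {a a' : Ordinal.{0}} (h : a' < a) (b : Ordinal.{0}) : nadd a' b < nadd a b :=
  (nadd_le_iff.1 le_rfl).1 a' h

theorem nadd_lt_right {b b' : Ordinal.{0}} (h : b' < b) (a : Ordinal.{0}) : nadd a b' < nadd a b :=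
  (nadd_le_iff.1 le_rfl).2 b' h

theorem nadd_le_nadd {a a' b b' : Ordinal.{0}} (h : a' ≤ a) (h' : b' ≤ b) : nadd a' b' ≤ nadd a b := by
  have h1 : nadd a' b' ≤ nadd a b' := by
    rcases h.eq_or_lt with rfl | h
    · exact le_rfl
    · exact (nadd_lt_left h _).le
  have h2 : nadd a b' ≤ nadd a b := by
    rcases h'.eq_or_lt with rfl | h
    · exact le_rfl
    · exact (nadd_lt_right h _).le
  exact h1.trans h2

theorem nadd_blk (d : Ordinal.{0}) (hd : ∀ a < ω ^ d, ∀ b < ω ^ d, nadd a b < ω ^ d) :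
    ∀ a b : Ordinal.{0}, ∀ (k l : ℕ) (x y : Ordinal.{0}), x < ω ^ d → y < ω ^ d →
    a = ω ^ d * k + x → b = ω ^ d * l + y → nadd a b ≤ ω ^ d * (k + l : ℕ) + nadd x y := by
  have pos : (0 : Ordinal.{0}) < ω ^ d := opow_pos _ omega0_pos
  have key : ∀ (k : ℕ) (x a' : Ordinal.{0}), x < ω ^ d → a' < ω ^ d * k + x →
      ∃ (k' : ℕ) (x' : Ordinal.{0}), x' < ω ^ d ∧ a' = ω ^ d * k' + x' ∧
      (k' < k ∨ (k' = k ∧ x' < x)) := by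
    intro k x a' hx ha
    have h1 : a' / ω ^ d < (k + 1 : ℕ) := by
      rw [← lt_mul_iff_div_lt pos.ne']
      refine ha.trans ?_
      push_cast
      rw [mul_add_one]
      exact (add_lt_add_iff_left _).2 hx
    obtain ⟨k', hk'⟩ := lt_omega0.1 (h1.trans (natCast_lt_omega0 _))
    have e : a' = ω ^ d * k' + a' % ω ^ d := by rw [← hk', div_add_mod]
    refine ⟨k', a' % ω ^ d, mod_lt _ pos.ne', e, ?_⟩
    rw [hk'] at h1
    have h1 : k' < k + 1 := by exact_mod_cast h1
    rcases Nat.lt_succ_iff_lt_or_eq.1 h1 with h | h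
    · exact Or.inl h
    · subst h
      right
      refine ⟨rfl, ?_⟩
      rw [e] at ha
      simpa using ha
  have step : ∀ (m m' : ℕ) (u v : Ordinal.{0}), m' < m → u < ω ^ d →
      ω ^ d * (m' : ℕ) + u < ω ^ d * (m : ℕ) + v := by
    intro m m' u v h hu
    calc ω ^ d * (m' : ℕ) + u < ω ^ d * (m' : ℕ) + ω ^ d := (add_lt_add_iff_left _).2 hu
      _ = ω ^ d * ((m' + 1 : ℕ)) := by push_cast; rw [mul_add_one]
      _ ≤ ω ^ d * (m : ℕ) := by
        apply mul_le_mul_right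
        exact_mod_cast h
      _ ≤ _ := le_self_add
  intro a
  induction a using WellFoundedLT.induction with
  | _ a iha =>
  intro b
  induction b using WellFoundedLT.induction with
  | _ b ihb =>
  intro k l x y hx hy ea eb
  rw [nadd_le_iff]
  constructor
  · intro a' ha'
    obtain ⟨k', x', h1, h2, h3⟩ := key k x a' hx (ea ▸ ha')
    refine (iha a' ha' b k' l x' y h1 hy h2 eb).trans_lt ?_
    rcases h3 with h3 | ⟨rfl, h3⟩
    · exact step _ _ _ _ (by omega) (hd _ h1 _ hy)
    · exact (add_lt_add_iff_left _).2 (nadd_lt_left h3 _)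
  · intro b' hb'
    obtain ⟨k', x', h1, h2, h3⟩ := key l y b' hy (eb ▸ hb')
    refine (ihb b' hb' k k' x x' hx h1 ea h2).trans_lt ?_
    rcases h3 with h3 | ⟨rfl, h3⟩
    · exact step _ _ _ _ (by omega) (hd _ hx _ h1)
    · exact (add_lt_add_iff_left _).2 (nadd_lt_right h3 _)

theorem nadd_closed (d : Ordinal.{0}) : ∀ a < ω ^ d, ∀ b < ω ^ d, nadd a b < ω ^ d := by
  induction d using Ordinal.limitRecOn with
  | zero =>
    intro a ha b hb
    rw [opow_zero, lt_one_iff_zero] at *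
    subst ha hb
    refine le_antisymm (nadd_le_iff.2 ⟨?_, ?_⟩) zero_le <;> 
    · intro x hx; exact absurd hx (not_lt_zero)
  | add_one d ih =>
    intro a ha b hb
    have pos : (0 : Ordinal.{0}) < ω ^ d := opow_pos _ omega0_pos
    rw [opow_add_one] at *
    rw [lt_mul_iff_div_lt pos.ne'] at ha hb
    obtain ⟨k, hk⟩ := lt_omega0.1 ha
    obtain ⟨l, hl⟩ := lt_omega0.1 hb
    have h1 := mod_lt a pos.ne'
    have h2 := mod_lt b pos.ne'
    refine (nadd_blk d ih a b k l _ _ h1 h2 (by rw [← hk, div_add_mod])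
      (by rw [← hl, div_add_mod])).trans_lt ?_
    calc ω ^ d * (k + l : ℕ) + nadd (a % ω ^ d) (b % ω ^ d) < ω ^ d * (k + l : ℕ) + ω ^ d := 
        (add_lt_add_iff_left _).2 (ih _ h1 _ h2)
      _ = ω ^ d * ((k + l + 1 : ℕ)) := by push_cast; rw [mul_add_one]
      _ < _ := (mul_lt_mul_iff_right₀ pos).2 (natCast_lt_omega0 _)
  | limit d hd ih =>
    intro a ha b hb
    obtain ⟨d1, h1, ha⟩ := (lt_opow_of_isSuccLimit omega0_ne_zero hd).1 ha
    obtain ⟨d2, h2, hb⟩ := (lt_opow_of_isSuccLimit omega0_ne_zero hd).1 hb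
    have m : max d1 d2 < d := max_lt h1 h2
    have := ih _ m a (ha.trans_le (opow_le_opow_right omega0_pos (le_max_left _ _))) b
      (hb.trans_le (opow_le_opow_right omega0_pos (le_max_right _ _)))
    exact this.trans_le (opow_le_opow_right omega0_pos m.le)

end DB

set_option linter.all false

namespace DB

open Ordinal Order Pointwise

variable {n : ℕ}

/-- `DD X a` : the reverse-exclusion rank of `X` is below `ω^a` -/
inductive DD : Set (Braid n) → Ordinal.{0} → Prop
  | empty (a : Ordinal.{0}) : DD ∅ a
  | mono {X Y : Set (Braid n)} {a : Ordinal.{0}} : DD X a → Y ⊆ X → DD Y a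
  | union {X Y : Set (Braid n)} {a : Ordinal.{0}} : DD X a → DD Y a → DD (X ∪ Y) a
  | single {X : Set (Braid n)} {a b : Ordinal.{0}} : b < a →
      (∀ x ∈ X, DD {y | y ∈ X ∧ ¬ sub x y} b) → DD X a

def WW (X : Set (Braid n)) (b : Ordinal.{0}) : Prop := ∀ x ∈ X, DD {y | y ∈ X ∧ ¬ sub x y} b

theorem DD_le {X : Set (Braid n)} {a b : Ordinal.{0}} (h : DD X a) (hab : a ≤ b) : DD X b := by
  induction h with
  | empty => exact DD.empty _
  | mono h1 h2 ih => exact DD.mono (ih hab) h2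
  | union h1 h2 ih1 ih2 => exact DD.union (ih1 hab) (ih2 hab)
  | single h1 h2 ih => exact DD.single (h1.trans_le hab) h2

theorem WW_DD {X : Set (Braid n)} {a b : Ordinal.{0}} (h : WW X b) (hab : b < a) : DD X a :=
  DD.single hab h

theorem WW_mono {X Y : Set (Braid n)} {b : Ordinal.{0}} (h : WW X b) (hY : Y ⊆ X) : WW Y b :=
  fun x hx => DD.mono (h x (hY hx)) (fun y hy => ⟨hY hy.1, hy.2⟩)

theorem excl_mul (X Y : Set (Braid n)) (x y : Braid n) :
    {z | z ∈ X * Y ∧ ¬ sub (x * y) z} ⊆ {z | z ∈ X ∧ ¬ sub x z} * Y ∪ X * {z | z ∈ Y ∧ ¬ sub y z} := by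
  rintro z ⟨⟨u, hu, v, hv, rfl⟩, h⟩
  by_cases h1 : sub x u
  · by_cases h2 : sub y v
    · exact absurd (sub_mul h1 h2) h
    · exact Or.inr ⟨u, hu, v, ⟨hv, h2⟩, rfl⟩
  · exact Or.inl ⟨u, ⟨hu, h1⟩, v, hv, rfl⟩

theorem DD_mul_aux : ∀ o a b : Ordinal.{0}, nadd a b = o →
    (∀ X Y : Set (Braid n), DD X a → WW Y b → DD (X * Y) (nadd a b)) ∧
    (∀ X Y : Set (Braid n), WW X a → DD Y b → DD (X * Y) (nadd a b)) := by
  intro o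
  induction o using WellFoundedLT.induction with
  | _ o ih =>
  have comb : ∀ c d, nadd c d < o → ∀ X Y : Set (Braid n), WW X c → WW Y d →
      WW (X * Y) (nadd c d) := by
    intro c d h X Y hX hY z hz
    obtain ⟨x, hx, y, hy, rfl⟩ := hz
    refine DD.mono ?_ (excl_mul X Y x y)
    exact DD.union ((ih _ h c d rfl).1 _ _ (hX x hx) hY) ((ih _ h c d rfl).2 _ _ hX (hY y hy))
  intro a b hab
  constructor
  · intro X Y hX hY
    induction hX with
    | empty => rw [Set.empty_mul]; exact DD.empty _
    | mono h1 h2 ih1 => exact DD.mono (ih1 hab) (Set.mul_subset_mul_right h2)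
    | union h1 h2 ih1 ih2 => rw [Set.union_mul]; exact DD.union (ih1 hab) (ih2 hab)
    | single h1 h2 ih1 =>
      have := nadd_lt_left h1 b
      exact DD.single this (comb _ _ (hab ▸ this) _ _ h2 hY)
  · intro X Y hX hY
    induction hY with
    | empty => rw [Set.mul_empty]; exact DD.empty _
    | mono h1 h2 ih1 => exact DD.mono (ih1 hab) (Set.mul_subset_mul_left h2)
    | union h1 h2 ih1 ih2 => rw [Set.mul_union]; exact DD.union (ih1 hab) (ih2 hab)
    | single h1 h2 ih1 =>
      have := nadd_lt_right h1 a
      exact DD.single this (comb _ _ (hab ▸ this) _ _ hX h2)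

theorem WW_mul {c d : Ordinal.{0}} {X Y : Set (Braid n)} (hX : WW X c) (hY : WW Y d) :
    WW (X * Y) (nadd c d) := by
  intro z hz
  obtain ⟨x, hx, y, hy, rfl⟩ := hz
  refine DD.mono ?_ (excl_mul X Y x y)
  exact DD.union ((DD_mul_aux _ c d rfl).1 _ _ (hX x hx) hY) ((DD_mul_aux _ c d rfl).2 _ _ hX (hY y hy))

theorem DD_mul {A : Ordinal.{0}} (hA : ∀ a < A, ∀ b < A, nadd a b < A) {X Y : Set (Braid n)}
    (hX : DD X A) (hY : DD Y A) : DD (X * Y) A := by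
  induction hX with
  | empty => rw [Set.empty_mul]; exact DD.empty _
  | mono h1 h2 ih1 => exact DD.mono (ih1 hA hY) (Set.mul_subset_mul_right h2)
  | union h1 h2 ih1 ih2 => rw [Set.union_mul]; exact DD.union (ih1 hA hY) (ih2 hA hY)
  | single h1 h2 ih1 =>
    clear ih1
    induction hY with
    | empty => rw [Set.mul_empty]; exact DD.empty _
    | mono h3 h4 ih1 => exact DD.mono (ih1 h1 hA) (Set.mul_subset_mul_left h4)
    | union h3 h4 ih1 ih2 => rw [Set.mul_union]; exact DD.union (ih1 h1 hA) (ih2 h1 hA)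
    | single h3 h4 ih1 => exact DD.single (hA _ h1 _ h3) (WW_mul h2 h4)

theorem DD_pow {A : Ordinal.{0}} (h0 : 0 < A) (hA : ∀ a < A, ∀ b < A, nadd a b < A) {X : Set (Braid n)}
    (hX : DD X A) (m : ℕ) : DD (X ^ m) A := by
  induction m with
  | zero =>
    rw [pow_zero]
    refine DD.single h0 ?_
    intro x hx
    refine DD.mono (DD.empty _) ?_
    rintro y ⟨hy, h⟩
    rw [Set.mem_one] at hx hy
    subst hx hy
    exact (h (sub_refl _)).elim
  | succ m ih => rw [pow_succ]; exact DD_mul hA ih hX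

/-! ### ranks -/

def RR (X : Set (Braid n)) (x y : Braid n) : Prop := x ∈ X ∧ y ∈ X ∧ dehornoyLt n x y

def Real' (X : Set (Braid n)) (a : Ordinal.{0}) : Prop :=
  ∃ f : Braid n → Ordinal.{0}, (∀ x ∈ X, ∀ y ∈ X, dehornoyLt n x y → f x < f y) ∧
    ∃ c < ω ^ a, ∀ x ∈ X, f x < c

theorem real_single {X : Set (Braid n)} {b : Ordinal.{0}}
    (h : ∀ x ∈ X, Real' {y | y ∈ X ∧ ¬ sub x y} b) :
    ∃ f : Braid n → Ordinal.{0}, (∀ x ∈ X, ∀ y ∈ X, dehornoyLt n x y → f x < f y) ∧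
    ∀ x ∈ X, f x < ω ^ b := by
  have seg : ∀ x ∈ X, ∀ y ∈ X, dehornoyLt n y x → y ∈ {y | y ∈ X ∧ ¬ sub x y} := by
    intro x hx y hy hyx
    refine ⟨hy, fun hs => ?_⟩
    rcases sub_le hs with rfl | h'
    · exact dlt_irrefl _ hyx
    · exact dlt_irrefl _ (dlt_trans h' hyx)
  have wf : WellFounded (RR X) := by
    constructor
    intro x
    constructor
    rintro y ⟨hy, hx, hyx⟩
    obtain ⟨f, hf, c, hc, hfc⟩ := h x hx
    have : ∀ o, ∀ y, y ∈ X → dehornoyLt n y x → f y = o → Acc (RR X) y := by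
      intro o
      induction o using WellFoundedLT.induction with
      | _ o ih =>
      intro y hy hyx ho
      constructor
      rintro z ⟨hz, _, hzy⟩
      have hzx := dlt_trans hzy hyx
      exact ih _ (ho ▸ hf z (seg x hx z hz hzx) y (seg x hx y hy hyx) hzy) z hz hzx rfl
    exact this _ y hy hyx rfl
  haveI : IsWellFounded _ (RR X) := ⟨wf⟩
  refine ⟨IsWellFounded.rank (RR X), fun x hx y hy hxy => IsWellFounded.rank_lt_of_rel ⟨hx, hy, hxy⟩, ?_⟩
  intro x hx
  obtain ⟨f, hf, c, hc, hfc⟩ := h x hx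
  have : ∀ y, y ∈ X → dehornoyLt n y x → IsWellFounded.rank (RR X) y ≤ f y := by
    intro y
    induction y using wf.induction with
    | _ y ih =>
    intro hy hyx
    rw [IsWellFounded.rank_eq]
    refine Ordinal.iSup_le ?_
    rintro ⟨z, hz, _, hzy⟩
    have hzx := dlt_trans hzy hyx
    rw [succ_le_iff]
    exact (ih z ⟨hz, hy, hzy⟩ hz hzx).trans_lt (hf z (seg x hx z hz hzx) y (seg x hx y hy hyx) hzy)
  refine lt_of_le_of_lt ?_ hc
  rw [IsWellFounded.rank_eq]
  refine Ordinal.iSup_le ?_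
  rintro ⟨z, hz, _, hzx⟩
  rw [succ_le_iff]
  exact (this z hz hzx).trans_lt (hfc z (seg x hx z hz hzx))

theorem DD_real {X : Set (Braid n)} {a : Ordinal.{0}} (h : DD X a) : Real' X a := by
  induction h with
  | empty a => exact ⟨fun _ => 0, by simp, 0, opow_pos _ omega0_pos, by simp⟩
  | mono h1 h2 ih =>
    obtain ⟨f, hf, c, hc, hfc⟩ := ih
    exact ⟨f, fun x hx y hy => hf x (h2 hx) y (h2 hy), c, hc, fun x hx => hfc x (h2 hx)⟩
  | single h1 h2 ih =>
    rename_i X a b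
    obtain ⟨f, hf, hb⟩ := real_single ih
    exact ⟨f, hf, ω ^ b, (opow_lt_opow_iff_right one_lt_omega0).2 h1, hb⟩
  | union h1 h2 ih1 ih2 =>
    rename_i X Y a
    obtain ⟨f, hf, c, hc, hfc⟩ := ih1
    obtain ⟨g, hg, d, hd, hgd⟩ := ih2
    by_cases ha : a = 0
    · subst ha
      rw [opow_zero, lt_one_iff_zero] at hc hd
      subst hc hd
      refine ⟨fun _ => 0, ?_, 0, opow_pos _ omega0_pos, ?_⟩
      · rintro x (hx | hx)
        · exact absurd (hfc x hx) not_lt_zero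
        · exact absurd (hgd x hx) not_lt_zero
      · rintro x (hx | hx)
        · exact absurd (hfc x hx) not_lt_zero
        · exact absurd (hgd x hx) not_lt_zero
    have aux : ∀ (X : Set (Braid n)) (f : Braid n → Ordinal.{0}) (c : Ordinal.{0}), 
        (∀ x ∈ X, ∀ y ∈ X, dehornoyLt n x y → f x < f y) → (∀ x ∈ X, f x < c) →
        ∃ F : Braid n → Ordinal.{0}, (∀ z, F z ≤ c) ∧ (∀ z w, dehornoyLt n z w → F z ≤ F w) ∧
        (∀ z ∈ X, ∀ w, dehornoyLt n z w → F z < F w) := by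
      intro X f c hf hfc
      let F : Braid n → Ordinal.{0} := fun z => ⨆ x : {x // x ∈ X ∧ dehornoyLt n x z}, succ (f x.1)
      have lw : ∀ z x, x ∈ X → dehornoyLt n x z → f x < F z := fun z x hx hxz =>
        succ_le_iff.1 (Ordinal.le_iSup (fun x : {x // x ∈ X ∧ dehornoyLt n x z} => succ (f x.1)) ⟨x, hx, hxz⟩)
      have up : ∀ z d, (∀ x, x ∈ X → dehornoyLt n x z → f x < d) → F z ≤ d := by
        intro z d h
        exact Ordinal.iSup_le (fun x => succ_le_iff.2 (h x.1 x.2.1 x.2.2))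
      refine ⟨F, fun z => up _ _ (fun x hx _ => hfc x hx),
        fun z w h => up _ _ (fun x hx hxz => lw _ _ hx (dlt_trans hxz h)), ?_⟩
      intro z hz w h
      exact (up z (f z) (fun x hx hxz => hf x hx z hz hxz)).trans_lt (lw _ _ hz h)
    obtain ⟨F, F1, F2, F3⟩ := aux X f c hf hfc
    obtain ⟨G, G1, G2, G3⟩ := aux Y g d hg hgd
    refine ⟨fun z => nadd (F z) (G z), ?_, succ (nadd c d), ?_, ?_⟩
    · rintro x hx y hy hxy
      rcases hx with hx | hx
      · exact (nadd_lt_left (F3 x hx y hxy) _).trans_le (nadd_le_nadd le_rfl (G2 x y hxy))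
      · exact (nadd_lt_right (G3 x hx y hxy) _).trans_le (nadd_le_nadd (F2 x y hxy) le_rfl)
    · exact (isSuccLimit_opow_left isSuccLimit_omega0 ha).succ_lt (nadd_closed a c hc d hd)
    · intro x hx
      exact lt_succ_iff.2 (nadd_le_nadd (F1 x) (G1 x))

end DB

set_option linter.all false

namespace DB

open Ordinal Order Pointwise

variable {n : ℕ}

def OK (n : ℕ) (p : ℕ × ℕ) : Prop := 1 ≤ p.1 ∧ p.1 < p.2 ∧ p.2 ≤ n

def bd (n : ℕ) (p : ℕ × ℕ) : Braid n := band n p.1 p.2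

theorem bd_NN {p : ℕ × ℕ} (h : OK n p) : bd n p ∈ NN n := band_NN h.1 h.2.1 h.2.2

def MM (n : ℕ) (E : Set (ℕ × ℕ)) : Submonoid (Braid n) := Submonoid.closure (bd n '' E)

theorem MM_mono {E F : Set (ℕ × ℕ)} (h : E ⊆ F) : MM n E ≤ MM n F :=
  Submonoid.closure_mono (Set.image_mono h)

theorem MM_NN {E : Set (ℕ × ℕ)} (h : ∀ p ∈ E, OK n p) : MM n E ≤ NN n := by
  unfold MM
  rw [Submonoid.closure_le]
  rintro _ ⟨p, hp, rfl⟩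
  exact bd_NN (h p hp)

theorem MM_bd {E : Set (ℕ × ℕ)} {p : ℕ × ℕ} (h : p ∈ E) : bd n p ∈ MM n E :=
  Submonoid.subset_closure ⟨p, h, rfl⟩

theorem sub_mul_left {x y z : Braid n} (h : sub x y) (hz : z ∈ NN n) : sub x (z * y) := by
  simpa using sub_mul (one_sub hz) h

theorem sub_mul_right {x y z : Braid n} (h : sub x y) (hz : z ∈ NN n) : sub x (y * z) := by
  simpa using sub_mul h (one_sub hz)

/-- full elements -/
def Fl (n : ℕ) (E : Set (ℕ × ℕ)) : Set (Braid n) := {y | ∀ e ∈ E, sub (bd n e) y}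

def Obt (E : Set (ℕ × ℕ)) (z : Braid n) (N : ℕ) : Prop := ∀ y ∈ (Fl n E) ^ N, sub z y

theorem Obt_mul {E : Set (ℕ × ℕ)} {z z' : Braid n} {N N' : ℕ} (h : Obt E z N) (h' : Obt E z' N') :
    Obt E (z * z') (N + N') := by
  intro y hy
  rw [pow_add] at hy
  obtain ⟨u, hu, v, hv, rfl⟩ := hy
  exact sub_mul (h u hu) (h' v hv)

theorem Obt_mono {E : Set (ℕ × ℕ)} {z z' : Braid n} {N : ℕ} (h : Obt E z' N) (h' : sub z z') :
    Obt E z N := fun y hy => sub_trans h' (h y hy)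

theorem Obt_conn {E : Set (ℕ × ℕ)} (hE : ∀ p ∈ E, OK n p) {i j : ℕ}
    (h : Relation.EqvGen (fun i j => (i, j) ∈ E) i j) :
    i = j ∨ ((1 ≤ i ∧ i ≤ n) ∧ (1 ≤ j ∧ j ≤ n) ∧ ∃ N, Obt E (sb n i j) N) := by
  induction h with
  | rel i j h =>
    have := hE _ h
    obtain ⟨h1, h2, h3⟩ := this
    simp only at h1 h2 h3
    refine Or.inr ⟨by omega, by omega, 1, ?_⟩
    intro y hy
    rw [pow_one] at hy
    have hh := (show ∀ e ∈ E, sub (bd n e) y from hy) (i, j) h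
    rw [sb_lt h2]
    unfold bd at hh
    exact hh
  | refl i => exact Or.inl rfl
  | symm i j _ ih =>
    rcases ih with h | ⟨h1, h2, h3⟩
    · exact Or.inl h.symm
    · refine Or.inr ⟨h2, h1, ?_⟩
      rw [sb_comm]; exact h3
  | trans i j k _ _ ih1 ih2 =>
    rcases ih1 with rfl | ⟨h1, h2, N, h3⟩
    · exact ih2
    rcases ih2 with rfl | ⟨g1, g2, N', g3⟩
    · exact Or.inr ⟨h1, h2, N, h3⟩
    by_cases e1 : i = j
    · subst e1; exact Or.inr ⟨h1, g2, N', g3⟩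
    by_cases e2 : j = k
    · subst e2; exact Or.inr ⟨h1, h2, N, h3⟩
    by_cases e3 : i = k
    · exact Or.inl e3
    refine Or.inr ⟨h1, g2, N + N' + N, ?_⟩
    exact Obt_mono (Obt_mul (Obt_mul h3 g3) h3) (sb_tri h1.1 h1.2 h2.1 h2.2 g2.1 g2.2 e1 e2 e3)

theorem Obt_mem {E S : Set (ℕ × ℕ)} (hE : ∀ p ∈ E, OK n p) (hS : ∀ p ∈ S, OK n p)
    (hc : ∀ p ∈ S, Relation.EqvGen (fun i j => (i, j) ∈ E) p.1 p.2) {x : Braid n}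
    (hx : x ∈ MM n S) : ∃ N, Obt E x N := by
  unfold MM at hx
  induction hx using Submonoid.closure_induction with
  | one =>
    refine ⟨0, ?_⟩
    intro y hy
    rw [pow_zero, Set.mem_one] at hy
    subst hy; exact sub_refl _
  | mul a b _ _ h1 h2 =>
    obtain ⟨N, h1⟩ := h1
    obtain ⟨N', h2⟩ := h2
    exact ⟨_, Obt_mul h1 h2⟩
  | mem a ha =>
    obtain ⟨p, hp, rfl⟩ := ha
    have o := hS p hp
    rcases Obt_conn hE (hc p hp) with h | ⟨_, _, N, h⟩
    · have := o.2.1; omega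
    · refine ⟨N, ?_⟩
      rw [sb_lt o.2.1] at h
      exact h

/-- pieces -/
def Pc (n : ℕ) (E : Finset (ℕ × ℕ)) : Set (Braid n) := {y | ∃ E', E' ⊂ E ∧ y ∈ MM n (E' : Finset (ℕ × ℕ))}

def Lt (n : ℕ) (E : Finset (ℕ × ℕ)) : Set (Braid n) := bd n '' E

theorem step_aux {E : Finset (ℕ × ℕ)} (hE : ∀ p ∈ E, OK n p) : ∀ (w : List (Braid n)), 
    (∀ y ∈ w, y ∈ Lt n E) → ∀ (C : Finset (ℕ × ℕ)) (p : Braid n), C ⊂ E → p ∈ MM n C →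
    (∀ e ∈ C, sub (bd n e) p) →
    p * w.prod ∈ Pc n E ∨ ∃ q ∈ Pc n E, ∃ a ∈ Lt n E, q * a ∈ Fl n E ∧ ∃ y' ∈ MM n E, 
      p * w.prod = q * a * y' := by
  intro w
  induction w with
  | nil =>
    intro _ C p hC hp hc
    left
    exact ⟨C, hC, by simpa using hp⟩
  | cons b w ih =>
    intro hw C p hC hp hc
    classical
    obtain ⟨e, he, rfl⟩ := hw b List.mem_cons_self
    have he : e ∈ E := he
    have hw' : ∀ y ∈ w, y ∈ Lt n E := fun y hy => hw y (List.mem_cons_of_mem _ hy)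
    have pN : p ∈ NN n := MM_NN (fun q hq => hE q (hC.1 hq)) hp
    have cov : ∀ f ∈ insert e C, sub (bd n f) (p * bd n e) := by
      intro f hf
      rcases Finset.mem_insert.1 hf with rfl | hf
      · exact sub_mul_left (sub_refl _) pN
      · exact sub_mul_right (hc f hf) (bd_NN (hE e he))
    have ss : insert e C ⊆ E := Finset.insert_subset he hC.1
    by_cases h : insert e C = E
    · right
      refine ⟨p, ⟨C, hC, hp⟩, bd n e, ⟨e, he, rfl⟩, ?_, w.prod, ?_, ?_⟩
      · intro f hf
        exact cov f (h ▸ hf)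
      · exact Submonoid.list_prod_mem _ (fun y hy => Submonoid.subset_closure (hw' y hy))
      · rw [List.prod_cons, mul_assoc]
    · rw [List.prod_cons, ← mul_assoc]
      refine ih hw' (insert e C) _ (lt_of_le_of_ne ss h) ?_ cov
      refine (MM n _).mul_mem (MM_mono ?_ hp) (MM_bd ?_)
      · intro q hq; exact Finset.mem_insert_of_mem hq
      · simp

theorem step {E : Finset (ℕ × ℕ)} (hE : ∀ p ∈ E, OK n p) (h0 : E ≠ ∅) {y : Braid n} (hy : y ∈ MM n E) :
    y ∈ Pc n E ∨ ∃ q ∈ Pc n E, ∃ a ∈ Lt n E, q * a ∈ Fl n E ∧ ∃ y' ∈ MM n E, y = q * a * y' := by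
  obtain ⟨w, hw, rfl⟩ := Submonoid.exists_list_of_mem_closure hy
  have := step_aux hE w hw ∅ 1 (Finset.empty_ssubset.2 (Finset.nonempty_iff_ne_empty.2 h0))
    (Submonoid.one_mem _) (by simp)
  simpa using this

theorem greedy {E : Finset (ℕ × ℕ)} (hE : ∀ p ∈ E, OK n p) (h0 : E ≠ ∅) (m : ℕ) : ∀ y ∈ MM n E,
    (∃ k ≤ 2 * m + 1, y ∈ (Pc n E ∪ Lt n E) ^ k) ∨ ∃ u ∈ (Fl n E) ^ m, ∃ v ∈ NN n, y = u * v := by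
  induction m with
  | zero =>
    intro y hy
    right
    exact ⟨1, by simp, y, MM_NN hE hy, by simp⟩
  | succ m ih =>
    intro y hy
    rcases step hE h0 hy with h | ⟨q, hq, a, ha, hf, y', hy', rfl⟩
    · left
      exact ⟨1, by omega, by rw [pow_one]; exact Or.inl h⟩
    · rcases ih y' hy' with ⟨k, hk, h⟩ | ⟨u, hu, v, hv, rfl⟩
      · left
        refine ⟨2 + k, by omega, ?_⟩
        rw [pow_add, pow_two]
        exact Set.mul_mem_mul (Set.mul_mem_mul (Or.inl hq) (Or.inr ha)) h
      · right
        refine ⟨q * a * u, ?_, v, hv, by group⟩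
        rw [pow_succ']
        exact Set.mul_mem_mul hf hu

theorem pow_filter {X : Set (Braid n)} (hX : ∀ y ∈ X, y ∈ NN n) {x : Braid n} (k : ℕ) : ∀ y ∈ X ^ k,
    y ∈ NN n ∧ (¬ sub x y → y ∈ {z | z ∈ X ∧ ¬ sub x z} ^ k) := by
  induction k with
  | zero =>
    intro y hy
    rw [pow_zero, Set.mem_one] at hy
    subst hy
    exact ⟨Submonoid.one_mem _, by simp⟩
  | succ k ih =>
    intro y hy
    rw [pow_succ] at hy
    obtain ⟨u, hu, v, hv, rfl⟩ := hy
    obtain ⟨h1, h2⟩ := ih u hu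
    refine ⟨(NN n).mul_mem h1 (hX v hv), ?_⟩
    intro h
    rw [pow_succ]
    refine Set.mul_mem_mul (h2 (fun h' => h (sub_mul_right h' (hX v hv)))) ⟨hv, ?_⟩
    exact (fun h' => h (sub_mul_left h' h1))

theorem DD_bUnion {ι : Type} (s : Finset ι) (f : ι → Set (Braid n)) {A : Ordinal.{0}} 
    (h : ∀ i ∈ s, DD (f i) A) : DD {y | ∃ i ∈ s, y ∈ f i} A := by
  classical
  induction s using Finset.induction_on with
  | empty => exact DD.mono (DD.empty _) (by rintro y ⟨i, hi, _⟩; simp at hi)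
  | insert a s _ ih =>
    refine DD.mono (DD.union (h a (by simp)) (ih (fun i hi => h i (by simp [hi])))) ?_
    rintro y ⟨i, hi, hy⟩
    rcases Finset.mem_insert.1 hi with rfl | hi
    · exact Or.inl hy
    · exact Or.inr ⟨i, hi, hy⟩

theorem WW_sing (a : Braid n) : WW {a} 0 := by
  intro x hx
  refine DD.mono (DD.empty _) ?_
  rintro y ⟨hy, h⟩
  rw [Set.mem_singleton_iff] at hx hy
  subst hx hy
  exact (h (sub_refl _)).elim

/-! ranks of equivalence relations -/

open Classical in
noncomputable def nm (n : ℕ) (s : ℕ → ℕ → Prop) : Finset ℕ :=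
  (Finset.Icc 1 n).filter (fun j => ∃ i, 1 ≤ i ∧ i < j ∧ s i j)

theorem nm_mem {s : ℕ → ℕ → Prop} {j : ℕ} : j ∈ nm n s ↔ (1 ≤ j ∧ j ≤ n) ∧ ∃ i, 1 ≤ i ∧ i < j ∧ s i j := by
  simp [nm]

theorem nm_mono {s s' : ℕ → ℕ → Prop} (h : ∀ i j, s' i j → s i j) : nm n s' ⊆ nm n s := by
  intro j hj
  rw [nm_mem] at *
  obtain ⟨h1, i, h2, h3, h4⟩ := hj
  exact ⟨h1, i, h2, h3, h i j h4⟩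

theorem nm_eq {s s' : ℕ → ℕ → Prop} (es : Equivalence s) (es' : Equivalence s')
    (h : ∀ i j, s' i j → s i j) (hc : (nm n s).card ≤ (nm n s').card) {i j : ℕ}
    (hi : 1 ≤ i ∧ i ≤ n) (hj : 1 ≤ j ∧ j ≤ n) (hij : s i j) : s' i j := by
  have e : nm n s' = nm n s := Finset.eq_of_subset_of_card_le (nm_mono h) hc
  have key : ∀ j, 1 ≤ j → j ≤ n → ∃ m, 1 ≤ m ∧ s' m j ∧ ∀ i, 1 ≤ i → i < m → ¬ s i m := by
    intro j
    induction j using Nat.strong_induction_on with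
    | _ j ih =>
    intro h1 h2
    by_cases hj : j ∈ nm n s'
    · obtain ⟨_, i, h3, h4, h5⟩ := nm_mem.1 hj
      obtain ⟨m, m1, m2, m3⟩ := ih i h4 h3 (by omega)
      exact ⟨m, m1, es'.trans m2 h5, m3⟩
    · rw [e, nm_mem] at hj
      refine ⟨j, h1, es'.refl j, ?_⟩
      intro i h3 h4 h5
      exact hj ⟨⟨h1, h2⟩, i, h3, h4, h5⟩
  obtain ⟨m, m1, m2, m3⟩ := key i hi.1 hi.2
  obtain ⟨m', m1', m2', m3'⟩ := key j hj.1 hj.2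
  have r : s m m' := es.trans (es.trans (h _ _ m2) hij) (es.symm (h _ _ m2'))
  have : m = m' := by
    rcases lt_trichotomy m m' with h | h | h
    · exact absurd r (m3' m m1 h)
    · exact h
    · exact absurd (es.symm r) (m3 m' m1' h)
  subst this
  exact es'.trans (es'.symm m2) m2'

noncomputable def ee : ℕ → Ordinal.{0}
  | 0 => 0
  | (k+1) => ω ^ (k : Ordinal.{0})

open Classical in
noncomputable def lets (n : ℕ) (s : ℕ → ℕ → Prop) : Finset (ℕ × ℕ) :=
  ((Finset.Icc 1 n) ×ˢ (Finset.Icc 1 n)).filter (fun p => p.1 < p.2 ∧ s p.1 p.2)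

theorem lets_mem {s : ℕ → ℕ → Prop} {p : ℕ × ℕ} : p ∈ lets n s ↔ OK n p ∧ s p.1 p.2 := by
  unfold OK
  simp [lets]
  constructor
  · rintro ⟨⟨⟨_, _⟩, _, _⟩, _, _⟩; refine ⟨⟨?_, ?_, ?_⟩, ?_⟩ <;> assumption
  · rintro ⟨⟨_, _, _⟩, _⟩; refine ⟨⟨⟨?_, ?_⟩, ?_, ?_⟩, ?_, ?_⟩ <;> first | assumption | omega

theorem main_upper (r : ℕ) : ∀ s : ℕ → ℕ → Prop, Equivalence s → (nm n s).card = r →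
    WW (MM n (lets n s) : Set (Braid n)) (ee r) := by
  induction r using Nat.strong_induction_on with
  | _ r ihr =>
  intro s es hs
  rcases r with _ | r
  · have : lets n s = ∅ := by
      rw [Finset.eq_empty_iff_forall_notMem]
      intro p hp
      rw [lets_mem] at hp
      rw [Finset.card_eq_zero] at hs
      have : p.2 ∈ nm n s := nm_mem.2 ⟨⟨by have := hp.1.1; have := hp.1.2.1; omega, hp.1.2.2⟩,
        p.1, hp.1.1, hp.1.2.1, hp.2⟩
      rw [hs] at this; simp at this
    rw [this]
    have e : (MM n ((∅ : Finset (ℕ × ℕ)) : Set (ℕ × ℕ)) : Set (Braid n)) = {1} := by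
      unfold MM; simp
    rw [e]
    exact WW_sing 1
  · intro x hx
    show DD _ (ω ^ (r : Ordinal.{0}))
    have A0 : (0 : Ordinal.{0}) < ω ^ (r : Ordinal.{0}) := opow_pos _ omega0_pos
    have main : ∀ E : Finset (ℕ × ℕ), E ⊆ lets n s →
        DD {y | y ∈ (MM n E : Set (Braid n)) ∧ ¬ sub x y} (ω ^ (r : Ordinal.{0})) := by
      intro E
      induction E using Finset.strongInduction with
      | H E ihE =>
      intro hE
      have okE : ∀ p ∈ E, OK n p := fun p hp => (lets_mem.1 (hE hp)).1
      by_cases h0 : E = ∅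
      · subst h0
        refine DD.mono (WW_DD (WW_sing 1) A0) ?_
        rintro y ⟨hy, _⟩
        have : y ∈ MM n ((∅ : Finset (ℕ × ℕ)) : Set (ℕ × ℕ)) := hy
        unfold MM at this; simpa using this
      have es' := Relation.EqvGen.is_equivalence (fun i j => (i, j) ∈ E)
      have sub' : ∀ i j, Relation.EqvGen (fun i j => (i, j) ∈ E) i j → s i j := by
        intro i j h
        induction h with
        | rel i j h => exact (lets_mem.1 (hE h)).2
        | refl i => exact es.refl i
        | symm i j _ ih => exact es.symm ih
        | trans i j k _ _ ih1 ih2 => exact es.trans ih1 ih2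
      by_cases hc : (nm n (Relation.EqvGen (fun i j => (i, j) ∈ E))).card < r + 1
      · have := ihr _ hc _ es' rfl
        have lt : ee (nm n (Relation.EqvGen (fun i j => (i, j) ∈ E))).card < ω ^ (r : Ordinal.{0}) := by
          rcases hq : (nm n (Relation.EqvGen (fun i j => (i, j) ∈ E))).card with _ | q
          · exact A0
          · show ω ^ (q : Ordinal.{0}) < _
            rw [hq] at hc
            rw [opow_lt_opow_iff_right one_lt_omega0]
            exact_mod_cast (by omega : q < r)
        refine DD.mono (WW_DD this lt) ?_
        rintro y ⟨hy, _⟩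
        refine MM_mono ?_ hy
        intro p hp
        exact lets_mem.2 ⟨okE p hp, Relation.EqvGen.rel _ _ hp⟩
      · push Not at hc
        obtain ⟨N, hN⟩ := Obt_mem (E := (E : Set (ℕ × ℕ))) (S := (lets n s : Set (ℕ × ℕ))) okE
          (fun p hp => (lets_mem.1 hp).1) (by
            intro p hp
            obtain ⟨⟨a1, a2, a3⟩, a4⟩ := lets_mem.1 hp
            exact nm_eq es es' sub' (by rw [hs]; exact hc) ⟨a1, by omega⟩ ⟨by omega, a3⟩ a4) hx
        have hX : ∀ y ∈ Pc n E ∪ Lt n E, y ∈ NN n := by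
          rintro y (⟨E', h1, h2⟩ | ⟨p, hp, rfl⟩)
          · exact MM_NN (fun p hp => okE p (h1.1 hp)) h2
          · exact bd_NN (okE p hp)
        have dZ : DD {z | z ∈ Pc n E ∪ Lt n E ∧ ¬ sub x z} (ω ^ (r : Ordinal.{0})) := by
          have d1 := DD_bUnion (E.ssubsets) (fun E' => {y | y ∈ (MM n E' : Set (Braid n)) ∧ ¬ sub x y})
            (A := ω ^ (r : Ordinal.{0})) (by
              intro E' hE'
              rw [Finset.mem_ssubsets] at hE'
              exact ihE E' hE' (hE'.1.trans hE))
          have d2 := DD_bUnion E (fun p => {bd n p}) (A := ω ^ (r : Ordinal.{0}))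
            (fun p _ => WW_DD (WW_sing _) A0)
          refine DD.mono (DD.union d1 d2) ?_
          rintro z ⟨⟨E', h1, h2⟩ | ⟨p, hp, rfl⟩, hz⟩
          · exact Or.inl ⟨E', Finset.mem_ssubsets.2 h1, h2, hz⟩
          · exact Or.inr ⟨p, hp, rfl⟩
        refine DD.mono (DD_pow A0 (nadd_closed _) dZ (2 * N + 1)) ?_
        rintro y ⟨hy, hxy⟩
        rcases greedy okE h0 N y hy with ⟨k, hk, h⟩ | ⟨u, hu, v, hv, rfl⟩
        · have one : (1 : Braid n) ∈ Pc n E ∪ Lt n E :=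
            Or.inl ⟨∅, Finset.empty_ssubset.2 (Finset.nonempty_iff_ne_empty.2 h0), Submonoid.one_mem _⟩
          exact (pow_filter hX (2 * N + 1) y (Set.pow_subset_pow_right one hk h)).2 hxy
        · exact absurd (sub_mul_right (hN u hu) hv) hxy
    exact main _ (Finset.Subset.refl _)

theorem upper (hn : 2 ≤ n) : ∃ f : Braid n → Ordinal.{0},
    (∀ x ∈ dualMonoid n, ∀ y ∈ dualMonoid n, dehornoyLt n x y → f x < f y) ∧
    ∀ x ∈ dualMonoid n, f x < ω ^ (ω ^ ((n - 2 : ℕ) : Ordinal.{0})) := by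
  have h := main_upper (n := n) _ (fun _ _ => True) ⟨fun _ => trivial, fun _ => trivial, fun _ _ => trivial⟩ rfl
  have c : (nm n (fun _ _ => True)).card = (n - 2) + 1 := by
    have : nm n (fun _ _ => True) = Finset.Icc 2 n := by
      ext j
      rw [nm_mem, Finset.mem_Icc]
      constructor
      · rintro ⟨h1, i, h2, h3, _⟩; omega
      · intro h; exact ⟨by omega, 1, by omega, by omega, trivial⟩
    rw [this]; simp; omega
  rw [c] at h
  have e : MM n (lets n (fun _ _ => True)) = dualMonoid n := by
    unfold MM dualMonoid
    congr 1
    ext x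
    constructor
    · rintro ⟨p, hp, rfl⟩
      obtain ⟨⟨a1, a2, a3⟩, _⟩ := lets_mem.1 hp
      exact ⟨p.1, p.2, a1, a2, a3, rfl⟩
    · rintro ⟨i, j, h1, h2, h3, rfl⟩
      exact ⟨(i, j), lets_mem.2 ⟨⟨h1, h2, h3⟩, trivial⟩, rfl⟩
  rw [e] at h
  exact real_single (X := (dualMonoid n : Set (Braid n))) (fun x hx => DD_real (h x hx))

end DB

set_option linter.all false

namespace DB

/-! ### Lower bound -/

def act (w z : List ℕ) : List ℕ := w.foldr T z

theorem act_nil (z : List ℕ) : act [] z = z := rfl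
theorem act_cons (a : ℕ) (w z : List ℕ) : act (a :: w) z = T a (act w z) := rfl
theorem act_append (u w z : List ℕ) : act (u ++ w) z = act u (act w z) := by
  simp [act, List.foldr_append]

theorem Red_act {w z : List ℕ} (h : Red z) : Red (act w z) := by
  cases w with
  | nil => exact h
  | cons a w => exact Red_T

theorem Red_right : ∀ {u v : List ℕ}, Red (u ++ v) → Red v
  | [], _, h => h
  | _ :: _, _, h => Red_right h.2

def hdlt (m : ℕ) (v : List ℕ) : Prop := ∀ a, v.head? = some a → a < m

theorem mem_L {a b : ℕ} {w : List ℕ} (h : b ∈ L a w) : b = a ∨ b ∈ w := by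
  cases w with
  | nil => simp [L] at h; exact Or.inl h
  | cons c w =>
    simp only [L] at h
    split_ifs at h
    · exact Or.inr (List.mem_cons_of_mem _ h)
    · rcases List.mem_cons.1 h with h | h
      · exact Or.inl h
      · exact Or.inr h

theorem T_mem {m p : ℕ} (hp : m ≤ p) : ∀ {x : List ℕ}, (∀ a ∈ x, m ≤ a) → ∀ a ∈ T p x, m ≤ a
  | [], _, a, h => by simp [T] at h
  | b :: x, hx, a, h => by
    have ih := T_mem hp (x := x) (fun a ha => hx a (List.mem_cons_of_mem _ ha))
    have hb := hx b List.mem_cons_self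
    simp only [T, θ] at h
    split_ifs at h
    · rcases mem_L h with h | h
      · omega
      · rcases mem_L h with h | h
        · omega
        · rcases mem_L h with h | h
          · omega
          · exact ih a h
    · rcases mem_L h with h | h
      · omega
      · exact ih a h
    · rcases mem_L h with h | h
      · omega
      · exact ih a h

theorem T_hd {m p : ℕ} (hp : m ≤ p) {v : List ℕ} (hr : Red v) (hv : hdlt m v) :
    (T p v).head? = v.head? := by
  cases v with
  | nil => rfl
  | cons a w =>
    have := hv a rfl
    rw [T_good_cons hr ⟨by omega, by omega⟩]; rfl

theorem L_app {a : ℕ} {u v : List ℕ} (h : v.head? ≠ some a) : L a (u ++ v) = L a u ++ v := by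
  cases u with
  | nil => rw [List.nil_append, L_cons h]; rfl
  | cons b u => simp only [List.cons_append, L]; split_ifs <;> rfl

theorem T_app {m p : ℕ} (hp : m ≤ p) {v : List ℕ} (hr : Red v) (hv : hdlt m v) :
    ∀ {x : List ℕ}, (∀ a ∈ x, m ≤ a) → T p (x ++ v) = T p x ++ T p v
  | [], _ => rfl
  | b :: x, hx => by
    have ih := T_app hp hr hv (x := x) (fun a ha => hx a (List.mem_cons_of_mem _ ha))
    have hb := hx b List.mem_cons_self
    have ne : ∀ a, m ≤ a → (T p v).head? ≠ some a := by
      intro a ha h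
      rw [T_hd hp hr hv] at h
      have := hv a h; omega
    simp only [List.cons_append, T, ih, θ]
    split_ifs
    · rw [L_app (ne _ hp), L_app (ne _ (by omega)), L_app (ne _ hp)]
    · rw [L_app (ne _ hp)]
    · rw [L_app (ne _ hb)]

theorem act_mem {m : ℕ} : ∀ {w : List ℕ}, (∀ i ∈ w, m ≤ i) → ∀ {x : List ℕ}, (∀ a ∈ x, m ≤ a) →
    ∀ a ∈ act w x, m ≤ a
  | [], _, x, hx => hx
  | p :: w, hw, x, hx => by
    rw [act_cons]
    exact T_mem (hw p List.mem_cons_self) (act_mem (fun i hi => hw i (List.mem_cons_of_mem _ hi)) hx)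

theorem act_hd {m : ℕ} : ∀ {w : List ℕ}, (∀ i ∈ w, m ≤ i) → ∀ {v : List ℕ}, Red v → hdlt m v → 
    hdlt m (act w v)
  | [], _, v, hr, hv => hv
  | p :: w, hw, v, hr, hv => by
    have ih := act_hd (fun i hi => hw i (List.mem_cons_of_mem _ hi)) hr hv
    rw [act_cons]
    intro a ha
    rw [T_hd (hw p List.mem_cons_self) (Red_act hr) ih] at ha
    exact ih a ha

theorem act_app {m : ℕ} {v : List ℕ} (hr : Red v) (hv : hdlt m v) {x : List ℕ} (hx : ∀ a ∈ x, m ≤ a) :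
    ∀ {w : List ℕ}, (∀ i ∈ w, m ≤ i) → act w (x ++ v) = act w x ++ act w v
  | [], _ => rfl
  | p :: w, hw => by
    have hw' : ∀ i ∈ w, m ≤ i := fun i hi => hw i (List.mem_cons_of_mem _ hi)
    rw [act_cons, act_app hr hv hx hw', T_app (hw p List.mem_cons_self) (Red_act hr) (act_hd hw' hr hv)
      (act_mem hw' hx)]
    rfl

theorem act_one {m l : ℕ} (hl : l < m) {z : List ℕ} (hr : Red (l :: z)) :
    ∀ {w : List ℕ}, (∀ i ∈ w, m ≤ i) → act w (l :: z) = l :: act w z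
  | [], _ => rfl
  | p :: w, hw => by
    have hw' : ∀ i ∈ w, m ≤ i := fun i hi => hw i (List.mem_cons_of_mem _ hi)
    have hp := hw p List.mem_cons_self
    have e := act_one hl hr hw'
    have r := Red_act (w := w) hr
    rw [e] at r
    rw [act_cons, e, T_good_cons r ⟨by omega, by omega⟩]
    rfl

/-! the fixed words -/

def dl (n a : ℕ) : List ℕ := List.range' a (n + 1 - a)

theorem dl_cons {n a : ℕ} (h : a ≤ n) : dl n a = a :: dl n (a+1) := by
  unfold dl
  have : n + 1 - a = (n + 1 - (a + 1)) + 1 := by omega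
  rw [this, List.range'_succ]

theorem dl_mem {n a b : ℕ} (h : b ∈ dl n a) : a ≤ b ∧ b ≤ n := by
  unfold dl at h
  rw [List.mem_range'_1] at h; omega

theorem dl_last {n a : ℕ} (h : a ≤ n) : ∃ u, dl n a = u ++ [n] := by
  refine ⟨List.range' a (n - a), ?_⟩
  unfold dl
  have : n + 1 - a = (n - a) + 1 := by omega
  rw [this, List.range'_concat]
  simp; omega

theorem T_far {p : ℕ} : ∀ {u z : List ℕ}, (∀ a ∈ u, p + 1 < a) → Red (u ++ z) → T p (u ++ z) = u ++ T p z
  | [], _, _, _ => rfl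
  | a :: u, z, h, hr => by
    have := h a List.mem_cons_self
    have hr' : Red (a :: (u ++ z)) := hr
    rw [List.cons_append, T_good_cons hr' ⟨by omega, by omega⟩, T_far (fun b hb => h b (List.mem_cons_of_mem _ hb)) hr'.2]
    rfl

/-- σ_l fixes δ_l as an initial segment -/
theorem T_dl {n l : ℕ} (hl : l + 2 ≤ n) {z : List ℕ} (hr : Red (dl n l ++ z)) :
    T l (dl n l ++ z) = dl n l ++ T l z := by
  rw [dl_cons (by omega), dl_cons (by omega)] at *
  have hr2 : Red (dl n (l+1+1) ++ z) := hr.2.2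
  have e : T l (dl n (l+1+1) ++ z) = dl n (l+1+1) ++ T l z :=
    T_far (fun a ha => by have := dl_mem ha; omega) hr2
  simp only [List.cons_append]
  rw [T_p, T_q, e]
  have hh : (dl n (l+1+1) ++ T l z).head? = some (l+2) := by
    rw [dl_cons (by omega)]; rfl
  rw [L_cons (a := l) (w := dl n (l+1+1) ++ T l z) (by rw [hh]; simp)]
  have : L l (l :: (dl n (l+1+1) ++ T l z)) = dl n (l+1+1) ++ T l z := by simp [L]
  rw [this, L_cons (a := l+1) (w := dl n (l+1+1) ++ T l z) (by rw [hh]; simp), L_cons (by simp)]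

theorem Red_dl {n : ℕ} : ∀ (k a : ℕ), k = n + 1 - a → Red (dl n a)
  | 0, a, h => by unfold dl; rw [← h]; trivial
  | k+1, a, h => by
    rw [dl_cons (by omega)]
    refine ⟨?_, Red_dl k (a+1) (by omega)⟩
    intro h'
    have : a ∈ dl n (a+1) := List.mem_of_head? h'
    have := dl_mem this; omega

theorem T_dl' {n p : ℕ} (hp : p < n) : ∀ (k m : ℕ), k = p - m → m ≤ p → T p (dl n m) = dl n m
  | 0, m, h, hm => by
    have e : m = p := by omega
    subst e
    have f : T m (dl n (m+1+1)) = dl n (m+1+1) := by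
      have := T_far (p := m) (u := dl n (m+1+1)) (z := []) (fun a ha => by have := dl_mem ha; omega)
        (by simpa using Red_dl _ _ rfl)
      simpa [T] using this
    rw [dl_cons (by omega), dl_cons (by omega), T_p, T_q, f]
    have ne : ∀ a, a < m + 2 → (dl n (m+1+1)).head? ≠ some a := by
      intro a ha h
      have := dl_mem (List.mem_of_head? h); omega
    rw [L_cons (ne m (by omega))]
    have : L m (m :: dl n (m+1+1)) = dl n (m+1+1) := by simp [L]
    rw [this, L_cons (ne _ (by omega)), L_cons (by simp)]
  | k+1, m, h, hm => by
    have r := Red_dl (n := n) _ m rfl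
    rw [dl_cons (by omega)] at *
    rw [T_good_cons r ⟨by omega, by omega⟩, T_dl' hp k (m+1) (by omega) (by omega)]

theorem act_dl {n m : ℕ} : ∀ {w : List ℕ}, (∀ i ∈ w, m ≤ i ∧ i < n) → act w (dl n m) = dl n m
  | [], _ => rfl
  | p :: w, hw => by
    have hp := hw p List.mem_cons_self
    rw [act_cons, act_dl (fun i hi => hw i (List.mem_cons_of_mem _ hi)), T_dl' hp.2 _ m rfl hp.1]

def pw (n l : ℕ) : ℕ → List ℕ → List ℕ
  | 0, x => x
  | k+1, x => dl n l ++ pw n l k x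

theorem pw_succ' (n l : ℕ) (x : List ℕ) : ∀ k, pw n l k (dl n l ++ x) = pw n l (k+1) x
  | 0 => rfl
  | k+1 => by
    show dl n l ++ pw n l k _ = dl n l ++ pw n l (k+1) x
    rw [pw_succ' n l x k]

theorem pw_add (n l : ℕ) (x : List ℕ) : ∀ k j, pw n l (k + j) x = pw n l k (pw n l j x)
  | 0, j => by simp [pw]
  | k+1, j => by
    have : k + 1 + j = (k + j) + 1 := by omega
    rw [this]; simp only [pw]; rw [pw_add n l x k j]

theorem Red_pw {n l : ℕ} {x : List ℕ} : ∀ k, Red (pw n l k x) → Red x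
  | 0, h => h
  | k+1, h => Red_pw k (Red_right h)

theorem T_pw {n l : ℕ} (hl : l + 2 ≤ n) {x : List ℕ} : ∀ k, Red (pw n l k x) →
    T l (pw n l k x) = pw n l k (T l x)
  | 0, h => rfl
  | k+1, h => by
    simp only [pw] at *
    rw [T_dl hl h, T_pw hl k (Red_right h)]

theorem pw_hd {n l : ℕ} (hl : l ≤ n) (x : List ℕ) : ∀ k, ∃ t, pw n l k (l :: x) = l :: t
  | 0 => ⟨x, rfl⟩
  | k+1 => by
    simp only [pw]
    rw [dl_cons hl]; exact ⟨_, rfl⟩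

theorem act_pw {n l : ℕ} (hl : l ≤ n) {w x : List ℕ} (hw : ∀ i ∈ w, l + 1 ≤ i ∧ i < n) : ∀ k,
    Red (pw n l k (l :: x)) → act w (pw n l k (l :: x)) = pw n l k (l :: act w x)
  | 0, h => act_one (Nat.lt_succ_self l) h (fun i hi => (hw i hi).1)
  | k+1, h => by
    have ih := act_pw hl hw (x := x) k
    have w1 : ∀ i ∈ w, l + 1 ≤ i := fun i hi => (hw i hi).1
    simp only [pw] at *
    have ih := ih (Red_right h)
    rw [dl_cons hl] at h ⊢
    simp only [List.cons_append] at *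
    rw [act_one (Nat.lt_succ_self l) h w1,
      act_app (Red_right h.2) ?_ (fun a ha => (dl_mem ha).1) w1, act_dl hw, ih]
    obtain ⟨t, ht⟩ := pw_hd hl x k
    rw [ht]
    intro a ha
    simp at ha; omega

/-! order lemmas -/

theorem lt_pre {x y : List ℕ} (h : ∀ d, lt d x y) : ∀ (u : List ℕ) (e : ℕ), lt e (u ++ x) (u ++ y)
  | [], e => h e
  | a :: u, e => by
    simp only [List.cons_append, lt, if_true]
    exact lt_pre h u a

theorem lt_pre_last {x y : List ℕ} {d : ℕ} (h : lt d x y) : ∀ (u : List ℕ) (e : ℕ),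
    lt e (u ++ d :: x) (u ++ d :: y)
  | [], e => by simpa [lt] using h
  | a :: u, e => by
    simp only [List.cons_append, lt, if_true]
    exact lt_pre_last h u a

theorem hdlt_hd {m : ℕ} (hm : 1 ≤ m) {f : List ℕ} (h : hdlt m f) : hd f < m := by
  cases f with
  | nil => simp [hd]; omega
  | cons a f => exact h a rfl

theorem lt_ctx {m : ℕ} (hm : 1 ≤ m) {f g : List ℕ} (hf : hdlt m f) (hg : hdlt m g) :
    ∀ {u v : List ℕ} {e : ℕ}, m ≤ e → (∀ a ∈ u, m ≤ a) → (∀ a ∈ v, m ≤ a) → lt e u v →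
    lt e (u ++ f) (v ++ g)
  | [], [], e, he, hu, hv, h => by simp [lt] at h
  | [], b :: v, e, he, hu, hv, h => by
    have hb := hv b List.mem_cons_self
    have h1 := hdlt_hd hm hf
    have e1 : hd (b :: v) = b := rfl
    have e2 : hd (b :: (v ++ g)) = b := rfl
    have e3 : hd [] = 0 := rfl
    rw [List.nil_append, List.cons_append, lt_of_hd (by rw [e2]; omega), e2]
    rw [lt_of_hd (by rw [e1, e3]; omega), e1, e3] at h
    unfold cyc at *; omega
  | a :: u, [], e, he, hu, hv, h => by
    have hb := hu a List.mem_cons_self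
    have h1 := hdlt_hd hm hg
    have e1 : hd (a :: u) = a := rfl
    have e2 : hd (a :: (u ++ f)) = a := rfl
    have e3 : hd [] = 0 := rfl
    rw [List.nil_append, List.cons_append, lt_of_hd (by rw [e2]; omega), e2]
    rw [lt_of_hd (by rw [e1, e3]; omega), e1, e3] at h
    unfold cyc at *; omega
  | a :: u, b :: v, e, he, hu, hv, h => by
    simp only [List.cons_append]
    by_cases hab : a = b
    · subst hab
      simp only [lt, if_true] at h ⊢
      exact lt_ctx hm hf hg (hu a List.mem_cons_self) (fun c hc => hu c (List.mem_cons_of_mem _ hc))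
        (fun c hc => hv c (List.mem_cons_of_mem _ hc)) h
    · rw [lt_of_hd (by simpa [hd] using hab)] at h ⊢
      exact h

theorem lt_same_hd {a e e' : ℕ} {u v : List ℕ} (h : lt e (a :: u) (a :: v)) : lt e' (a :: u) (a :: v) := by
  simpa [lt] using h

end DB

set_option linter.all false

namespace DB

open Ordinal

theorem pw_app (n l : ℕ) (x : List ℕ) : ∀ k, pw n l k x = pw n l k [] ++ x
  | 0 => rfl
  | k+1 => by
    simp only [pw]
    rw [pw_app n l x k, List.append_assoc]

theorem act_mono : ∀ {w : List ℕ}, (∀ i ∈ w, 1 ≤ i) → ∀ {x y : List ℕ}, Red x → Red y → lt 0 x y →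
    lt 0 (act w x) (act w y)
  | [], _, x, y, _, _, h => h
  | p :: w, hw, x, y, hx, hy, h => by
    rw [act_cons, act_cons]
    exact (T_mono (hw p List.mem_cons_self) (Red_act hx) (Red_act hy)).1
      (act_mono (fun i hi => hw i (List.mem_cons_of_mem _ hi)) hx hy h)

/-- Admissible start words at level `m`. -/
def StW (n m : ℕ) (y : List ℕ) : Prop := y = dl n (m+1) ∨ y = [m]

theorem StW_Red {n m : ℕ} {y : List ℕ} (h : StW n m y) : Red y := by
  rcases h with rfl | rfl
  · exact Red_dl _ _ rfl
  · simp [Red]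

theorem StW_mem {n m : ℕ} {y : List ℕ} (h : StW n m y) : ∀ a ∈ y, m ≤ a := by
  intro a ha
  rcases h with rfl | rfl
  · have := dl_mem ha; omega
  · simp at ha; omega

structure Lev (n m : ℕ) (τ : Ordinal.{0}) (F : Ordinal.{0} → List ℕ) : Prop where
  mem : ∀ o, ∀ i ∈ F o, m ≤ i ∧ i < n
  form : ∀ o < τ, ∀ y, StW n m y → ∃ g, act (F o) y = dl n m ++ (dl n m ++ m :: (m+1) :: g)
  mono : ∀ o o', o < o' → o' < τ → ∀ y, StW n m y → lt 0 (act (F o') y) (act (F o) y)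

/-! base level -/

theorem dl_two (m : ℕ) : dl (m+1) m = [m, m+1] := by
  rw [dl_cons (by omega), dl_cons (by omega)]
  simp [dl]

theorem base_T {m : ℕ} : ∀ k, T m (pw (m+1) m k [m]) = pw (m+1) m (k+1) [m]
  | 0 => by
    simp only [pw, dl_two]
    rw [T_p]; simp [T, L]
  | k+1 => by
    have ih := base_T (m := m) k
    have e : ∀ j, pw (m+1) m (j+1) [m] = m :: (m+1) :: pw (m+1) m j [m] := by
      intro j; simp only [pw, dl_two]; rfl
    obtain ⟨t, ht⟩ := pw_hd (n := m+1) (l := m) (by omega) [] k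
    rw [e k, T_p, T_q, ih, e (k+1), e k, ht]
    simp [L]

theorem base_act {m : ℕ} : ∀ e, act (List.replicate e m) [m] = pw (m+1) m e [m]
  | 0 => rfl
  | e+1 => by rw [List.replicate_succ, act_cons, base_act e, base_T]

theorem base_act' {m : ℕ} : ∀ e, act (List.replicate (e+1) m) [m+1] = pw (m+1) m e [m]
  | 0 => by
    simp [act, pw, T_q, T, L]
  | e+1 => by rw [List.replicate_succ, act_cons, base_act' e, base_T]

theorem base_lt {m : ℕ} (hm : 1 ≤ m) {k k' : ℕ} (h : k < k') :
    lt 0 (pw (m+1) m k' [m]) (pw (m+1) m k [m]) := by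
  obtain ⟨j, rfl⟩ : ∃ j, k' = k + (j + 1) := ⟨k' - k - 1, by omega⟩
  rw [pw_add, pw_app _ _ (pw _ _ _ _) k, pw_app _ _ [m] k]
  apply lt_pre
  intro d
  simp only [pw, dl_two]
  simp [lt, cyc]
  omega

theorem Lev_base {m : ℕ} (hm : 1 ≤ m) :
    Lev (m+1) m ω (fun o => List.replicate (Cardinal.toNat o.card + 4) m) := by
  have key : ∀ y, StW (m+1) m y → ∃ c, ∀ k, act (List.replicate (k + 4) m) y = pw (m+1) m (k+3+c) [m] := by
    intro y hy
    rcases hy with rfl | rfl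
    · refine ⟨0, fun k => ?_⟩
      have : dl (m+1) (m+1) = [m+1] := by simp [dl]
      rw [this, base_act']
    · exact ⟨1, fun k => by rw [base_act]⟩
  refine ⟨?_, ?_, ?_⟩
  · intro o i hi
    have := List.eq_of_mem_replicate hi
    omega
  · intro o ho y hy
    obtain ⟨c, hc⟩ := key y hy
    rw [hc]
    have : Cardinal.toNat o.card + 3 + c = (Cardinal.toNat o.card + c) + 1 + 1 + 1 := by omega
    rw [this]
    simp only [pw, dl_two]
    exact ⟨_, rfl⟩
  · intro o o' h h' y hy
    obtain ⟨c, hc⟩ := key y hy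
    obtain ⟨k', rfl⟩ := lt_omega0.1 h'
    obtain ⟨k, rfl⟩ := lt_omega0.1 (h.trans h')
    have h : k < k' := by exact_mod_cast h
    simp only [hc, card_nat, Cardinal.toNat_natCast]
    exact base_lt hm (by omega)

/-! step -/

noncomputable def wd (F : Ordinal.{0} → List ℕ) (τ : Ordinal.{0}) (l : ℕ) : ℕ → Ordinal.{0} → List ℕ
  | 0, _ => []
  | r+1, a => F (a / τ ^ r) ++ l :: wd F τ l r (a % τ ^ r)

theorem wd_act (F : Ordinal.{0} → List ℕ) (τ : Ordinal.{0}) (l r : ℕ) (a : Ordinal.{0}) (y : List ℕ) :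
    act (wd F τ l (r+1) a) y = act (F (a / τ ^ r)) (T l (act (wd F τ l r (a % τ ^ r)) y)) := by
  rw [wd, act_append, act_cons]

section step
variable {n l : ℕ} {τ : Ordinal.{0}} {F : Ordinal.{0} → List ℕ}

theorem wd_mem (hl : l + 2 ≤ n) (H : Lev n (l+1) τ F) : ∀ r a, ∀ i ∈ wd F τ l r a, l ≤ i ∧ i < n
  | 0, a, i, hi => by simp [wd] at hi
  | r+1, a, i, hi => by
    rw [wd, List.mem_append, List.mem_cons] at hi
    rcases hi with hi | rfl | hi
    · have := H.mem _ _ hi; omega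
    · omega
    · exact wd_mem hl H r _ i hi

theorem digit_lt (hτ : 0 < τ) {r : ℕ} {a : Ordinal.{0}} (h : a < τ ^ (r+1)) : a / τ ^ r < τ := by
  rw [Ordinal.div_lt (pow_pos hτ r).ne']
  rwa [pow_succ] at h

theorem state (hl : l + 2 ≤ n) (hτ : 0 < τ) (H : Lev n (l+1) τ F) {y : List ℕ} (hy : StW n l y) : ∀ r : ℕ,
    ∃ y1, StW n (l+1) y1 ∧ ∀ a < τ ^ (r+1), ∃ f, hdlt (l+1) f ∧
      act (wd F τ l (r+1) a) y = pw n l r (l :: (act (F (a / τ ^ r)) y1 ++ f))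
  | 0 => by
    have w1 : ∀ o, ∀ i ∈ F o, l + 1 ≤ i := fun o i hi => (H.mem o i hi).1
    rcases hy with rfl | rfl
    · refine ⟨dl n (l+1+1), Or.inl rfl, fun a ha => ⟨[], by intro a h; simp at h, ?_⟩⟩
      rw [wd_act]
      simp only [wd, act_nil, pw, List.append_nil]
      have e : T l (dl n (l+1+1)) = dl n (l+1+1) := by
        have := T_far (p := l) (u := dl n (l+1+1)) (z := []) (fun a ha => by have := dl_mem ha; omega)
          (by simpa using Red_dl _ _ rfl)
        simpa [T] using this
      have ne : (dl n (l+1+1)).head? ≠ some l := by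
        intro h
        have := dl_mem (List.mem_of_head? h); omega
      rw [dl_cons (by omega : l + 1 ≤ n), T_q, e, L_cons ne]
      exact act_one (Nat.lt_succ_self l) ⟨ne, Red_dl _ _ rfl⟩ (w1 _)
    · refine ⟨[l+1], Or.inr rfl, fun a ha => ⟨[l], by intro a h; simp at h; omega, ?_⟩⟩
      rw [wd_act]
      simp only [wd, act_nil, pw]
      have e : T l [l] = l :: ([l+1] ++ [l]) := by
        rw [T_p]; simp [T, L]
      have rl : Red [l] := by simp [Red]
      rw [e, act_one (Nat.lt_succ_self l) (by simp [Red]) (w1 _),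
        act_app rl (by intro a h; simp at h; omega) (by simp) (w1 _),
        act_one (Nat.lt_succ_self l) rl (w1 _)]
      have : ∀ w : List ℕ, act w [] = [] := by
        intro w
        induction w with
        | nil => rfl
        | cons a w ih => rw [act_cons, ih]; rfl
      rw [this]
  | r+1 => by
    have w1 : ∀ o, ∀ i ∈ F o, l + 1 ≤ i := fun o i hi => (H.mem o i hi).1
    obtain ⟨y1, hy1, ih⟩ := state hl hτ H hy r
    refine ⟨dl n (l+1+1), Or.inl rfl, fun a ha => ?_⟩
    have hb : a % τ ^ (r+1) < τ ^ (r+1) := mod_lt _ (pow_pos hτ _).ne'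
    obtain ⟨f, hf, e⟩ := ih _ hb
    have hR := Red_act (w := wd F τ l (r+1) (a % τ ^ (r+1))) (StW_Red hy)
    rw [wd_act]
    rw [e] at hR ⊢
    obtain ⟨g, hg⟩ := H.form _ (digit_lt hτ hb) y1 hy1
    rw [hg] at hR ⊢
    have key : ∃ h, T l (pw n l r (l :: (dl n (l+1) ++ (dl n (l+1) ++ (l+1) :: (l+1+1) :: g) ++ f))) =
        pw n l (r+1) (l :: (dl n (l+1+1) ++ l :: h)) := by
      rw [T_pw hl _ hR]
      have hR := Red_pw _ hR
      have e1 : l :: (dl n (l+1) ++ (dl n (l+1) ++ (l+1) :: (l+1+1) :: g) ++ f) =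
          dl n l ++ (dl n (l+1) ++ (l+1) :: (l+1+1) :: (g ++ f)) := by
        rw [dl_cons (by omega : l ≤ n)]; simp
      rw [e1] at hR ⊢
      rw [T_dl hl hR]
      have hR := Red_right hR
      have hR3 : Red ((l+1) :: (l+1+1) :: (g ++ f)) := Red_right hR
      rw [dl_cons (by omega : l + 1 ≤ n)] at hR ⊢
      have hR2 : Red (dl n (l+1+1) ++ (l+1) :: (l+1+1) :: (g ++ f)) := hR.2
      rw [List.cons_append, T_q, T_far (fun a ha => by have := dl_mem ha; omega) hR2, T_q,
        T_good_cons hR3.2 ⟨by omega, by omega⟩,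
        L_cons (a := l) (w := (l+1+1) :: T l (g ++ f)) (by simp; omega),
        L_cons (by rw [dl_cons (by omega : l + 1 + 1 ≤ n)]; simp; omega)]
      refine ⟨(l+1+1) :: T l (g ++ f), ?_⟩
      rw [← pw_succ']
    obtain ⟨h, hh⟩ := key
    have hR' : Red (pw n l (r+1) (l :: (dl n (l+1+1) ++ l :: h))) := by
      rw [← hh]; exact Red_T
    rw [hh, act_pw (by omega) (H.mem _) _ hR']
    have hv : Red (l :: h) := Red_right (Red_pw _ hR').2
    have hd : hdlt (l+1) (l :: h) := by intro a h; simp at h; omega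
    rw [act_app hv hd (fun a ha => by have := dl_mem ha; omega) (w1 _)]
    exact ⟨_, act_hd (w1 _) hv hd, rfl⟩

theorem compW (hl1 : 1 ≤ l) (hl : l + 2 ≤ n) (hτ : 0 < τ) (H : Lev n (l+1) τ F) {y : List ℕ} (hy : StW n l y) :
    ∀ (r : ℕ) (a a' : Ordinal.{0}), a < a' → a' < τ ^ r → lt 0 (act (wd F τ l r a') y) (act (wd F τ l r a) y)
  | 0, a, a', h, h' => by
    rw [pow_zero, Order.lt_one_iff] at h'
    subst h'; exact absurd h (not_lt_zero)
  | r+1, a, a', h, h' => by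
    have hp := pow_pos hτ r
    have hq : a / τ ^ r ≤ a' / τ ^ r := Ordinal.div_le_left h.le _
    rcases hq.eq_or_lt with hq | hq
    · have hm : a % τ ^ r < a' % τ ^ r := by
        have e1 := Ordinal.div_add_mod a (τ ^ r)
        have e2 := Ordinal.div_add_mod a' (τ ^ r)
        rw [← e1, ← e2, hq] at h
        exact lt_of_add_lt_add_left h
      rw [wd_act, wd_act, hq]
      refine act_mono (fun i hi => by have := H.mem _ _ hi; omega) Red_T Red_T ?_
      refine (T_mono hl1 (Red_act (StW_Red hy)) (Red_act (StW_Red hy))).1 ?_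
      exact compW hl1 hl hτ H hy r _ _ hm (mod_lt _ hp.ne')
    · obtain ⟨y1, hy1, S⟩ := state hl hτ H hy r
      obtain ⟨f, hf, e⟩ := S a (h.trans h')
      obtain ⟨f', hf', e'⟩ := S a' h'
      have c := H.mono _ _ hq (digit_lt hτ h') y1 hy1
      have w1 : ∀ o, ∀ i ∈ F o, l + 1 ≤ i := fun o i hi => (H.mem o i hi).1
      have m1 := act_mem (w1 (a / τ ^ r)) (StW_mem hy1)
      have m2 := act_mem (w1 (a' / τ ^ r)) (StW_mem hy1)
      rw [e, e']
      obtain ⟨g, hg⟩ := H.form _ (digit_lt hτ (h.trans h')) y1 hy1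
      obtain ⟨g', hg'⟩ := H.form _ (digit_lt hτ h') y1 hy1
      rw [dl_cons (by omega : l + 1 ≤ n)] at hg hg'
      have c2 : lt (l+1) (act (F (a' / τ ^ r)) y1) (act (F (a / τ ^ r)) y1) := by
        rw [hg, hg'] at c ⊢
        exact lt_same_hd c
      have c3 := lt_ctx (by omega) hf' hf le_rfl m2 m1 c2
      rw [pw_app _ _ (_ :: _), pw_app _ _ (l :: (act (F (a / τ ^ r)) y1 ++ f))]
      apply lt_pre
      intro d
      rw [hg, hg'] at c3 ⊢
      simpa [lt] using c3

open Classical in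
noncomputable def RkW (τ o : Ordinal.{0}) : ℕ := max 3 (sInf {r : ℕ | o < τ ^ r})

theorem RkW_lt (hτ : 1 ≤ τ) {o : Ordinal.{0}} (h : ∃ r : ℕ, o < τ ^ r) : o < τ ^ RkW τ o := by
  have := Nat.sInf_mem (s := {r : ℕ | o < τ ^ r}) h
  exact lt_of_lt_of_le this (pow_le_pow_right₀ hτ (le_max_right _ _))

theorem RkW_mono {o o' : Ordinal.{0}} (hoo : o ≤ o') (h : ∃ r : ℕ, o' < τ ^ r) : RkW τ o ≤ RkW τ o' := by
  have := Nat.sInf_mem (s := {r : ℕ | o' < τ ^ r}) h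
  exact max_le_max le_rfl (Nat.sInf_le (lt_of_le_of_lt hoo this))

theorem pw_lm (hl : l + 2 ≤ n) (h : List ℕ) : ∀ k, ∃ t, pw n l k (l :: (l+1) :: h) = l :: (l+1) :: t
  | 0 => ⟨h, rfl⟩
  | k+1 => by
    simp only [pw]
    rw [dl_cons (by omega), dl_cons (by omega)]
    exact ⟨_, rfl⟩

theorem Lev_step (hl1 : 1 ≤ l) (hl : l + 2 ≤ n) (hτ : 0 < τ) (H : Lev n (l+1) τ F) {τ' : Ordinal.{0}}
    (hτ' : ∀ o < τ', ∃ r : ℕ, o < τ ^ r) : Lev n l τ' (fun o => wd F τ l (RkW τ o) o) := by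
  have h1 : 1 ≤ τ := Order.one_le_iff_pos.2 hτ
  refine ⟨fun o => wd_mem hl H _ _, ?_, ?_⟩
  · intro o ho y hy
    obtain ⟨k, hk⟩ : ∃ k, RkW τ o = k + 2 + 1 := ⟨RkW τ o - 3, by have : 3 ≤ RkW τ o := le_max_left _ _; omega⟩
    have hlt := RkW_lt h1 (hτ' o ho)
    simp only [hk] at *
    obtain ⟨y1, hy1, S⟩ := state hl hτ H hy (k+2)
    obtain ⟨f, hf, e⟩ := S o hlt
    obtain ⟨g, hg⟩ := H.form _ (digit_lt hτ hlt) y1 hy1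
    rw [dl_cons (by omega : l + 1 ≤ n)] at hg
    rw [e, hg]
    simp only [List.cons_append]
    obtain ⟨t, ht⟩ := pw_lm hl (dl n (l+1+1) ++ ((l+1) :: (dl n (l+1+1) ++ (l+1) :: (l+1+1) :: g)) ++ f) k
    simp only [pw]
    rw [ht]
    exact ⟨t, rfl⟩
  · intro o o' h h' y hy
    have k1 := RkW_lt h1 (hτ' o (h.trans h'))
    have k2 := RkW_lt h1 (hτ' o' h')
    have k3 := RkW_mono h.le (hτ' o' h')
    show lt 0 (act (wd F τ l (RkW τ o') o') y) (act (wd F τ l (RkW τ o) o) y)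
    have l1 : 3 ≤ RkW τ o := le_max_left _ _
    rcases k3.eq_or_lt with k3 | k3
    · rw [← k3] at k2 ⊢
      exact compW hl1 hl hτ H hy _ _ _ h k2
    · generalize RkW τ o = R at *
      generalize RkW τ o' = R' at *
      obtain ⟨r, rfl⟩ : ∃ r, R = r + 1 := ⟨R - 1, by omega⟩
      obtain ⟨s, rfl⟩ : ∃ s, R' = ((r + 1) + s) + 1 := ⟨R' - r - 2, by omega⟩
      obtain ⟨y1, hy1, S⟩ := state hl hτ H hy r
      obtain ⟨f, hf, e⟩ := S o k1
      obtain ⟨g, hg⟩ := H.form _ (digit_lt hτ k1) y1 hy1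
      obtain ⟨y2, hy2, S'⟩ := state hl hτ H hy ((r+1)+s)
      obtain ⟨f', hf', e'⟩ := S' o' k2
      have E : act (wd F τ l (r+1) o) y = pw n l (r+1) ((dl n (l+1) ++ (l+1) :: (l+1+1) :: g) ++ f) := by
        rw [e, hg, ← pw_succ', dl_cons (by omega : l ≤ n)]; simp
      rw [E, e', pw_add]
      obtain ⟨t, ht⟩ := pw_hd (by omega : l ≤ n) (act (F (o' / τ ^ ((r+1)+s))) y2 ++ f') s
      rw [ht, dl_cons (by omega : l + 1 ≤ n), ← pw_succ', ← pw_succ', pw_app _ _ (_ ++ _),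
        pw_app _ _ (dl n l ++ (_ ++ _))]
      obtain ⟨u, hu⟩ := dl_last (by omega : l ≤ n)
      rw [hu]
      have := lt_pre_last (d := n) (x := l :: t)
        (y := (l+1) :: (dl n (l+1+1) ++ (l+1) :: (l+1+1) :: g ++ f)) (by
          simp only [lt, cyc]; rw [if_neg (by omega)]; omega) (pw n l r [] ++ u) 0
      simpa using this

end step

theorem Lev_all {n : ℕ} : ∀ k, k + 2 ≤ n → ∃ F, Lev n (n - 1 - k) (ω ^ (ω ^ (k : Ordinal.{0}))) F
  | 0, h => by
    obtain ⟨m, rfl⟩ : ∃ m, n = m + 1 := ⟨n - 1, by omega⟩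
    have := Lev_base (m := m) (by omega)
    exact ⟨_, by simpa using this⟩
  | k+1, h => by
    obtain ⟨F, hF⟩ := Lev_all (n := n) k (by omega)
    obtain ⟨l, hl⟩ : ∃ l, n - 1 - k = l + 1 := ⟨n - 1 - k - 1, by omega⟩
    have e : n - 1 - (k+1) = l := by omega
    rw [hl] at hF
    rw [e]
    refine ⟨_, Lev_step (by omega) (by omega) (opow_pos _ omega0_pos) hF ?_⟩
    intro o ho
    have e2 : ((k + 1 : ℕ) : Ordinal.{0}) = (k : Ordinal.{0}) + 1 := by push_cast; rfl
    rw [e2, opow_add, opow_one, opow_mul] at ho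
    have hlim := isSuccLimit_omega0
    rw [lt_opow_of_isSuccLimit (opow_pos _ omega0_pos).ne' hlim] at ho
    obtain ⟨c, hc, hoc⟩ := ho
    obtain ⟨r, rfl⟩ := lt_omega0.1 hc
    exact ⟨r, by rwa [opow_natCast] at hoc⟩

/-! back to braids -/

def evW (n : ℕ) (w : List ℕ) : Braid n := (w.map (genσ n)).prod

theorem evW_act {n : ℕ} : ∀ {w : List ℕ}, (∀ i ∈ w, 1 ≤ i ∧ i < n) → ∀ x : Om, (rho n (evW n w) x).1 = act w x.1
  | [], _, x => by simp [evW, act]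
  | p :: w, hw, x => by
    have hp := hw p List.mem_cons_self
    have ih := evW_act (fun i hi => hw i (List.mem_cons_of_mem _ hi)) x
    have : evW n (p :: w) = genσ n p * evW n w := by simp [evW]
    rw [this, map_mul, Equiv.Perm.mul_apply, rho_gen n p hp.1 hp.2, ih, act_cons]

theorem evW_dual {n : ℕ} {w : List ℕ} (hw : ∀ i ∈ w, 1 ≤ i ∧ i < n) : evW n w ∈ dualMonoid n := by
  refine Submonoid.list_prod_mem _ ?_
  intro x hx
  obtain ⟨i, hi, rfl⟩ := List.mem_map.1 hx
  have := hw i hi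
  exact Submonoid.subset_closure ⟨i, i+1, this.1, by omega, by omega, (band_self i).symm⟩

theorem dlt_bp {n : ℕ} {a b : Braid n} (h : dehornoyLt n a b) : ole (rho n b (bp 1)) (rho n a (bp 1)) := by
  obtain ⟨i, h1, h2, h3⟩ := h
  have w : WP n 1 (a⁻¹ * b) := by
    rcases h1.eq_or_lt with rfl | h1
    · exact SP_WP h3
    · exact SP_WP_lt h1 h3
  have := rho_mono_le a (WP_ole w)
  have e : rho n a (rho n (a⁻¹ * b) (bp 1)) = rho n b (bp 1) := by
    rw [← Equiv.Perm.mul_apply, ← map_mul, mul_inv_cancel_left]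
  rwa [e] at this

theorem lower {n : ℕ} (hn : 2 ≤ n) : ∃ G : Ordinal.{0} → Braid n, (∀ o, G o ∈ dualMonoid n) ∧
    ∀ o o', o < o' → o' < ω ^ (ω ^ ((n - 2 : ℕ) : Ordinal.{0})) → dehornoyLt n (G o) (G o') := by
  obtain ⟨F, hF⟩ := Lev_all (n := n) (n-2) (by omega)
  have e : n - 1 - (n - 2) = 1 := by omega
  rw [e] at hF
  refine ⟨fun o => evW n (F o), fun o => evW_dual (hF.mem o), ?_⟩
  intro o o' h h'
  have c := hF.mono o o' h h' [1] (Or.inr rfl)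
  have c' : olt (rho n (evW n (F o')) (bp 1)) (rho n (evW n (F o)) (bp 1)) := by
    unfold olt
    rw [evW_act (hF.mem o'), evW_act (hF.mem o)]
    exact c
  rcases dlt_tri (evW n (F o)) (evW n (F o')) with d | d | d
  · exact d
  · rw [d] at c'; exact absurd c' (olt_irrefl _)
  · rcases dlt_bp d with d | d
    · rw [d] at c'; exact absurd c' (olt_irrefl _)
    · exact absurd (olt_trans c' d) (olt_irrefl _)

end DB

set_option linter.all false

namespace DB
open Ordinal

theorem type_le {α : Type} (r : α → α → Prop) [IsWellOrder α r] (τ : Ordinal.{0}) (f : α → Ordinal.{0})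
    (hf : ∀ x y, r x y → f x < f y) (hb : ∀ x, f x < τ) : type r ≤ τ := by
  by_contra h
  push Not at h
  have key : ∀ x, typein r x ≤ f x := by
    intro x
    induction x using (IsWellFounded.wf (r := r)).induction with
    | _ x ih =>
      by_contra hx
      push Not at hx
      obtain ⟨y, hy⟩ := typein_surj r (hx.trans (typein_lt_type r x))
      have hyx : r y x := by rw [← typein_lt_typein r, hy]; exact hx
      have := ih y hyx
      rw [hy] at this
      exact absurd (hf y x hyx) (not_lt.2 this)
  obtain ⟨x, hx⟩ := typein_surj r h
  have := key x
  rw [hx] at this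
  exact absurd (hb x) (not_lt.2 this)

theorem le_type {α : Type} (r : α → α → Prop) [IsWellOrder α r] (τ : Ordinal.{0}) (G : Ordinal.{0} → α)
    (hG : ∀ o o', o < o' → o' < τ → r (G o) (G o')) : τ ≤ type r := by
  have key : ∀ o, o < τ → o ≤ typein r (G o) := by
    intro o
    induction o using WellFoundedLT.induction with
    | ind o ih =>
      intro ho
      by_contra hx
      push Not at hx
      have h1 := ih _ hx (hx.trans ho)
      have h2 := (typein_lt_typein r).2 (hG _ _ hx ho)
      exact absurd h2 (not_lt.2 h1)
  by_contra h
  push Not at h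
  exact absurd (typein_lt_type r (G (type r))) (not_lt.2 (key _ h))

end DB

theorem dehornoy_dualMonoid_wellOrder_orderType (n : ℕ) (hn : 2 ≤ n) :
    IsTrichotomous (dualMonoid n) (fun a b => dehornoyLt n a.1 b.1) ∧
    Transitive (fun a b : dualMonoid n => dehornoyLt n a.1 b.1) ∧
    WellFounded (fun a b : dualMonoid n => dehornoyLt n a.1 b.1) ∧
    ∃ hwo : IsWellOrder (dualMonoid n) (fun a b => dehornoyLt n a.1 b.1),
      @Ordinal.type (dualMonoid n) (fun a b => dehornoyLt n a.1 b.1) hwo =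
        Ordinal.omega0 ^ (Ordinal.omega0 ^ ((n - 2 : ℕ) : Ordinal)) := by
  obtain ⟨f, hf, hb⟩ := DB.upper hn
  obtain ⟨G, hG, hG'⟩ := DB.lower hn
  have h1 : IsTrichotomous (dualMonoid n) (fun a b => dehornoyLt n a.1 b.1) := by
    constructor
    intro a b hab hba
    rcases DB.dlt_tri a.1 b.1 with h | h | h
    · exact absurd h hab
    · exact Subtype.ext h
    · exact absurd h hba
  have h2 : Transitive (fun a b : dualMonoid n => dehornoyLt n a.1 b.1) :=
    fun a b c h h' => DB.dlt_trans h h'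
  have h3 : WellFounded (fun a b : dualMonoid n => dehornoyLt n a.1 b.1) :=
    Subrelation.wf (r := InvImage (· < ·) (fun a : dualMonoid n => f a.1))
      (fun {a b} h => hf a.1 a.2 b.1 b.2 h) (InvImage.wf _ Ordinal.lt_wf)
  have hwo : IsWellOrder (dualMonoid n) (fun a b => dehornoyLt n a.1 b.1) :=
    { wf := h3, trichotomous := h1.trichotomous }
  refine ⟨h1, h2, h3, hwo, le_antisymm ?_ ?_⟩
  · exact DB.type_le _ _ (fun a : dualMonoid n => f a.1) (fun x y h => hf x.1 x.2 y.1 y.2 h)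
      (fun x => hb x.1 x.2)
  · exact DB.le_type _ _ (fun o => (⟨G o, hG o⟩ : dualMonoid n)) (fun o o' h h' => hG' o o' h h')
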